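/- arXiv:2405.20480 — 2 statements merged into one kernel-verified Lean document; each statement's English description precedes it below -/
import Mathlib

section
/- Let G = ([n], E) be the n-path graph (edges {i, i+1} for i = 1, …, n−1), with n ≥ 3. For d = 3, the divisor class group of the normal Noetherian domain R_G(3) satisfies Cl(R_G(3)) ≅ ℤ^{n−2}. -/
open MvPolynomial nonZeroDivisors

/-- The variable `y_{i c}` of the polynomial ring `K[y_{ij} : i ∈ [n], j ∈ [3]]`,
with the indices `i ∈ {1, …, n}` and `c ∈ {1, 2, 3}` as in the paper
(and junk value `0` for out-of-range indices). -/
noncomputable def yvar (K : Type) [Field K] (n i c : ℕ) : MvPolynomial (Fin n × Fin 3) K :=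
  if h : 1 ≤ i ∧ i ≤ n ∧ 1 ≤ c ∧ c ≤ 3 then
    MvPolynomial.X (⟨i - 1, by omega⟩, ⟨c - 1, by omega⟩)
  else 0

/-- The LSS generator `f_{a(a+1)} = ∑_{k=1}^3 y_{ak} y_{(a+1)k}` associated to the edge
`{a, a+1}` of the `n`-path graph. -/
noncomputable def pathGen (K : Type) [Field K] (n a : ℕ) : MvPolynomial (Fin n × Fin 3) K :=
  ∑ k : Fin 3, yvar K n a (k.1 + 1) * yvar K n (a + 1) (k.1 + 1)

/-- The LSS ideal `L_G(3) = (f_{12}, …, f_{(n-1)n})` of the `n`-path graph `G`. -/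
noncomputable def pathLSS (K : Type) [Field K] (n : ℕ) :
    Ideal (MvPolynomial (Fin n × Fin 3) K) :=
  Ideal.span {g | ∃ a : ℕ, 1 ≤ a ∧ a + 1 ≤ n ∧ g = pathGen K n a}

section DivisorClassGroup

variable (R : Type) [CommRing R] [IsDomain R]
variable (F : Type) [Field F] [Algebra R F] [IsFractionRing R F]

/-- The divisorial closure `(I⁻¹)⁻¹` of a fractional ideal; a fractional ideal is
divisorial when it equals its divisorial closure. -/
noncomputable def divisorialClosure (I : FractionalIdeal R⁰ F) : FractionalIdeal R⁰ F :=
  1 / (1 / I)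

/-- The `n`-th power of a nonzero fractional ideal in the group of divisorial ideals:
for `n ≥ 0` the divisorial closure of `Iⁿ`, and for `n < 0` the divisorial closure of
`(1/I)^{-n}`. -/
noncomputable def divZPow (I : FractionalIdeal R⁰ F) (m : ℤ) : FractionalIdeal R⁰ F :=
  if 0 ≤ m then divisorialClosure R F (I ^ m.toNat)
  else divisorialClosure R F ((1 / I) ^ (-m).toNat)

/-- Two (nonzero) fractional ideals define the same divisor class iff their divisorial
closures differ by a principal fractional ideal. -/
def SameDivisorClass (I J : FractionalIdeal R⁰ F) : Prop :=
  ∃ a : F, a ≠ 0 ∧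
    divisorialClosure R F I = divisorialClosure R F (FractionalIdeal.spanSingleton R⁰ a * J)

/-- The divisor class group of `R` (divisorial fractional ideals modulo principal ones)
is free abelian of rank `r`: there are `r` nonzero fractional ideals whose divisor
classes form a `ℤ`-basis, i.e. every nonzero fractional ideal has the divisor class of a
unique `ℤ`-linear combination of them. -/
def DivisorClassGroupIsFreeOfRank (r : ℕ) : Prop :=
  ∃ I : Fin r → FractionalIdeal R⁰ F,
    (∀ i, I i ≠ 0) ∧
    (∀ J : FractionalIdeal R⁰ F, J ≠ 0 →
      ∃ v : Fin r → ℤ, SameDivisorClass R F (∏ i, divZPow R F (I i) (v i)) J) ∧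
    ∀ v w : Fin r → ℤ,
      SameDivisorClass R F (∏ i, divZPow R F (I i) (v i)) (∏ i, divZPow R F (I i) (w i)) →
        v = w

end DivisorClassGroup

/-!
Adjoin the vertices of the path one at a time. If `y` is the vector of the last vertex of the path
ring `D`, the next path ring is `E = D[z] / (∑ yᵢ zᵢ)`. Once `y₀` is inverted, the relation
eliminates `z₀`, so `E[1 / y₀] = D[z₁, z₂][1 / y₀]`. By Nagata's theorem, the class group of `E` is
thus obtained from that of `D[z₁, z₂]` by dividing out the classes of the primes over `y₀` in
`D[z₁, z₂]` and adjoining those of the primes over `y₀` in `E`. As `y₀` is prime in `D[z₁, z₂]`, the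
first step does nothing, and if the principal ideal `(y₀)` of `E` is an intersection of `k + 1`
primes, the second one contributes `ℤ ^ k`.

For the second vertex `y₀` stays prime, so `E` is factorial. From the third vertex on, `y` satisfies
a relation `∑ xᵢ yᵢ = 0`, and modulo `y₀` the equations `x₁ y₁ + x₂ y₂ = 0 = z₁ y₁ + z₂ y₂` define
the union of `y₁ = y₂ = 0` and the locus where `x₁ z₂ = x₂ z₁`. Hence `(y₀)` is the intersection of
two primes and every vertex after the second adds one copy of `ℤ`. The induction runs over all
Noetherian factorial base rings, which accounts for the variables `z₁, z₂`.
-/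

/-- A divisor theory of a domain `R` in the sense of Borevich–Shafarevich, with divisors written
additively as finitely supported functions on a type `P` of prime divisors. The value `div 0` is
junk. The last axiom says that every effective divisor is the greatest common divisor of principal
ones. -/
structure DivisorTheory (R : Type*) [CommRing R] (P : Type*) where
  div : R → P →₀ ℤ
  div_mul : ∀ {x y : R}, x ≠ 0 → y ≠ 0 → div (x * y) = div x + div y
  dvd_iff : ∀ {x y : R}, x ≠ 0 → y ≠ 0 → (x ∣ y ↔ div x ≤ div y)
  exists_div_apply_eq : ∀ {δ : P →₀ ℤ}, 0 ≤ δ → ∀ p, ∃ x, x ≠ 0 ∧ δ ≤ div x ∧ div x p = δ p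

namespace DivisorTheory

variable {R : Type*} [CommRing R] [IsDomain R] {P : Type*} (T : DivisorTheory R P)

theorem div_one : T.div 1 = 0 := by
  simpa using T.div_mul (one_ne_zero (α := R)) one_ne_zero

theorem div_nonneg {x : R} (hx : x ≠ 0) : 0 ≤ T.div x := by
  rw [← T.div_one]
  exact (T.dvd_iff one_ne_zero hx).1 (one_dvd x)

theorem div_pow {x : R} (hx : x ≠ 0) (k : ℕ) : T.div (x ^ k) = k • T.div x := by
  induction k with
  | zero => simp [T.div_one]
  | succ k ih => rw [pow_succ, T.div_mul (pow_ne_zero _ hx) hx, ih, succ_nsmul]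

omit [IsDomain R] in
theorem div_eq_of_associated {x y : R} (hx : x ≠ 0) (h : Associated x y) : T.div x = T.div y :=
  have hy := h.ne_zero_iff.1 hx
  le_antisymm ((T.dvd_iff hx hy).1 h.dvd) ((T.dvd_iff hy hx).1 h.symm.dvd)

theorem associated_of_div_eq {x y : R} (hx : x ≠ 0) (hy : y ≠ 0) (h : T.div x = T.div y) :
    Associated x y :=
  associated_of_dvd_dvd ((T.dvd_iff hx hy).2 h.le) ((T.dvd_iff hy hx).2 h.ge)

theorem div_eq_zero_of_isUnit {x : R} (hx : IsUnit x) : T.div x = 0 := by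
  rw [T.div_eq_of_associated hx.ne_zero (associated_one_iff_isUnit.2 hx), T.div_one]

theorem exists_le_div (δ : P →₀ ℤ) : ∃ x, x ≠ 0 ∧ δ ≤ T.div x := by
  rcases isEmpty_or_nonempty P with hP | ⟨⟨p⟩⟩
  · exact ⟨1, one_ne_zero, fun p => hP.elim p⟩
  · obtain ⟨x, hx, hle, -⟩ := T.exists_div_apply_eq (δ := δ ⊔ 0) le_sup_right p
    exact ⟨x, hx, le_sup_left.trans hle⟩

section FractionField

variable {F : Type*} [Field F] [Algebra R F] [IsFractionRing R F]

/-- The extension of a divisor theory of `R` to the nonzero elements of its fraction field. -/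
noncomputable def fracDiv (x : F) : P →₀ ℤ :=
  T.div (IsLocalization.sec R⁰ x).1 - T.div (IsLocalization.sec R⁰ x).2

variable (R) in
theorem exists_eq_algebraMap_div {x : F} (hx : x ≠ 0) :
    ∃ r s : R, r ≠ 0 ∧ s ≠ 0 ∧ x = algebraMap R F r / algebraMap R F s := by
  obtain ⟨r, s, hs, rfl⟩ := IsFractionRing.div_surjective (A := R) x
  refine ⟨r, s, ?_, nonZeroDivisors.ne_zero hs, rfl⟩
  rintro rfl
  simp at hx

theorem fracDiv_algebraMap_div {r s : R} (hr : r ≠ 0) (hs : s ≠ 0) :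
    T.fracDiv (algebraMap R F r / algebraMap R F s) = T.div r - T.div s := by
  have inj := IsFractionRing.injective R F
  have hs' : algebraMap R F s ≠ 0 := by simpa using hs
  set x := algebraMap R F r / algebraMap R F s with hx
  obtain ⟨⟨r', s', hs'0⟩, hsec⟩ : ∃ q, IsLocalization.sec R⁰ x = q := ⟨_, rfl⟩
  have hcross : r * s' = r' * s := by
    have h := IsLocalization.sec_spec R⁰ x
    rw [hsec, hx, div_mul_eq_mul_div, div_eq_iff hs'] at h
    exact inj (by simpa using h)
  have hs'1 : s' ≠ 0 := nonZeroDivisors.ne_zero hs'0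
  have hr' : r' ≠ 0 := by
    rintro rfl
    exact mul_ne_zero hr hs'1 (by simpa using hcross)
  have h := congrArg T.div hcross
  rw [T.div_mul hr hs'1, T.div_mul hr' hs] at h
  rw [fracDiv, hsec, sub_eq_sub_iff_add_eq_add, ← h]

theorem fracDiv_algebraMap {r : R} (hr : r ≠ 0) : T.fracDiv (algebraMap R F r) = T.div r := by
  simpa [T.div_one] using T.fracDiv_algebraMap_div (F := F) hr one_ne_zero

theorem fracDiv_mul {x y : F} (hx : x ≠ 0) (hy : y ≠ 0) :
    T.fracDiv (x * y) = T.fracDiv x + T.fracDiv y := by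
  obtain ⟨r, s, hr, hs, rfl⟩ := exists_eq_algebraMap_div R hx
  obtain ⟨r', s', hr', hs', rfl⟩ := exists_eq_algebraMap_div R hy
  rw [div_mul_div_comm, ← map_mul, ← map_mul,
    T.fracDiv_algebraMap_div (mul_ne_zero hr hr') (mul_ne_zero hs hs'),
    T.fracDiv_algebraMap_div hr hs, T.fracDiv_algebraMap_div hr' hs', T.div_mul hr hr',
    T.div_mul hs hs']
  abel

theorem fracDiv_smul {r : R} (hr : r ≠ 0) {x : F} (hx : x ≠ 0) :
    T.fracDiv (r • x) = T.div r + T.fracDiv x := by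
  rw [Algebra.smul_def, T.fracDiv_mul (by simpa using hr) hx, T.fracDiv_algebraMap hr]

theorem fracDiv_one : T.fracDiv (1 : F) = 0 := by
  simpa [T.div_one] using T.fracDiv_algebraMap (F := F) (one_ne_zero (α := R))

theorem fracDiv_pow {x : F} (hx : x ≠ 0) (k : ℕ) : T.fracDiv (x ^ k) = k • T.fracDiv x := by
  induction k with
  | zero => simp [T.fracDiv_one]
  | succ k ih => rw [pow_succ, T.fracDiv_mul (pow_ne_zero _ hx) hx, ih, succ_nsmul]

theorem fracDiv_nonneg_iff {x : F} (hx : x ≠ 0) :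
    0 ≤ T.fracDiv x ↔ ∃ r, algebraMap R F r = x := by
  constructor
  · intro h
    obtain ⟨r, s, hr, hs, rfl⟩ := exists_eq_algebraMap_div R hx
    rw [T.fracDiv_algebraMap_div hr hs, sub_nonneg] at h
    obtain ⟨t, rfl⟩ := (T.dvd_iff hs hr).2 h
    have hs' : algebraMap R F s ≠ 0 := by simpa using hs
    exact ⟨t, by rw [map_mul, mul_div_cancel_left₀ _ hs']⟩
  · rintro ⟨r, rfl⟩
    have hr : r ≠ 0 := by simpa using hx
    rw [T.fracDiv_algebraMap hr]
    exact T.div_nonneg hr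

theorem exists_fracDiv_apply_eq (δ : P →₀ ℤ) (p : P) :
    ∃ x : F, x ≠ 0 ∧ δ ≤ T.fracDiv x ∧ T.fracDiv x p = δ p := by
  obtain ⟨s, hs, hsδ⟩ := T.exists_le_div (-δ)
  obtain ⟨x, hx, hxδ, hxp⟩ := T.exists_div_apply_eq (neg_le_iff_add_nonneg'.1 hsδ) p
  refine ⟨algebraMap R F x / algebraMap R F s,
    div_ne_zero (by simpa using hx) (by simpa using hs), ?_⟩
  rw [T.fracDiv_algebraMap_div hx hs]
  exact ⟨le_sub_iff_add_le.2 hxδ, by simp [hxp]⟩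

theorem le_fracDiv_add {δ : P →₀ ℤ} {x y : F} (hx : x ≠ 0 → δ ≤ T.fracDiv x)
    (hy : y ≠ 0 → δ ≤ T.fracDiv y) (hxy : x + y ≠ 0) : δ ≤ T.fracDiv (x + y) := by
  intro p
  obtain ⟨z, hz, hzδ, hzp⟩ := T.exists_fracDiv_apply_eq (F := F) (-δ) p
  have integral_mul {t : F} (ht : t ≠ 0 → δ ≤ T.fracDiv t) : ∃ r, algebraMap R F r = t * z := by
    by_cases ht0 : t = 0
    · exact ⟨0, by simp [ht0]⟩
    rw [← T.fracDiv_nonneg_iff (mul_ne_zero ht0 hz), T.fracDiv_mul ht0 hz]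
    simpa using add_le_add (ht ht0) hzδ
  obtain ⟨r, hr⟩ := integral_mul hx
  obtain ⟨s, hs⟩ := integral_mul hy
  have h : 0 ≤ T.fracDiv ((x + y) * z) :=
    (T.fracDiv_nonneg_iff (mul_ne_zero hxy hz)).2 ⟨r + s, by rw [map_add, hr, hs, add_mul]⟩
  rw [T.fracDiv_mul hxy hz] at h
  simpa [hzp] using h p

theorem isIntegrallyClosed (T : DivisorTheory R P) : IsIntegrallyClosed R := by
  rw [isIntegrallyClosed_iff (FractionRing R)]
  intro x hx
  by_cases h0 : x = 0
  · exact ⟨0, by simp [h0]⟩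
  rw [← T.fracDiv_nonneg_iff h0]
  obtain ⟨d, hd, hdx⟩ := hx.isAlmostIntegral
  have hd0 : d ≠ 0 := nonZeroDivisors.ne_zero hd
  have hbound (k : ℕ) : 0 ≤ T.div d + k • T.fracDiv x := by
    rw [← T.fracDiv_pow h0, ← T.fracDiv_smul hd0 (pow_ne_zero _ h0),
      T.fracDiv_nonneg_iff (by simp [Algebra.smul_def, hd0, h0])]
    exact hdx k
  intro p
  by_contra! hneg
  have h : 0 ≤ T.div d p + ((T.div d p).toNat + 1) * T.fracDiv x p := by
    simpa using hbound ((T.div d p).toNat + 1) p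
  have hdp := Int.self_le_toNat (T.div d p)
  rw [Finsupp.zero_apply] at hneg
  nlinarith [Int.natCast_nonneg (T.div d p).toNat]

/-- The fractional ideal `I` is nonzero and `δ` is the divisor of `I`, i.e. the greatest common
divisor (pointwise minimum) of the divisors of its nonzero elements. -/
structure HasDivisor (I : FractionalIdeal R⁰ F) (δ : P →₀ ℤ) : Prop where
  ne_zero : I ≠ 0
  le_fracDiv : ∀ x ∈ I, x ≠ 0 → δ ≤ T.fracDiv x
  exists_apply_eq : ∀ p, ∃ x ∈ I, x ≠ 0 ∧ T.fracDiv x p = δ p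

variable (F) in
/-- The divisorial fractional ideal `{x | δ ≤ div x}` attached to a divisor `δ`. -/
noncomputable def divisorialIdeal (δ : P →₀ ℤ) : FractionalIdeal R⁰ F where
  val :=
    { carrier := {x | x ≠ 0 → δ ≤ T.fracDiv x}
      add_mem' := T.le_fracDiv_add
      zero_mem' := fun h => absurd rfl h
      smul_mem' := by
        intro r x hx hrx
        obtain ⟨hr, hx0⟩ : r ≠ 0 ∧ x ≠ 0 := by simpa [Algebra.smul_def] using hrx
        rw [T.fracDiv_smul hr hx0]
        exact (hx hx0).trans (le_add_of_nonneg_left (T.div_nonneg hr)) }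
  property := by
    obtain ⟨s, hs, hsδ⟩ := T.exists_le_div (-δ)
    refine ⟨s, mem_nonZeroDivisors_of_ne_zero hs, fun x hx => ?_⟩
    by_cases hx0 : x = 0
    · exact ⟨0, by simp [hx0]⟩
    refine (T.fracDiv_nonneg_iff (by simp [Algebra.smul_def, hs, hx0])).1 ?_
    rw [T.fracDiv_smul hs hx0]
    simpa using add_le_add hsδ (hx hx0)

theorem hasDivisor_divisorialIdeal (δ : P →₀ ℤ) : T.HasDivisor (T.divisorialIdeal F δ) δ where
  ne_zero h := by
    obtain ⟨s, hs, hsδ⟩ := T.exists_le_div δ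
    have hmem : algebraMap R F s ∈ T.divisorialIdeal F δ := fun _ => by
      rwa [T.fracDiv_algebraMap hs]
    rw [h, FractionalIdeal.mem_zero_iff] at hmem
    exact hs (by simpa using hmem)
  le_fracDiv _ hx := hx
  exists_apply_eq p := by
    obtain ⟨x, hx, hle, hp⟩ := T.exists_fracDiv_apply_eq (F := F) δ p
    exact ⟨x, fun _ => hle, hx, hp⟩

theorem hasDivisor_spanSingleton {a : F} (ha : a ≠ 0) :
    T.HasDivisor (FractionalIdeal.spanSingleton R⁰ a) (T.fracDiv a) where
  ne_zero := FractionalIdeal.spanSingleton_ne_zero_iff.2 ha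
  le_fracDiv x hx hx0 := by
    obtain ⟨r, rfl⟩ := (FractionalIdeal.mem_spanSingleton _).1 hx
    have hr : r ≠ 0 := by rintro rfl; simp at hx0
    rw [T.fracDiv_smul hr ha]
    exact le_add_of_nonneg_left (T.div_nonneg hr)
  exists_apply_eq _ := ⟨a, FractionalIdeal.mem_spanSingleton_self _ _, ha, rfl⟩

theorem hasDivisor_one : T.HasDivisor (1 : FractionalIdeal R⁰ F) 0 := by
  simpa [T.fracDiv_one] using T.hasDivisor_spanSingleton (one_ne_zero (α := F))

namespace HasDivisor

variable {T} {I J : FractionalIdeal R⁰ F} {δ ε : P →₀ ℤ}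

omit [IsDomain R] in
theorem le_of_le (hI : T.HasDivisor I δ) (hJ : T.HasDivisor J ε) (h : J ≤ I) : δ ≤ ε := by
  intro p
  obtain ⟨x, hx, hx0, hp⟩ := hJ.exists_apply_eq p
  exact hp ▸ hI.le_fracDiv x (h hx) hx0 p

omit [IsDomain R] in
theorem unique (h : T.HasDivisor I δ) (h' : T.HasDivisor I ε) : δ = ε :=
  le_antisymm (h.le_of_le h' le_rfl) (h'.le_of_le h le_rfl)

theorem one_div_eq (h : T.HasDivisor I δ) : 1 / I = T.divisorialIdeal F (-δ) := by
  ext x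
  rw [FractionalIdeal.mem_div_iff_of_ne_zero h.ne_zero]
  by_cases hx0 : x = 0
  · simp [hx0, FractionalIdeal.zero_mem]
  have hmul {y : F} (hy0 : y ≠ 0) : x * y ∈ (1 : FractionalIdeal R⁰ F) ↔
      -T.fracDiv y ≤ T.fracDiv x := by
    rw [FractionalIdeal.mem_one_iff, ← T.fracDiv_nonneg_iff (mul_ne_zero hx0 hy0),
      T.fracDiv_mul hx0 hy0, neg_le_iff_add_nonneg]
  constructor
  · intro hx _ p
    obtain ⟨y, hy, hy0, hp⟩ := h.exists_apply_eq p
    simpa [hp] using (hmul hy0).1 (hx y hy) p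
  · intro hx y hy
    by_cases hy0 : y = 0
    · simp [hy0]
    · exact (hmul hy0).2 ((neg_le_neg (h.le_fracDiv y hy hy0)).trans (hx hx0))

theorem one_div (h : T.HasDivisor I δ) : T.HasDivisor (1 / I) (-δ) :=
  h.one_div_eq ▸ T.hasDivisor_divisorialIdeal _

theorem mul (hI : T.HasDivisor I δ) (hJ : T.HasDivisor J ε) : T.HasDivisor (I * J) (δ + ε) where
  ne_zero := by
    rw [← FractionalIdeal.coeToSubmodule_ne_bot, FractionalIdeal.coe_mul]
    exact mul_ne_zero (FractionalIdeal.coeToSubmodule_ne_bot.2 hI.ne_zero)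
      (FractionalIdeal.coeToSubmodule_ne_bot.2 hJ.ne_zero)
  le_fracDiv := by
    suffices hle : I * J ≤ T.divisorialIdeal F (δ + ε) from fun x hx => hle hx
    refine FractionalIdeal.mul_le.2 fun i hi j hj hij => ?_
    have hi0 := left_ne_zero_of_mul hij
    have hj0 := right_ne_zero_of_mul hij
    rw [T.fracDiv_mul hi0 hj0]
    exact add_le_add (hI.le_fracDiv i hi hi0) (hJ.le_fracDiv j hj hj0)
  exists_apply_eq p := by
    obtain ⟨x, hx, hx0, hxp⟩ := hI.exists_apply_eq p
    obtain ⟨y, hy, hy0, hyp⟩ := hJ.exists_apply_eq p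
    exact ⟨x * y, FractionalIdeal.mul_mem_mul hx hy, mul_ne_zero hx0 hy0, by
      simp [T.fracDiv_mul hx0 hy0, hxp, hyp]⟩

theorem pow (h : T.HasDivisor I δ) (k : ℕ) : T.HasDivisor (I ^ k) (k • δ) := by
  induction k with
  | zero => simpa using T.hasDivisor_one
  | succ k ih => rw [pow_succ, succ_nsmul]; exact ih.mul h

theorem prod {ι : Type*} {I : ι → FractionalIdeal R⁰ F} {δ : ι → P →₀ ℤ}
    (h : ∀ i, T.HasDivisor (I i) (δ i)) (s : Finset ι) :
    T.HasDivisor (∏ i ∈ s, I i) (∑ i ∈ s, δ i) := by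
  classical
  induction s using Finset.induction_on with
  | empty => simpa using T.hasDivisor_one
  | insert a s ha ih => rw [Finset.prod_insert ha, Finset.sum_insert ha]; exact (h a).mul ih

end HasDivisor

theorem exists_le_fracDiv_of_mem (I : FractionalIdeal R⁰ F) :
    ∃ δ : P →₀ ℤ, ∀ x ∈ I, x ≠ 0 → δ ≤ T.fracDiv x := by
  obtain ⟨d, hd, hdI⟩ := I.2
  have hd0 : d ≠ 0 := nonZeroDivisors.ne_zero hd
  refine ⟨-T.div d, fun x hx hx0 => ?_⟩
  rw [neg_le_iff_add_nonneg', ← T.fracDiv_smul hd0 hx0,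
    T.fracDiv_nonneg_iff (by simp [Algebra.smul_def, hd0, hx0])]
  exact hdI x hx

theorem exists_hasDivisor {I : FractionalIdeal R⁰ F} (hI : I ≠ 0) : ∃ δ, T.HasDivisor I δ := by
  classical
  obtain ⟨x₀, hx₀, hx₀0⟩ : ∃ x ∈ I, x ≠ 0 := by
    by_contra! h
    exact hI (FractionalIdeal.eq_zero_iff.2 h)
  obtain ⟨δ, hδ⟩ := T.exists_le_fracDiv_of_mem I
  have exists_min (p : P) : ∃ m : ℤ, (∃ x ∈ I, x ≠ 0 ∧ T.fracDiv x p = m) ∧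
      ∀ z, (∃ x ∈ I, x ≠ 0 ∧ T.fracDiv x p = z) → m ≤ z :=
    Int.exists_least_of_bdd ⟨δ p, by rintro z ⟨x, hx, hx0, rfl⟩; exact hδ x hx hx0 p⟩
      ⟨_, x₀, hx₀, hx₀0, rfl⟩
  choose m hattained hmin using exists_min
  have hsupport (p : P) (hp : m p ≠ 0) : p ∈ δ.support ∪ (T.fracDiv x₀).support := by
    contrapose! hp
    simp only [Finset.mem_union, Finsupp.mem_support_iff, not_or, not_not] at hp
    obtain ⟨x, hx, hx0, hxp⟩ := hattained p
    exact le_antisymm (hp.2 ▸ hmin p _ ⟨x₀, hx₀, hx₀0, rfl⟩) (hp.1 ▸ hxp ▸ hδ x hx hx0 p)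
  exact ⟨Finsupp.onFinset _ m hsupport, hI, fun x hx hx0 p => hmin p _ ⟨x, hx, hx0, rfl⟩,
    hattained⟩

end FractionField

section DivisorialClosure

variable {R : Type} [CommRing R] [IsDomain R] {P : Type*} {T : DivisorTheory R P}
variable {F : Type} [Field F] [Algebra R F] [IsFractionRing R F]

namespace HasDivisor

variable {I J : FractionalIdeal R⁰ F} {δ ε : P →₀ ℤ}

theorem divisorialClosure_eq (h : T.HasDivisor I δ) :
    divisorialClosure R F I = T.divisorialIdeal F δ := by
  rw [divisorialClosure, h.one_div.one_div_eq, neg_neg]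

theorem divisorialClosure (h : T.HasDivisor I δ) : T.HasDivisor (divisorialClosure R F I) δ :=
  h.divisorialClosure_eq ▸ T.hasDivisor_divisorialIdeal _

theorem divZPow (h : T.HasDivisor I δ) (m : ℤ) : T.HasDivisor (divZPow R F I m) (m • δ) := by
  rw [_root_.divZPow]
  split_ifs with hm
  · lift m to ℕ using hm
    simpa using (h.pow m).divisorialClosure
  · obtain ⟨k, rfl⟩ : ∃ k : ℕ, m = -k := ⟨(-m).toNat, by omega⟩
    simpa using (h.one_div.pow k).divisorialClosure

theorem sameDivisorClass_iff (hI : T.HasDivisor I δ) (hJ : T.HasDivisor J ε) :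
    SameDivisorClass R F I J ↔ ∃ a : F, a ≠ 0 ∧ δ = T.fracDiv a + ε := by
  refine exists_congr fun a => and_congr_right fun ha => ?_
  have haJ := (T.hasDivisor_spanSingleton ha).mul hJ
  constructor
  · intro h
    exact hI.divisorialClosure.unique (h ▸ haJ.divisorialClosure)
  · rintro rfl
    rw [hI.divisorialClosure_eq, haJ.divisorialClosure_eq]

end HasDivisor

end DivisorialClosure

/-- The classes of the divisors `b i` form a `ℤ`-basis of the group of divisors modulo principal
divisors; a general principal divisor is a difference `div x - div y` with `x, y ∈ R` nonzero. -/
structure IsClassBasis {R : Type*} [CommRing R] {P : Type*} (T : DivisorTheory R P) {ι : Type*}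
    [Fintype ι] (b : ι → P →₀ ℤ) : Prop where
  exists_eq : ∀ δ, ∃ (m : ι → ℤ) (x y : R), x ≠ 0 ∧ y ≠ 0 ∧
    δ = ∑ i, m i • b i + T.div x - T.div y
  eq_zero : ∀ {m : ι → ℤ} {x y : R}, x ≠ 0 → y ≠ 0 →
    ∑ i, m i • b i = T.div x - T.div y → m = 0

end DivisorTheory

/-- `R` has a divisor theory whose divisor class group is free with a basis indexed by `ι`. -/
def HasFreeDivisorClassGroup.{u, v} (R : Type u) [CommRing R] (ι : Type v) [Fintype ι] : Prop :=
  ∃ (P : Type u) (T : DivisorTheory R P) (b : ι → P →₀ ℤ), T.IsClassBasis b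

namespace HasFreeDivisorClassGroup

theorem isIntegrallyClosed {R ι : Type*} [CommRing R] [IsDomain R] [Fintype ι]
    (h : HasFreeDivisorClassGroup R ι) : IsIntegrallyClosed R :=
  let ⟨_, T, _⟩ := h
  T.isIntegrallyClosed

theorem reindex {R ι κ : Type*} [CommRing R] [Fintype ι] [Fintype κ] (e : ι ≃ κ)
    (h : HasFreeDivisorClassGroup R ι) : HasFreeDivisorClassGroup R κ := by
  obtain ⟨P, T, b, hb⟩ := h
  refine ⟨P, T, b ∘ e.symm, fun δ => ?_, fun {m x y} hx hy h => ?_⟩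
  · obtain ⟨m, x, y, hx, hy, rfl⟩ := hb.exists_eq δ
    exact ⟨m ∘ e.symm, x, y, hx, hy, by simp [Equiv.sum_comp e.symm (fun i => m i • b i)]⟩
  · have hm : m ∘ e = 0 := hb.eq_zero hx hy <| by
      rw [← h, ← Equiv.sum_comp e]
      simp
    exact e.surjective.injective_comp_right hm

theorem divisorClassGroupIsFreeOfRank {R : Type} [CommRing R] [IsDomain R] {r : ℕ}
    (h : HasFreeDivisorClassGroup R (Fin r)) (F : Type) [Field F] [Algebra R F]
    [IsFractionRing R F] : DivisorClassGroupIsFreeOfRank R F r := by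
  obtain ⟨P, T, b, hb⟩ := h
  have hprod (v : Fin r → ℤ) :
      T.HasDivisor (∏ i, divZPow R F (T.divisorialIdeal F (b i)) (v i)) (∑ i, v i • b i) :=
    .prod (fun i => (T.hasDivisor_divisorialIdeal (b i)).divZPow (v i)) _
  refine ⟨fun i => T.divisorialIdeal F (b i),
    fun i => (T.hasDivisor_divisorialIdeal (b i)).ne_zero, fun J hJ => ?_, fun v w hvw => ?_⟩
  · obtain ⟨δ, hδ⟩ := T.exists_hasDivisor hJ
    obtain ⟨m, x, y, hx, hy, rfl⟩ := hb.exists_eq δ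
    refine ⟨m, ((hprod m).sameDivisorClass_iff hδ).2
      ⟨algebraMap R F y / algebraMap R F x, div_ne_zero (by simpa using hy) (by simpa using hx),
        ?_⟩⟩
    rw [T.fracDiv_algebraMap_div hy hx]
    abel
  · obtain ⟨a, ha, h⟩ := ((hprod v).sameDivisorClass_iff (hprod w)).1 hvw
    obtain ⟨x, y, hx, hy, rfl⟩ := DivisorTheory.exists_eq_algebraMap_div R ha
    rw [T.fracDiv_algebraMap_div hx hy] at h
    refine sub_eq_zero.1 (hb.eq_zero hx hy ?_)
    simp [sub_smul, h]

end HasFreeDivisorClassGroup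

section UniqueFactorization

variable {R : Type*} [CommRing R] [UniqueFactorizationMonoid R]

open scoped Classical in
/-- The divisor of an element of a factorial ring: its multiset of prime factors, the prime
divisors being the associate classes of irreducible elements. -/
noncomputable def factorDivisor (x : R) : {p : Associates R // Irreducible p} →₀ ℤ :=
  (Associates.factors' x).toFinsupp.mapRange Nat.cast Nat.cast_zero

open scoped Classical in
theorem factorDivisor_apply (x : R) (p : {p : Associates R // Irreducible p}) :
    factorDivisor x p = (Associates.factors' x).count p := by
  simp [factorDivisor]

theorem dvd_iff_factorDivisor_le {x y : R} (hx : x ≠ 0) (hy : y ≠ 0) :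
    x ∣ y ↔ factorDivisor x ≤ factorDivisor y := by
  classical
  rw [← Associates.mk_le_mk_iff_dvd, ← Associates.factors_le, Associates.factors_mk _ hx,
    Associates.factors_mk _ hy, WithTop.coe_le_coe, Multiset.le_iff_count]
  simp [Finsupp.le_def, factorDivisor_apply]

variable [IsDomain R]

theorem factorDivisor_mul {x y : R} (hx : x ≠ 0) (hy : y ≠ 0) :
    factorDivisor (x * y) = factorDivisor x + factorDivisor y := by
  have h : Associates.factors' (x * y) = Associates.factors' x + Associates.factors' y := by
    have h := Associates.factors_mul (Associates.mk x) (Associates.mk y)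
    rw [Associates.mk_mul_mk, Associates.factors_mk _ hx, Associates.factors_mk _ hy,
      Associates.factors_mk _ (mul_ne_zero hx hy)] at h
    exact_mod_cast h
  ext p
  simp [factorDivisor_apply, h]

theorem exists_factorDivisor_eq {δ : {p : Associates R // Irreducible p} →₀ ℤ} (hδ : 0 ≤ δ) :
    ∃ x : R, x ≠ 0 ∧ factorDivisor x = δ := by
  classical
  let s := Multiset.toFinsupp.symm (δ.mapRange Int.toNat Int.toNat_zero)
  obtain ⟨x, hxs⟩ := Associates.mk_surjective (Associates.FactorSet.prod s : Associates R)
  have hfac : (Associates.mk x).factors = s := by rw [hxs, Associates.prod_factors]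
  have hx : x ≠ 0 := by
    rintro rfl
    simp at hfac
  refine ⟨x, hx, ?_⟩
  rw [Associates.factors_mk _ hx, WithTop.coe_inj] at hfac
  ext p
  have hp : 0 ≤ δ p := hδ p
  simp [factorDivisor_apply, hfac, s, hp]

variable (R) in
/-- The divisor theory of a factorial ring. -/
noncomputable def DivisorTheory.ofUniqueFactorization :
    DivisorTheory R {p : Associates R // Irreducible p} where
  div := factorDivisor
  div_mul := factorDivisor_mul
  dvd_iff := dvd_iff_factorDivisor_le
  exists_div_apply_eq hδ _ :=
    let ⟨x, hx, h⟩ := exists_factorDivisor_eq hδ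
    ⟨x, hx, h.ge, by rw [h]⟩

theorem HasFreeDivisorClassGroup.of_uniqueFactorization (ι : Type*) [Fintype ι] [IsEmpty ι] :
    HasFreeDivisorClassGroup R ι := by
  refine ⟨_, .ofUniqueFactorization R, isEmptyElim, fun δ => ?_, fun _ _ _ => Subsingleton.elim _ _⟩
  obtain ⟨x, hx, hxδ⟩ := exists_factorDivisor_eq (R := R) (δ := δ ⊔ 0) le_sup_right
  obtain ⟨y, hy, hyδ⟩ := exists_factorDivisor_eq (R := R) (δ := -δ ⊔ 0) le_sup_right
  refine ⟨isEmptyElim, x, y, hx, hy, ?_⟩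
  change δ = _ + factorDivisor x - factorDivisor y
  ext p
  simp only [Finset.univ_eq_empty, Finset.sum_empty, zero_add, hxδ, hyδ, Finsupp.sub_apply,
    Finsupp.sup_apply, Finsupp.neg_apply, Finsupp.zero_apply]
  omega

end UniqueFactorization

namespace DivisorTheory

section Prime

variable {R : Type*} [CommRing R] [IsDomain R] {P : Type*} (T : DivisorTheory R P)

theorem exists_single_le_div_of_not_isUnit {a : R} (ha0 : a ≠ 0) (ha : ¬IsUnit a) :
    ∃ p, Finsupp.single p 1 ≤ T.div a := by
  have h0 := T.div_nonneg ha0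
  obtain ⟨p, hp⟩ : ∃ p, T.div a p ≠ 0 := by
    by_contra! h
    apply ha
    rw [isUnit_iff_dvd_one, T.dvd_iff ha0 one_ne_zero, T.div_one, Finsupp.ext (g := 0) h]
  refine ⟨p, fun q => ?_⟩
  obtain rfl | hq := eq_or_ne p q
  · simpa using Int.add_one_le_iff.2 ((h0 p).lt_of_ne' hp)
  · simpa [hq] using h0 q

theorem exists_div_eq_single_of_prime {a : R} (ha : Prime a) :
    ∃ p, T.div a = Finsupp.single p 1 := by
  obtain ⟨p, hp⟩ := T.exists_single_le_div_of_not_isUnit ha.ne_zero ha.not_isUnit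
  obtain ⟨g, hg, hgle, hgp⟩ := T.exists_div_apply_eq (sub_nonneg.2 hp) p
  have hag : ¬a ∣ g := fun h => by
    have := (T.dvd_iff ha.ne_zero hg).1 h p
    simp [hgp] at this
  refine ⟨p, le_antisymm (fun q => ?_) hp⟩
  obtain ⟨f, hf, hfle, hfq⟩ := T.exists_div_apply_eq (δ := Finsupp.single p 1) (by simp) q
  have hafg : a ∣ f * g := by
    rw [T.dvd_iff ha.ne_zero (mul_ne_zero hf hg), T.div_mul hf hg]
    simpa using add_le_add hfle hgle
  rw [← hfq]
  exact (T.dvd_iff ha.ne_zero hf).1 ((ha.dvd_or_dvd hafg).resolve_right hag) q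

end Prime

end DivisorTheory

theorem isLocalization_algebraMap_dvd_iff {R L : Type*} [CommRing R] [CommRing L] [Algebra R L]
    (M : Submonoid R) [IsLocalization M L] {b c : R} :
    algebraMap R L b ∣ algebraMap R L c ↔ ∃ s ∈ M, b ∣ s * c := by
  constructor
  · rintro ⟨t, ht⟩
    obtain ⟨⟨d, s⟩, hd⟩ := IsLocalization.surj M t
    have h : algebraMap R L (s * c) = algebraMap R L (b * d) := by
      rw [map_mul, map_mul, ht, ← hd]
      ring
    obtain ⟨s', hs'⟩ := IsLocalization.exists_of_eq (M := M) h
    exact ⟨s' * s, mul_mem s'.2 s.2, s' * d, by rw [mul_assoc, hs']; ring⟩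
  · rintro ⟨s, hs, h⟩
    have h := map_dvd (algebraMap R L) h
    rwa [map_mul, (IsLocalization.map_units L (⟨s, hs⟩ : M)).dvd_mul_left] at h

section Away

variable {B A : Type*} [CommRing B] [CommRing A] [Algebra B A] (a : B) [IsLocalization.Away a A]

theorem algebraMap_away_dvd_iff {b c : B} :
    algebraMap B A b ∣ algebraMap B A c ↔ ∃ k, b ∣ a ^ k * c := by
  simp [isLocalization_algebraMap_dvd_iff (Submonoid.powers a), Submonoid.mem_powers_iff]

include a in
theorem exists_associated_algebraMap {x : A} (hx : x ≠ 0) :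
    ∃ b : B, b ≠ 0 ∧ Associated x (algebraMap B A b) := by
  have hsec := (IsLocalization.Away.associated_sec_fst a x).symm
  exact ⟨_, fun h => hx (by simpa [h] using hsec), hsec⟩

variable {a} in
theorem algebraMap_away_injective [IsDomain B] (ha0 : a ≠ 0) :
    Function.Injective (algebraMap B A) :=
  IsLocalization.injective A (powers_le_nonZeroDivisors_of_noZeroDivisors ha0)

variable {a} in
theorem algebraMap_away_ne_zero [IsDomain B] (ha0 : a ≠ 0) {b : B} (hb : b ≠ 0) :
    algebraMap B A b ≠ 0 :=
  (map_ne_zero_iff _ (algebraMap_away_injective ha0)).2 hb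

namespace DivisorTheory

variable {P : Type*} (T : DivisorTheory B P) (p₀ : P)

/-- Restriction of a divisor to the prime divisors different from `p₀`. -/
noncomputable def restrict : (P →₀ ℤ) →+ ({p // p ≠ p₀} →₀ ℤ) :=
  Finsupp.subtypeDomainAddMonoidHom

theorem restrict_apply (δ : P →₀ ℤ) (p : {p // p ≠ p₀}) : restrict p₀ δ p = δ p := rfl

theorem restrict_mono : Monotone (restrict p₀) := fun _ _ h p => h p

theorem restrict_surjective : Function.Surjective (restrict p₀) := by
  classical
  exact fun δ => ⟨δ.extendDomain, Finsupp.subtypeDomain_extendDomain δ⟩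

theorem exists_nonneg_restrict_eq {δ : {p // p ≠ p₀} →₀ ℤ} (hδ : 0 ≤ δ) :
    ∃ ε, 0 ≤ ε ∧ restrict p₀ ε = δ := by
  obtain ⟨ε, rfl⟩ := restrict_surjective p₀ δ
  refine ⟨ε ⊔ 0, le_sup_right, ?_⟩
  ext p
  simpa [restrict_apply] using hδ p

/-- The divisor on the localization of `B` away from a prime element with divisor `p₀`: multiply
into `B`, take the divisor there and forget `p₀`. -/
noncomputable def awayDiv (x : A) : {p // p ≠ p₀} →₀ ℤ :=
  restrict p₀ (T.div (IsLocalization.Away.sec a x).1)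

variable {a p₀} [IsDomain B] (ha : T.div a = Finsupp.single p₀ 1) (ha0 : a ≠ 0)

include ha ha0

theorem algebraMap_dvd_iff_restrict_le {b c : B} (hb : b ≠ 0) (hc : c ≠ 0) :
    algebraMap B A b ∣ algebraMap B A c ↔ restrict p₀ (T.div b) ≤ restrict p₀ (T.div c) := by
  have hak (k : ℕ) : T.div (a ^ k * c) = Finsupp.single p₀ (k : ℤ) + T.div c := by
    rw [T.div_mul (pow_ne_zero _ ha0) hc, T.div_pow ha0, ha]
    simp
  rw [algebraMap_away_dvd_iff a]
  constructor
  · rintro ⟨k, h⟩ ⟨p, hp⟩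
    simpa [restrict_apply, hak, hp.symm] using
      (T.dvd_iff hb (mul_ne_zero (pow_ne_zero _ ha0) hc)).1 h p
  · intro h
    refine ⟨(T.div b p₀).toNat, ?_⟩
    rw [T.dvd_iff hb (mul_ne_zero (pow_ne_zero _ ha0) hc), hak]
    intro p
    obtain rfl | hp := eq_or_ne p p₀
    · simpa using (Int.self_le_toNat _).trans (le_add_of_nonneg_right (T.div_nonneg hc p))
    · simpa [restrict_apply, hp.symm] using h ⟨p, hp⟩

theorem awayDiv_eq_of_associated {x : A} {b : B} (hx : x ≠ 0)
    (hxb : Associated x (algebraMap B A b)) :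
    T.awayDiv a p₀ x = restrict p₀ (T.div b) := by
  set s := (IsLocalization.Away.sec a x).1 with hs
  have hsec := IsLocalization.Away.associated_sec_fst a x
  have hs0 : s ≠ 0 := fun h => hx <| by simpa [← hs, h] using hsec.symm
  have hb0 : b ≠ 0 := by rintro rfl; exact hx (by simpa using hxb)
  have h := hsec.trans hxb
  exact le_antisymm ((T.algebraMap_dvd_iff_restrict_le ha ha0 hs0 hb0).1 h.dvd)
    ((T.algebraMap_dvd_iff_restrict_le ha ha0 hb0 hs0).1 h.symm.dvd)

theorem awayDiv_algebraMap {b : B} (hb : b ≠ 0) :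
    T.awayDiv a p₀ (algebraMap B A b) = restrict p₀ (T.div b) :=
  T.awayDiv_eq_of_associated ha ha0 (algebraMap_away_ne_zero ha0 hb) .rfl

/-- The divisor theory on the localization of `B` away from a prime element with divisor `p₀`. -/
noncomputable def away [IsDomain A] : DivisorTheory A {p // p ≠ p₀} where
  div := T.awayDiv a p₀
  div_mul {x y} hx hy := by
    obtain ⟨b, hb, hxb⟩ := exists_associated_algebraMap a hx
    obtain ⟨c, hc, hyc⟩ := exists_associated_algebraMap a hy
    have hbc : Associated (x * y) (algebraMap B A (b * c)) := by
      rw [map_mul]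
      exact hxb.mul_mul hyc
    rw [T.awayDiv_eq_of_associated ha ha0 (mul_ne_zero hx hy) hbc,
      T.awayDiv_eq_of_associated ha ha0 hx hxb, T.awayDiv_eq_of_associated ha ha0 hy hyc,
      T.div_mul hb hc, map_add]
  dvd_iff {x y} hx hy := by
    obtain ⟨b, hb, hxb⟩ := exists_associated_algebraMap a hx
    obtain ⟨c, hc, hyc⟩ := exists_associated_algebraMap a hy
    rw [hxb.dvd_iff_dvd_left, hyc.dvd_iff_dvd_right, T.algebraMap_dvd_iff_restrict_le ha ha0 hb hc,
      T.awayDiv_eq_of_associated ha ha0 hx hxb, T.awayDiv_eq_of_associated ha ha0 hy hyc]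
  exists_div_apply_eq {δ} hδ p := by
    obtain ⟨ε, hε, rfl⟩ := exists_nonneg_restrict_eq p₀ hδ
    obtain ⟨x, hx, hle, hxp⟩ := T.exists_div_apply_eq hε p
    refine ⟨algebraMap B A x, algebraMap_away_ne_zero ha0 hx, ?_⟩
    rw [T.awayDiv_algebraMap ha ha0 hx]
    exact ⟨restrict_mono p₀ hle, hxp⟩

theorem exists_div_sub_div_eq_of_restrict_eq_zero {δ : P →₀ ℤ} (hδ : restrict p₀ δ = 0) :
    ∃ m n : ℕ, δ = T.div (a ^ m) - T.div (a ^ n) := by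
  refine ⟨(δ p₀).toNat, (-δ p₀).toNat, ?_⟩
  rw [T.div_pow ha0, T.div_pow ha0, ha]
  ext p
  obtain rfl | hp := eq_or_ne p p₀
  · simp
  · simpa [hp.symm, restrict_apply] using DFunLike.congr_fun hδ ⟨p, hp⟩

theorem IsClassBasis.away [IsDomain A] {ι : Type*} [Fintype ι] {b : ι → P →₀ ℤ}
    (hb : T.IsClassBasis b) :
    (T.away ha ha0 (A := A)).IsClassBasis fun i => restrict p₀ (b i) where
  exists_eq δ := by
    obtain ⟨ε, rfl⟩ := restrict_surjective p₀ δ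
    obtain ⟨m, x, y, hx, hy, rfl⟩ := hb.exists_eq ε
    refine ⟨m, algebraMap B A x, algebraMap B A y, algebraMap_away_ne_zero ha0 hx,
      algebraMap_away_ne_zero ha0 hy, ?_⟩
    change _ = _ + T.awayDiv a p₀ _ - T.awayDiv a p₀ _
    rw [T.awayDiv_algebraMap ha ha0 hx, T.awayDiv_algebraMap ha ha0 hy]
    simp
  eq_zero {m x y} hx hy h := by
    obtain ⟨r, hr, hxr⟩ := exists_associated_algebraMap a hx
    obtain ⟨s, hs, hys⟩ := exists_associated_algebraMap a hy
    change _ = T.awayDiv a p₀ x - T.awayDiv a p₀ y at h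
    rw [T.awayDiv_eq_of_associated ha ha0 hx hxr, T.awayDiv_eq_of_associated ha ha0 hy hys] at h
    obtain ⟨k, l, hkl⟩ := T.exists_div_sub_div_eq_of_restrict_eq_zero ha ha0
      (δ := ∑ i, m i • b i - (T.div r - T.div s)) (by simpa [sub_eq_zero] using h)
    have hak := pow_ne_zero k ha0
    have hal := pow_ne_zero l ha0
    refine hb.eq_zero (mul_ne_zero hak hr) (mul_ne_zero hal hs) ?_
    rw [T.div_mul hak hr, T.div_mul hal hs, sub_eq_iff_eq_add.1 hkl]
    abel

end DivisorTheory

theorem HasFreeDivisorClassGroup.away.{u} {B A : Type u} [CommRing B] [CommRing A] [IsDomain B]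
    [IsDomain A] [Algebra B A] {a : B} [IsLocalization.Away a A] (ha : Prime a) {ι : Type*}
    [Fintype ι] (h : HasFreeDivisorClassGroup B ι) : HasFreeDivisorClassGroup A ι := by
  obtain ⟨P, T, b, hb⟩ := h
  obtain ⟨p₀, hp₀⟩ := T.exists_div_eq_single_of_prime ha
  exact ⟨_, _, _, hb.away T hp₀ ha.ne_zero⟩

end Away

section Order

variable {C : Type*} [CommRing C]

/-- The order of `x` along the prime `p` at which `a` is a uniformizer, i.e. the multiplicity of
`a` in `x` in the local ring at `p`. The value at `x = 0` is junk. -/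
noncomputable def orderAt (p : PrimeSpectrum C) (a x : C) : ℕ :=
  multiplicity (algebraMap C (Localization.AtPrime p.asIdeal) a)
    (algebraMap C (Localization.AtPrime p.asIdeal) x)

/-- The prime ideals `Q k` form an irredundant decomposition of the radical ideal `(a)`. -/
structure IsPrimeDecomposition {κ : Type*} (a : C) (Q : κ → PrimeSpectrum C) : Prop where
  dvd_iff : ∀ {x}, a ∣ x ↔ ∀ k, x ∈ (Q k).asIdeal
  exists_notMem : ∀ k, ∃ w, w ∉ (Q k).asIdeal ∧ ∀ l, l ≠ k → w ∈ (Q l).asIdeal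

namespace IsPrimeDecomposition

variable {κ : Type*} {a : C} {Q : κ → PrimeSpectrum C} (hQ : IsPrimeDecomposition a Q) (k : κ)

include hQ

theorem exists_notMem_dvd_mul {x : C} (hx : x ∈ (Q k).asIdeal) :
    ∃ u ∉ (Q k).asIdeal, a ∣ u * x := by
  obtain ⟨w, hw, hwl⟩ := hQ.exists_notMem k
  refine ⟨w, hw, hQ.dvd_iff.2 fun l => ?_⟩
  obtain rfl | hl := eq_or_ne l k
  · exact Ideal.mul_mem_left _ _ hx
  · exact Ideal.mul_mem_right _ _ (hwl l hl)

theorem algebraMap_dvd_algebraMap_iff_mem {x : C} :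
    algebraMap C (Localization.AtPrime (Q k).asIdeal) a ∣ algebraMap C _ x ↔
      x ∈ (Q k).asIdeal := by
  rw [isLocalization_algebraMap_dvd_iff (Q k).asIdeal.primeCompl]
  constructor
  · rintro ⟨s, hs, h⟩
    exact ((Q k).isPrime.mem_or_mem (hQ.dvd_iff.1 h k)).resolve_left hs
  · exact hQ.exists_notMem_dvd_mul k

theorem orderAt_eq_zero_iff {x : C} : orderAt (Q k) a x = 0 ↔ x ∉ (Q k).asIdeal := by
  rw [← hQ.algebraMap_dvd_algebraMap_iff_mem k]
  exact multiplicity_eq_zero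

theorem span_algebraMap_eq_maximalIdeal :
    Ideal.span {algebraMap C (Localization.AtPrime (Q k).asIdeal) a} =
      IsLocalRing.maximalIdeal (Localization.AtPrime (Q k).asIdeal) := by
  rw [← Localization.AtPrime.map_eq_maximalIdeal]
  apply le_antisymm
  · rw [Ideal.span_singleton_le_iff_mem]
    exact Ideal.mem_map_of_mem _ (hQ.dvd_iff.1 dvd_rfl k)
  · refine Ideal.map_le_iff_le_comap.2 fun x hx => ?_
    rw [Ideal.mem_comap, Ideal.mem_span_singleton]
    exact (hQ.algebraMap_dvd_algebraMap_iff_mem k).2 hx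

variable [IsDomain C] (ha0 : a ≠ 0)

include ha0

theorem prime_algebraMap : Prime (algebraMap C (Localization.AtPrime (Q k).asIdeal) a) := by
  rw [← Ideal.span_singleton_prime, hQ.span_algebraMap_eq_maximalIdeal k]
  · infer_instance
  · simpa using ha0

variable [IsNoetherianRing C] {x y : C}

theorem finiteMultiplicity (hx : x ≠ 0) :
    FiniteMultiplicity (algebraMap C (Localization.AtPrime (Q k).asIdeal) a)
      (algebraMap C _ x) := by
  have : IsNoetherianRing (Localization.AtPrime (Q k).asIdeal) :=
    IsLocalization.isNoetherianRing (Q k).asIdeal.primeCompl _ inferInstance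
  exact .of_not_isUnit (hQ.prime_algebraMap k ha0).not_isUnit (by simpa using hx)

theorem orderAt_mul (hx : x ≠ 0) (hy : y ≠ 0) :
    orderAt (Q k) a (x * y) = orderAt (Q k) a x + orderAt (Q k) a y := by
  rw [orderAt, map_mul]
  refine multiplicity_mul (hQ.prime_algebraMap k ha0) ?_
  rw [← map_mul]
  exact hQ.finiteMultiplicity k ha0 (mul_ne_zero hx hy)

theorem orderAt_pow (hx : x ≠ 0) (m : ℕ) : orderAt (Q k) a (x ^ m) = m * orderAt (Q k) a x := by
  rw [orderAt, map_pow]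
  exact (hQ.finiteMultiplicity k ha0 hx).multiplicity_pow (hQ.prime_algebraMap k ha0)

theorem orderAt_pow_mul (hx : x ≠ 0) (m : ℕ) :
    orderAt (Q k) a (a ^ m * x) = m + orderAt (Q k) a x := by
  rw [hQ.orderAt_mul k ha0 (pow_ne_zero m ha0) hx, hQ.orderAt_pow k ha0 ha0, orderAt,
    multiplicity_self, mul_one]

theorem exists_mul_eq_pow_orderAt_mul (hx : x ≠ 0) :
    ∃ u y, u ≠ 0 ∧ y ≠ 0 ∧ orderAt (Q k) a y = 0 ∧ u * x = a ^ orderAt (Q k) a x * y := by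
  have hdvd := pow_multiplicity_dvd (algebraMap C (Localization.AtPrime (Q k).asIdeal) a)
    (algebraMap C _ x)
  rw [← map_pow, isLocalization_algebraMap_dvd_iff (Q k).asIdeal.primeCompl] at hdvd
  obtain ⟨u, hu, y, h⟩ := hdvd
  have hu0 : u ≠ 0 := by
    rintro rfl
    exact hu (Q k).asIdeal.zero_mem
  have hy0 : y ≠ 0 := right_ne_zero_of_mul (h ▸ mul_ne_zero hu0 hx)
  refine ⟨u, y, hu0, hy0, ?_, h⟩
  have horder := congrArg (orderAt (Q k) a) h
  rw [hQ.orderAt_mul k ha0 hu0 hx, (hQ.orderAt_eq_zero_iff k).2 hu,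
    ← orderAt, hQ.orderAt_pow_mul k ha0 hy0] at horder
  omega

omit k

theorem pow_dvd_iff {m : ℕ} (hx : x ≠ 0) : a ^ m ∣ x ↔ ∀ k, m ≤ orderAt (Q k) a x := by
  constructor
  · rintro ⟨y, rfl⟩ k
    rw [hQ.orderAt_pow_mul k ha0 (right_ne_zero_of_mul hx)]
    exact Nat.le_add_right _ _
  · intro h
    induction m generalizing x with
    | zero => simp
    | succ m ih =>
      obtain ⟨y, rfl⟩ : a ∣ x := hQ.dvd_iff.2 fun k => by
        by_contra hk
        have := h k
        rw [(hQ.orderAt_eq_zero_iff k).2 hk] at this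
        omega
      have hy := right_ne_zero_of_mul hx
      rw [pow_succ']
      refine mul_dvd_mul_left _ (ih hy fun k => ?_)
      have := hQ.orderAt_pow_mul k ha0 hy 1
      rw [pow_one] at this
      have := h k
      omega

theorem exists_orderAt_eq_and_le [Finite κ] (m : κ → ℕ) (k : κ) :
    ∃ w, w ≠ 0 ∧ orderAt (Q k) a w = m k ∧ ∀ l, m l ≤ orderAt (Q l) a w := by
  have := Fintype.ofFinite κ
  obtain ⟨w, hw, hwl⟩ := hQ.exists_notMem k
  have hw0 : w ≠ 0 := by
    rintro rfl
    exact hw (Q k).asIdeal.zero_mem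
  have hpow := pow_ne_zero (Finset.univ.sup m) hw0
  have horder : orderAt (Q k) a (a ^ m k * w ^ Finset.univ.sup m) = m k := by
    rw [hQ.orderAt_pow_mul k ha0 hpow, hQ.orderAt_pow k ha0 hw0,
      (hQ.orderAt_eq_zero_iff k).2 hw, mul_zero, add_zero]
  refine ⟨_, mul_ne_zero (pow_ne_zero (m k) ha0) hpow, horder, fun l => ?_⟩
  obtain rfl | hl := eq_or_ne l k
  · exact horder.ge
  · have hpos : orderAt (Q l) a w ≠ 0 := fun h =>
      (hQ.orderAt_eq_zero_iff l).1 h (hwl l hl)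
    rw [hQ.orderAt_pow_mul l ha0 hpow, hQ.orderAt_pow l ha0 hw0]
    calc m l ≤ Finset.univ.sup m := Finset.le_sup (Finset.mem_univ l)
      _ ≤ Finset.univ.sup m * orderAt (Q l) a w := Nat.le_mul_of_pos_right _ (by omega)
      _ ≤ _ := Nat.le_add_left _ _

end IsPrimeDecomposition

end Order

section Nagata

variable {C A : Type*} [CommRing C] [CommRing A] [Algebra C A] {a : C} {P : Type*}
  (T : DivisorTheory A P)

namespace DivisorTheory

section

variable [IsLocalization.Away a A]

include a in
theorem exists_div_algebraMap_eq {t : A} (ht : t ≠ 0) :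
    ∃ x : C, x ≠ 0 ∧ algebraMap C A x ≠ 0 ∧ T.div (algebraMap C A x) = T.div t := by
  obtain ⟨x, hx, h⟩ := exists_associated_algebraMap a ht
  exact ⟨x, hx, h.ne_zero_iff.1 ht, (T.div_eq_of_associated ht h).symm⟩

theorem div_algebraMap_pow_mul [IsDomain A] {x : C} (hx : algebraMap C A x ≠ 0) (m : ℕ) :
    T.div (algebraMap C A (a ^ m * x)) = T.div (algebraMap C A x) := by
  have ha := IsLocalization.Away.algebraMap_pow_isUnit (S := A) a m
  rw [map_mul, T.div_mul (by simpa using ha.ne_zero) hx, map_pow, T.div_eq_zero_of_isUnit ha,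
    zero_add]

end

variable {κ : Type*} [Finite κ] (Q : κ → PrimeSpectrum C)

variable (a) in
/-- The divisor on `C` made up of the orders along the primes `Q k`, which contain `a`, and of the
divisor on the localization away from `a`. -/
noncomputable def nagataDiv (x : C) : κ ⊕ P →₀ ℤ :=
  Finsupp.sumElim (Finsupp.equivFunOnFinite.symm fun k => (orderAt (Q k) a x : ℤ))
    (T.div (algebraMap C A x))

theorem nagataDiv_inl (x : C) (k : κ) : T.nagataDiv a Q x (.inl k) = orderAt (Q k) a x := rfl

theorem nagataDiv_inr (x : C) (p : P) :
    T.nagataDiv a Q x (.inr p) = T.div (algebraMap C A x) p := rfl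

end DivisorTheory

namespace IsPrimeDecomposition

variable [IsDomain C] [IsNoetherianRing C] [IsLocalization.Away a A] {κ : Type*}
  {Q : κ → PrimeSpectrum C} (hQ : IsPrimeDecomposition a Q) (ha0 : a ≠ 0)

include hQ ha0

variable (A) in
theorem dvd_iff_orderAt_le_and_algebraMap_dvd {x y : C} (hx : x ≠ 0) (hy : y ≠ 0) :
    x ∣ y ↔ (∀ k, orderAt (Q k) a x ≤ orderAt (Q k) a y) ∧
      algebraMap C A x ∣ algebraMap C A y := by
  constructor
  · refine fun h => ⟨fun k => ?_, map_dvd _ h⟩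
    obtain ⟨z, rfl⟩ := h
    rw [hQ.orderAt_mul k ha0 hx (right_ne_zero_of_mul hy)]
    exact Nat.le_add_right _ _
  · rintro ⟨hle, h⟩
    obtain ⟨N, z, h⟩ := (algebraMap_away_dvd_iff a).1 h
    have hz : z ≠ 0 := right_ne_zero_of_mul (h ▸ mul_ne_zero (pow_ne_zero N ha0) hy)
    obtain ⟨w, rfl⟩ := (hQ.pow_dvd_iff (m := N) ha0 hz).2 fun k => by
      have horder := congrArg (orderAt (Q k) a) h
      rw [hQ.orderAt_pow_mul k ha0 hy, hQ.orderAt_mul k ha0 hx hz] at horder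
      have := hle k
      omega
    exact ⟨w, mul_left_cancel₀ (pow_ne_zero N ha0) (by rw [h]; ring)⟩

variable [IsDomain A]

theorem exists_orderAt_eq_zero_and_div_le {x : C} (hx : x ≠ 0) (k : κ) :
    ∃ y, y ≠ 0 ∧ orderAt (Q k) a y = 0 ∧
      T.div (algebraMap C A x) ≤ T.div (algebraMap C A y) := by
  obtain ⟨u, y, hu, hy, hyk, h⟩ := hQ.exists_mul_eq_pow_orderAt_mul k ha0 hx
  have hux : T.div (algebraMap C A (u * x)) = T.div (algebraMap C A y) := by
    rw [h, T.div_algebraMap_pow_mul (algebraMap_away_ne_zero ha0 hy)]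
  refine ⟨y, hy, hyk, ?_⟩
  rw [← hux, map_mul, T.div_mul (algebraMap_away_ne_zero ha0 hu) (algebraMap_away_ne_zero ha0 hx)]
  exact le_add_of_nonneg_left (T.div_nonneg (algebraMap_away_ne_zero ha0 hu))

theorem exists_nagataDiv_inl_eq [Finite κ] {δ : κ ⊕ P →₀ ℤ} (hδ : 0 ≤ δ) (k : κ) :
    ∃ z, z ≠ 0 ∧ δ ≤ T.nagataDiv a Q z ∧ T.nagataDiv a Q z (.inl k) = δ (.inl k) := by
  have hδ0 (l : κ) : (((δ (.inl l)).toNat : ℕ) : ℤ) = δ (.inl l) := Int.toNat_of_nonneg (hδ _)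
  obtain ⟨t, ht, hδt⟩ := T.exists_le_div (Finsupp.sumFinsuppEquivProdFinsupp δ).2
  obtain ⟨x, hx, -, hxt⟩ := T.exists_div_algebraMap_eq (a := a) ht
  obtain ⟨y, hy, hyk, hxy⟩ := hQ.exists_orderAt_eq_zero_and_div_le T ha0 hx k
  obtain ⟨w, hw, hwk, hwl⟩ := hQ.exists_orderAt_eq_and_le ha0 (fun l => (δ (.inl l)).toNat) k
  refine ⟨w * y, mul_ne_zero hw hy, ?_, ?_⟩
  · rintro (l | p)
    · rw [DivisorTheory.nagataDiv_inl, hQ.orderAt_mul l ha0 hw hy, ← hδ0 l]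
      exact_mod_cast (hwl l).trans (Nat.le_add_right _ _)
    · have hw' := algebraMap_away_ne_zero (A := A) ha0 hw
      rw [DivisorTheory.nagataDiv_inr, map_mul,
        T.div_mul hw' (algebraMap_away_ne_zero ha0 hy)]
      exact ((hxt ▸ hδt).trans hxy |>.trans (le_add_of_nonneg_left (T.div_nonneg hw'))) p
  · rw [DivisorTheory.nagataDiv_inl, hQ.orderAt_mul k ha0 hw hy, hwk, hyk, add_zero]
    exact hδ0 k

theorem exists_nagataDiv_inr_eq [Finite κ] {δ : κ ⊕ P →₀ ℤ} (hδ : 0 ≤ δ) (p : P) :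
    ∃ z, z ≠ 0 ∧ δ ≤ T.nagataDiv a Q z ∧ T.nagataDiv a Q z (.inr p) = δ (.inr p) := by
  have := Fintype.ofFinite κ
  obtain ⟨t, ht, hδt, htp⟩ := T.exists_div_apply_eq
    (δ := (Finsupp.sumFinsuppEquivProdFinsupp δ).2) (fun q => hδ (.inr q)) p
  obtain ⟨x, hx, hx', hxt⟩ := T.exists_div_algebraMap_eq (a := a) ht
  let S := Finset.univ.sup fun l => (δ (.inl l)).toNat
  have hdiv := (T.div_algebraMap_pow_mul (a := a) hx' S).trans hxt
  refine ⟨a ^ S * x, mul_ne_zero (pow_ne_zero S ha0) hx, ?_, ?_⟩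
  · rintro (l | q)
    · have hl : (δ (.inl l)).toNat ≤ S :=
        Finset.le_sup (f := fun l => (δ (.inl l)).toNat) (Finset.mem_univ l)
      rw [DivisorTheory.nagataDiv_inl, hQ.orderAt_pow_mul l ha0 hx]
      omega
    · rw [DivisorTheory.nagataDiv_inr, hdiv]
      exact hδt q
  · rw [DivisorTheory.nagataDiv_inr, hdiv]
    exact htp

/-- The divisor theory on `C` obtained from one on the localization away from `a`, by adding the
primes `Q k` over `a`. -/
noncomputable def nagata [Finite κ] : DivisorTheory C (κ ⊕ P) where
  div := T.nagataDiv a Q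
  div_mul {x y} hx hy := by
    ext (k | p)
    · simp [DivisorTheory.nagataDiv_inl, hQ.orderAt_mul k ha0 hx hy]
    · simp [DivisorTheory.nagataDiv_inr, T.div_mul
        (algebraMap_away_ne_zero ha0 hx) (algebraMap_away_ne_zero ha0 hy)]
  dvd_iff {x y} hx hy := by
    rw [hQ.dvd_iff_orderAt_le_and_algebraMap_dvd A ha0 hx hy, T.dvd_iff
      (algebraMap_away_ne_zero ha0 hx) (algebraMap_away_ne_zero ha0 hy), Finsupp.le_def,
      Finsupp.le_def, Sum.forall]
    simp [DivisorTheory.nagataDiv_inl, DivisorTheory.nagataDiv_inr]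
  exists_div_apply_eq {_} hδ p := by
    cases p with
    | inl k => exact hQ.exists_nagataDiv_inl_eq T ha0 hδ k
    | inr p => exact hQ.exists_nagataDiv_inr_eq T ha0 hδ p

end IsPrimeDecomposition

theorem exists_associated_pow_mul [IsDomain C] [IsDomain A] [IsLocalization.Away a A]
    (ha0 : a ≠ 0)
    (hunit : ∀ u : C, IsUnit (algebraMap C A u) → ∃ k : ℕ, Associated u (a ^ k)) {x y : C}
    (h : Associated (algebraMap C A x) (algebraMap C A y)) :
    ∃ m n : ℕ, Associated (a ^ m * x) (a ^ n * y) := by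
  by_cases hy : y = 0
  · subst hy
    have hx : x = 0 := algebraMap_away_injective (A := A) ha0 (by simpa using h)
    exact ⟨0, 0, by simp [hx]⟩
  obtain ⟨m, z, hz⟩ := (algebraMap_away_dvd_iff a).1 h.symm.dvd
  have hassoc : Associated (algebraMap C A y * algebraMap C A z) (algebraMap C A y * 1) := by
    rw [← map_mul, ← hz, map_mul, map_pow, mul_one]
    exact (associated_unit_mul_left _ _ (IsLocalization.Away.algebraMap_pow_isUnit a m)).trans h
  obtain ⟨n, hn⟩ := hunit z <| associated_one_iff_isUnit.1 <|
    hassoc.of_mul_left .rfl (algebraMap_away_ne_zero ha0 hy)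
  exact ⟨m, n, by rw [hz, mul_comm]; exact hn.mul_right y⟩

/-- The divisors on `C` whose classes form a basis: those of the localization away from `a`, and
all but one of the primes over `a`. -/
noncomputable def nagataBasis {ι J P : Type*} (b : ι → P →₀ ℤ) : ι ⊕ J → (Option J ⊕ P →₀ ℤ) :=
  Sum.elim (fun i => Finsupp.sumElim 0 (b i)) fun j => Finsupp.single (.inl (some j)) 1

theorem sum_smul_nagataBasis {ι J P : Type*} [Fintype ι] [Fintype J] (b : ι → P →₀ ℤ)
    (m : ι ⊕ J → ℤ) :
    ∑ k, m k • nagataBasis b k = Finsupp.sumElim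
      (Finsupp.equivFunOnFinite.symm fun k : Option J => k.elim 0 fun j => m (.inr j))
      (∑ i, m (.inl i) • b i) := by
  classical
  ext ((_ | j) | p) <;>
    simp [nagataBasis, Finsupp.single_apply]

variable [IsDomain C] [IsNoetherianRing C] [IsDomain A] [IsLocalization.Away a A]

namespace DivisorTheory

variable {ι J : Type*} [Fintype ι] [Fintype J] {b : ι → P →₀ ℤ} {T}
  {Q : Option J → PrimeSpectrum C}

theorem IsClassBasis.exists_eq_nagata (hb : T.IsClassBasis b) (hQ : IsPrimeDecomposition a Q)
    (ha0 : a ≠ 0) (δ : Option J ⊕ P →₀ ℤ) :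
    ∃ (m : ι ⊕ J → ℤ) (x y : C), x ≠ 0 ∧ y ≠ 0 ∧
      δ = ∑ k, m k • nagataBasis b k + T.nagataDiv a Q x - T.nagataDiv a Q y := by
  obtain ⟨m, s, t, hs, ht, h⟩ := hb.exists_eq (Finsupp.sumFinsuppEquivProdFinsupp δ).2
  obtain ⟨x, hx, hx', hxs⟩ := T.exists_div_algebraMap_eq (a := a) hs
  obtain ⟨y, hy, hy', hyt⟩ := T.exists_div_algebraMap_eq (a := a) ht
  let e (k : Option J) : ℤ := δ (.inl k) - orderAt (Q k) a x + orderAt (Q k) a y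
  refine ⟨Sum.elim m fun j => e (some j) - e none, a ^ (e none).toNat * x,
    a ^ (-e none).toNat * y, mul_ne_zero (pow_ne_zero _ ha0) hx,
    mul_ne_zero (pow_ne_zero _ ha0) hy, ?_⟩
  rw [sum_smul_nagataBasis]
  ext (k | p)
  · rw [Finsupp.sub_apply, Finsupp.add_apply, nagataDiv_inl, nagataDiv_inl,
      hQ.orderAt_pow_mul k ha0 hx, hQ.orderAt_pow_mul k ha0 hy, Finsupp.sumElim_inl]
    cases k <;> simp [e] <;> omega
  · rw [Finsupp.sub_apply, Finsupp.add_apply, nagataDiv_inr, nagataDiv_inr,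
      T.div_algebraMap_pow_mul hx', T.div_algebraMap_pow_mul hy', hxs, hyt]
    exact DFunLike.congr_fun h p

theorem IsClassBasis.nagata (hb : T.IsClassBasis b) (hQ : IsPrimeDecomposition a Q) (ha0 : a ≠ 0)
    (hunit : ∀ u : C, IsUnit (algebraMap C A u) → ∃ k : ℕ, Associated u (a ^ k)) :
    (hQ.nagata T ha0).IsClassBasis (nagataBasis b) where
  exists_eq δ := hb.exists_eq_nagata hQ ha0 δ
  eq_zero {m x y} hx hy h := by
    rw [sum_smul_nagataBasis] at h
    change _ = T.nagataDiv a Q x - T.nagataDiv a Q y at h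
    have hx' := algebraMap_away_ne_zero (A := A) ha0 hx
    have hy' := algebraMap_away_ne_zero (A := A) ha0 hy
    have hinl : (fun i => m (.inl i)) = 0 :=
      hb.eq_zero hx' hy' (Finsupp.ext fun p => DFunLike.congr_fun h (.inr p))
    have hdiv : T.div (algebraMap C A x) = T.div (algebraMap C A y) := by
      rw [← sub_eq_zero]
      ext p
      simpa [nagataDiv_inr, congrFun hinl] using (DFunLike.congr_fun h (.inr p)).symm
    obtain ⟨r, s, hrs⟩ := exists_associated_pow_mul ha0 hunit (T.associated_of_div_eq hx' hy' hdiv)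
    have horder (k : Option J) : r + orderAt (Q k) a x = s + orderAt (Q k) a y := by
      rw [← hQ.orderAt_pow_mul k ha0 hx, ← hQ.orderAt_pow_mul k ha0 hy]
      exact multiplicity_eq_of_associated_right (hrs.map (algebraMap C _))
    have hinr (k : Option J) : (k.elim 0 fun j => m (.inr j)) =
        (orderAt (Q k) a x - orderAt (Q k) a y : ℤ) := DFunLike.congr_fun h (.inl k)
    ext (i | j)
    · exact congrFun hinl i
    · have hj : m (.inr j) = _ := hinr (some j)
      have hnone : (0 : ℤ) = _ := hinr none
      have := horder none
      have := horder (some j)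
      simp only [Pi.zero_apply]
      omega

end DivisorTheory

end Nagata

theorem exists_associated_pow_of_mul_pow {R : Type*} [CommRing R] [IsDomain R] {a u : R}
    (ha0 : a ≠ 0) {m n : ℕ} (h : Associated (a ^ m * u) (a ^ n)) :
    ∃ k : ℕ, Associated u (a ^ k) := by
  obtain ⟨k, rfl⟩ | ⟨k, rfl⟩ := (le_total m n).imp Nat.exists_eq_add_of_le Nat.exists_eq_add_of_le
  · rw [pow_add] at h
    exact ⟨k, h.of_mul_left .rfl (pow_ne_zero m ha0)⟩
  · rw [pow_add, mul_assoc, ← mul_one (a ^ n), mul_assoc, one_mul] at h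
    have hunit := associated_one_iff_isUnit.1 (h.of_mul_left .rfl (pow_ne_zero n ha0))
    exact ⟨0, by simpa using associated_one_iff_isUnit.2 (isUnit_of_mul_isUnit_right hunit)⟩

section Birational

variable {B E A : Type*} [CommRing B] [CommRing E] [CommRing A] [Algebra B E] [Algebra E A]
  [Algebra B A] [IsScalarTower B E A]

theorem isLocalization_away_of_pow_mul_mem_range [IsDomain E] {a : B}
    [IsLocalization.Away (algebraMap B E a) A] (hinj : Function.Injective (algebraMap B E))
    (ha0 : algebraMap B E a ≠ 0)
    (hpow : ∀ e : E, ∃ N : ℕ, algebraMap B E a ^ N * e ∈ (algebraMap B E).range) :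
    IsLocalization.Away a A := by
  have hunit : IsUnit (algebraMap B A a) := by
    rw [IsScalarTower.algebraMap_apply B E A]
    exact IsLocalization.Away.algebraMap_isUnit _
  refine (isLocalization_iff _ _).2 ⟨?_, fun z => ?_, fun {x y} hxy => ⟨1, ?_⟩⟩
  · rintro ⟨_, n, rfl⟩
    simpa using hunit.pow n
  · obtain ⟨m, e, hz⟩ := IsLocalization.Away.surj (algebraMap B E a) z
    obtain ⟨N, b, hb⟩ := hpow e
    refine ⟨(b, ⟨a ^ (m + N), m + N, rfl⟩), ?_⟩
    simp only [IsScalarTower.algebraMap_apply B E A, hb, map_mul, map_pow, ← hz, pow_add]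
    ring
  · obtain rfl : x = y := hinj (algebraMap_away_injective (A := A) ha0
      (by simpa only [← IsScalarTower.algebraMap_apply] using hxy))
    rfl

theorem exists_associated_pow_of_isUnit_algebraMap [IsDomain B] [IsDomain E] {a : B}
    [IsLocalization.Away a A] [IsLocalization.Away (algebraMap B E a) A] (ha : Prime a)
    (ha0 : algebraMap B E a ≠ 0) {u : E} (hu : IsUnit (algebraMap E A u)) :
    ∃ k : ℕ, Associated u (algebraMap B E a ^ k) := by
  obtain ⟨m, b, hb⟩ := IsLocalization.Away.surj a (algebraMap E A u)
  have hbunit : IsUnit (algebraMap B A b) :=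
    hb ▸ hu.mul (IsLocalization.Away.algebraMap_pow_isUnit a m)
  obtain ⟨r, hr⟩ := (IsLocalization.Away.algebraMap_isUnit_iff a).1 hbunit
  obtain ⟨n, -, hn⟩ := (dvd_prime_pow ha r).1 hr
  have heq : algebraMap B E a ^ m * u = algebraMap B E b := by
    apply algebraMap_away_injective (A := A) ha0
    rw [map_mul, map_pow, ← IsScalarTower.algebraMap_apply, ← IsScalarTower.algebraMap_apply, ← hb,
      mul_comm]
  refine exists_associated_pow_of_mul_pow ha0 (m := m) (n := n) ?_
  rw [heq, ← map_pow]
  exact hn.map (algebraMap B E)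

end Birational

theorem HasFreeDivisorClassGroup.nagata.{u} {B E : Type u} [CommRing B] [CommRing E] [IsDomain B]
    [IsDomain E] [IsNoetherianRing E] {f : B →+* E} (hf : Function.Injective f) {a : B}
    (ha : Prime a) (hpow : ∀ e : E, ∃ N : ℕ, f a ^ N * e ∈ f.range) {ι : Type*} [Fintype ι]
    {J : Type u} [Fintype J] {Q : Option J → PrimeSpectrum E} (hQ : IsPrimeDecomposition (f a) Q)
    (h : HasFreeDivisorClassGroup B ι) : HasFreeDivisorClassGroup E (ι ⊕ J) := by
  let A := Localization.Away (f a)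
  algebraize [f, (algebraMap E A).comp f]
  have ha0 : algebraMap B E a ≠ 0 := (map_ne_zero_iff _ hf).2 ha.ne_zero
  have : IsScalarTower B E A := .of_algebraMap_eq fun _ => rfl
  have : IsLocalization.Away (algebraMap B E a) A := inferInstanceAs (IsLocalization.Away (f a) A)
  have : IsLocalization.Away a A := isLocalization_away_of_pow_mul_mem_range hf ha0 hpow
  have : IsDomain A :=
    IsLocalization.isDomain_localization (powers_le_nonZeroDivisors_of_noZeroDivisors ha0)
  obtain ⟨P, T, b, hb⟩ := h.away (A := A) ha
  exact ⟨_, _, _, hb.nagata hQ ha0 fun _ => exists_associated_pow_of_isUnit_algebraMap ha ha0⟩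

section QuotientSwap

variable {R E T : Type*} [CommRing R] [CommRing E] [CommRing T] {π : R →+* E} {φ : R →+* T}
  {l g : R}

theorem map_dvd_map_iff_mem_span_pair (hπ : Function.Surjective π)
    (hker : RingHom.ker π = Ideal.span {l}) {h : R} : π g ∣ π h ↔ h ∈ Ideal.span {l, g} := by
  rw [Ideal.mem_span_pair]
  constructor
  · rintro ⟨e, he⟩
    obtain ⟨r, rfl⟩ := hπ e
    rw [← map_mul, ← sub_eq_zero, ← map_sub, ← RingHom.mem_ker, hker,
      Ideal.mem_span_singleton'] at he
    obtain ⟨t, ht⟩ := he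
    exact ⟨t, r, by linear_combination ht⟩
  · rintro ⟨t, r, rfl⟩
    have hl : π l = 0 := RingHom.mem_ker.1 (hker ▸ Ideal.mem_span_singleton_self l)
    exact ⟨π r, by rw [map_add, map_mul, map_mul, hl]; ring⟩

theorem map_dvd_map_iff_swap (hπ : Function.Surjective π) (hφ : Function.Surjective φ)
    (hkerπ : RingHom.ker π = Ideal.span {l}) (hkerφ : RingHom.ker φ = Ideal.span {g}) {h : R} :
    π g ∣ π h ↔ φ l ∣ φ h := by
  rw [map_dvd_map_iff_mem_span_pair hπ hkerπ, map_dvd_map_iff_mem_span_pair hφ hkerφ,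
    Set.pair_comm]

theorem IsPrimeDecomposition.swap {κ : Type*} {Q : κ → PrimeSpectrum T}
    (hπ : Function.Surjective π) (hφ : Function.Surjective φ)
    (hkerπ : RingHom.ker π = Ideal.span {l}) (hkerφ : RingHom.ker φ = Ideal.span {g})
    (hQ : IsPrimeDecomposition (φ l) Q) :
    ∃ Q' : κ → PrimeSpectrum E, IsPrimeDecomposition (π g) Q' := by
  have hle (k : κ) : RingHom.ker π ≤ (Q k).asIdeal.comap φ := by
    rw [hkerπ, Ideal.span_singleton_le_iff_mem]
    exact hQ.dvd_iff.1 dvd_rfl k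
  have hmem (k : κ) (r : R) :
      π r ∈ ((Q k).asIdeal.comap φ).map π ↔ φ r ∈ (Q k).asIdeal := by
    rw [← Ideal.mem_comap, Ideal.comap_map_of_surjective' _ hπ, sup_eq_left.2 (hle k),
      Ideal.mem_comap]
  refine ⟨fun k => ⟨_, Ideal.map_isPrime_of_surjective hπ (hle k)⟩, ⟨fun {x} => ?_, fun k => ?_⟩⟩
  · obtain ⟨r, rfl⟩ := hπ x
    simp only [hmem, map_dvd_map_iff_swap hπ hφ hkerπ hkerφ, hQ.dvd_iff]
  · obtain ⟨w, hw, hwl⟩ := hQ.exists_notMem k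
    obtain ⟨r, rfl⟩ := hφ w
    simp only [← hmem] at hw hwl
    exact ⟨π r, hw, hwl⟩

end QuotientSwap

section PrimeElement

variable {C : Type*} [CommRing C] {a : C}

theorem exists_isPrimeDecomposition_of_prime (κ : Type*) [Unique κ] (ha : Prime a) :
    ∃ Q : κ → PrimeSpectrum C, IsPrimeDecomposition a Q :=
  ⟨fun _ => ⟨Ideal.span {a}, (Ideal.span_singleton_prime ha.ne_zero).2 ha⟩,
    ⟨by simp [Ideal.mem_span_singleton], fun k => ⟨1, by
      simpa [Ideal.mem_span_singleton] using ha.not_dvd_one,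
      fun l hl => (hl (Subsingleton.elim _ _)).elim⟩⟩⟩

theorem IsPrimeDecomposition.prime {κ : Type*} [Unique κ] {Q : κ → PrimeSpectrum C}
    (hQ : IsPrimeDecomposition a Q) (ha0 : a ≠ 0) : Prime a := by
  have hspan : Ideal.span {a} = (Q default).asIdeal := by
    ext x
    rw [Ideal.mem_span_singleton, hQ.dvd_iff, Unique.forall_iff]
  exact (Ideal.span_singleton_prime ha0).1 (hspan ▸ (Q default).isPrime)

theorem exists_isPrimeDecomposition_option {P Q : Ideal C} (hP : P.IsPrime) (hQ : Q.IsPrime)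
    (hinf : P ⊓ Q = Ideal.span {a}) (hPQ : ¬ P ≤ Q) (hQP : ¬ Q ≤ P) :
    ∃ Q' : Option PUnit → PrimeSpectrum C, IsPrimeDecomposition a Q' := by
  obtain ⟨p, hpP, hpQ⟩ := SetLike.not_le_iff_exists.1 hPQ
  obtain ⟨q, hqQ, hqP⟩ := SetLike.not_le_iff_exists.1 hQP
  refine ⟨fun o => o.elim ⟨P, hP⟩ fun _ => ⟨Q, hQ⟩, ⟨fun {x} => ?_, ?_⟩⟩
  · rw [← Ideal.mem_span_singleton, ← hinf, Ideal.mem_inf]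
    simp [Option.forall]
  · simp only [Option.forall]
    exact ⟨⟨q, hqP, by simp, fun _ _ => hqQ⟩, fun _ => ⟨p, hpQ, fun _ => hpP, by simp⟩⟩

end PrimeElement

theorem prime_map_swap {R E T : Type*} [CommRing R] [CommRing E] [CommRing T] {π : R →+* E}
    {φ : R →+* T} {l g : R} (hπ : Function.Surjective π) (hφ : Function.Surjective φ)
    (hkerπ : RingHom.ker π = Ideal.span {l}) (hkerφ : RingHom.ker φ = Ideal.span {g})
    (hg : π g ≠ 0) (hl : Prime (φ l)) : Prime (π g) := by
  obtain ⟨Q, hQ⟩ := exists_isPrimeDecomposition_of_prime Unit hl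
  obtain ⟨Q', hQ'⟩ := hQ.swap hπ hφ hkerπ hkerφ
  exact hQ'.prime hg

section LinearForm

variable {τ S : Type*} [Fintype τ] [CommRing S]

/-- The linear form `∑ aⱼ Xⱼ` with coefficient vector `a`. -/
noncomputable def linearForm (a : τ → S) : MvPolynomial τ S :=
  ∑ j, C (a j) * X j

theorem map_linearForm {T : Type*} [CommRing T] (f : S →+* T) (a : τ → S) :
    map f (linearForm a) = linearForm (f ∘ a) := by
  simp only [linearForm, map_sum, map_mul, map_C, map_X, Function.comp_apply]

theorem linearForm_eq_add_rename (a : τ → S) (i : τ) [Fintype {j // j ≠ i}] :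
    linearForm a =
      C (a i) * X i + rename Subtype.val (linearForm fun j : {j // j ≠ i} => a j) := by
  classical
  simp only [linearForm, map_sum, map_mul, rename_C, rename_X]
  rw [← Finset.add_sum_erase _ _ (Finset.mem_univ i)]
  congr 1
  exact Finset.sum_subtype _ (by simp) fun j => (C (a j) * X j : MvPolynomial τ S)

theorem killCompl_linearForm (a : τ → S) (i : τ) [Fintype {j // j ≠ i}] :
    killCompl (Subtype.val_injective (p := (· ≠ i))) (linearForm a) =
      linearForm fun j : {j // j ≠ i} => a j := by
  rw [linearForm_eq_add_rename a i, map_add, killCompl_rename_app, map_mul]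
  simp [killCompl]

theorem coeff_single_linearForm_mul (a : τ → S) (i : τ) (t : MvPolynomial τ S) :
    coeff (Finsupp.single i 1) (linearForm a * t) = a i * coeff 0 t := by
  classical
  have hterm (j : τ) : coeff (Finsupp.single i 1) (C (a j) * X j * t) =
      if j = i then a i * coeff 0 t else 0 := by
    rw [mul_assoc, coeff_C_mul, coeff_X_mul']
    by_cases h : j = i <;> simp [h]
  simp [linearForm, Finset.sum_mul, coeff_sum, hterm]

theorem coeff_single_linearForm (a : τ → S) (i : τ) :
    coeff (Finsupp.single i 1) (linearForm a) = a i := by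
  simpa using coeff_single_linearForm_mul a i 1

theorem constantCoeff_linearForm (a : τ → S) : constantCoeff (linearForm a) = 0 := by
  simp [linearForm]

theorem exists_linearForm_dvd_sub_rename (a : τ → S) (i : τ) (h : MvPolynomial τ S) :
    ∃ (N : ℕ) (r : MvPolynomial {j // j ≠ i} S),
      linearForm a ∣ C (a i) ^ N * h - rename Subtype.val r := by
  classical
  induction h using MvPolynomial.induction_on with
  | C c => exact ⟨0, C c, by simp⟩
  | add p q hp hq =>
    obtain ⟨N, r, t, ht⟩ := hp
    obtain ⟨M, s, u, hu⟩ := hq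
    refine ⟨N + M, C (a i) ^ M * r + C (a i) ^ N * s, C (a i) ^ M * t + C (a i) ^ N * u, ?_⟩
    simp only [map_add, map_mul, map_pow, rename_C]
    linear_combination C (a i) ^ M * ht + C (a i) ^ N * hu
  | mul_X p j hp =>
    obtain ⟨N, r, t, ht⟩ := hp
    obtain rfl | hj := eq_or_ne j i
    · refine ⟨N + 1, -r * linearForm fun k : {k // k ≠ j} => a k,
        C (a j) * X j * t + rename Subtype.val r, ?_⟩
      rw [map_mul, map_neg]
      linear_combination C (a j) * X j * ht +
        -rename Subtype.val r * linearForm_eq_add_rename a j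
    · refine ⟨N, r * X ⟨j, hj⟩, X j * t, ?_⟩
      rw [map_mul, rename_X]
      linear_combination X j * ht

variable [IsDomain S]

theorem eq_zero_of_linearForm_dvd_rename {a : τ → S} {i : τ} (hai : a i ≠ 0)
    {r : MvPolynomial {j // j ≠ i} S} (h : linearForm a ∣ rename Subtype.val r) : r = 0 := by
  classical
  obtain ⟨t, ht⟩ := h
  by_contra hr
  have hr0 : rename Subtype.val r ≠ 0 :=
    (map_ne_zero_iff _ (rename_injective _ Subtype.val_injective)).2 hr
  have hl : 0 < degreeOf i (linearForm a) := by
    have hmem : Finsupp.single i 1 ∈ (linearForm a).support := by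
      rwa [mem_support_iff, coeff_single_linearForm]
    simpa [Nat.lt_iff_add_one_le] using monomial_le_degreeOf i hmem
  have hdeg : degreeOf i (rename Subtype.val r) = 0 := by
    by_contra hi
    rw [← Ne, ← mem_vars_iff_degreeOf_ne_zero] at hi
    obtain ⟨j, -, hj⟩ := mem_vars_rename _ _ hi
    exact j.2 hj
  rw [ht] at hr0
  rw [ht, degreeOf_mul_eq (left_ne_zero_of_mul hr0) (right_ne_zero_of_mul hr0)] at hdeg
  omega

theorem linearForm_dvd_pow_mul_or {a : τ → S} {i : τ} (hai : a i ≠ 0) {g h : MvPolynomial τ S}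
    (hgh : linearForm a ∣ g * h) :
    ∃ N : ℕ, linearForm a ∣ C (a i) ^ N * g ∨ linearForm a ∣ C (a i) ^ N * h := by
  obtain ⟨N, r, hr⟩ := exists_linearForm_dvd_sub_rename a i g
  obtain ⟨M, s, hs⟩ := exists_linearForm_dvd_sub_rename a i h
  have hrs : linearForm a ∣ rename Subtype.val (r * s) := by
    rw [map_mul]
    have := ((hgh.mul_left (C (a i) ^ (N + M))).sub (hr.mul_right (C (a i) ^ M * h))).sub
      (hs.mul_left (rename Subtype.val r))
    convert this using 1
    ring
  obtain rfl | rfl := mul_eq_zero.1 (eq_zero_of_linearForm_dvd_rename hai hrs)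
  · exact ⟨N, .inl (by simpa using hr)⟩
  · exact ⟨M, .inr (by simpa using hs)⟩

theorem prime_linearForm {a : τ → S} {i j : τ} (hi : Prime (a i)) (hij : ¬ a i ∣ a j) :
    Prime (linearForm a) := by
  have hC : Prime (C (a i) : MvPolynomial τ S) := (prime_C_iff τ).2 hi
  have hndvd : ¬ C (a i) ∣ linearForm a := fun h =>
    hij (coeff_single_linearForm a j ▸ (C_dvd_iff_dvd_coeff _ _).1 h _)
  have hcancel {N : ℕ} {h : MvPolynomial τ S} (hN : linearForm a ∣ C (a i) ^ N * h) :
      linearForm a ∣ h := by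
    obtain ⟨t, ht⟩ := hN
    obtain ⟨s, rfl⟩ := (hC.pow_dvd_of_dvd_mul_left N hndvd ⟨h, ht.symm⟩)
    exact ⟨s, mul_left_cancel₀ (pow_ne_zero N hC.ne_zero) (by rw [ht]; ring)⟩
  refine ⟨fun h => hndvd (h ▸ dvd_zero _), fun h => ?_, fun g h hgh => ?_⟩
  · simpa [constantCoeff_linearForm] using h.map (constantCoeff (σ := τ) (R := S))
  · obtain ⟨N, hN⟩ := linearForm_dvd_pow_mul_or hi.ne_zero hgh
    exact hN.imp hcancel hcancel

end LinearForm

section TwoByThreeMinors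

variable {T : Type*} [CommRing T] {a b u v z w : T}

/- The three elements `a z + b w`, `u a + v b` and `u w - v z` are the maximal minors of a
`2 × 3` matrix with rows `(u, z, -b)` and `(v, w, a)`. -/

theorem dvd_minor_mul_of_mem_span_pair (huv : u * a + v * b = 0) {s : T}
    (hs : s ∈ Ideal.span {a, b}) : a * z + b * w ∣ (u * w - v * z) * s := by
  obtain ⟨p, q, rfl⟩ := Ideal.mem_span_pair.1 hs
  exact ⟨q * u - p * v, by linear_combination (p * w - q * z) * huv⟩

theorem mul_mem_span_minors_iff [IsDomain T] (ha : a ≠ 0) (huv : u * a + v * b = 0)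
    (hprime : (Ideal.span {a, b}).IsPrime) (hminor : u * w - v * z ∉ Ideal.span {a, b})
    (hcolon : ∀ t, a ∣ b * w * t → t ∈ Ideal.span {a, v}) {h : T} :
    a * h ∈ Ideal.span {a * z + b * w, u * w - v * z} ↔
      h ∈ Ideal.span {a * z + b * w, u * w - v * z} := by
  refine ⟨fun hah => ?_, Ideal.mul_mem_left _ a⟩
  obtain ⟨t, s, hts⟩ := Ideal.mem_span_pair.1 hah
  have hs : s ∈ Ideal.span {a, b} := by
    refine (hprime.mem_or_mem (?_ : (u * w - v * z) * s ∈ _)).resolve_left hminor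
    exact Ideal.mem_span_pair.2 ⟨h - t * z, -(t * w), by linear_combination -hts⟩
  obtain ⟨r, hr⟩ := dvd_minor_mul_of_mem_span_pair (z := z) (w := w) huv hs
  have hdvd : a ∣ b * w * (t + r) :=
    ⟨h - z * (t + r), by linear_combination hts - hr⟩
  obtain ⟨p, q, hpq⟩ := Ideal.mem_span_pair.1 (hcolon _ hdvd)
  refine Ideal.mem_span_pair.2 ⟨p, -q, mul_left_cancel₀ ha ?_⟩
  linear_combination (a * z + b * w) * hpq - q * w * huv + hts - hr

end TwoByThreeMinors

section TwoTermLinearForm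

variable {D τ : Type*} [CommRing D]

theorem mem_span_C_pair_iff {a b : D} {p : MvPolynomial τ D} :
    p ∈ Ideal.span {C a, C b} ↔ ∀ m, coeff m p ∈ Ideal.span {a, b} := by
  rw [← mem_map_C_iff, Ideal.map_span, Set.image_pair]

theorem isPrime_span_C_pair {a b : D} (h : (Ideal.span {a, b}).IsPrime) :
    (Ideal.span {C a, C b} : Ideal (MvPolynomial τ D)).IsPrime := by
  have := RingHom.ker_isPrime (map (σ := τ) (Ideal.Quotient.mk (Ideal.span {a, b})))
  rwa [ker_map, Ideal.mk_ker, Ideal.map_span, Set.image_pair] at this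

theorem linearForm_eq_add [Fintype τ] {y : τ → D} {i j : τ} (hij : i ≠ j)
    (hy : ∀ k, k ≠ i → k ≠ j → y k = 0) :
    linearForm y = C (y i) * X i + C (y j) * X j :=
  Fintype.sum_eq_add i j hij fun k hk => by rw [hy k hk.1 hk.2, C_0, zero_mul]

theorem constantCoeff_eq_zero_of_mem_span_minors [Fintype τ] {y : τ → D} {i j : τ} {u v : D}
    {p : MvPolynomial τ D}
    (hp : p ∈ Ideal.span {linearForm y, C u * X j - C v * X i}) : constantCoeff p = 0 := by
  obtain ⟨s, t, rfl⟩ := Ideal.mem_span_pair.1 hp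
  simp [constantCoeff_linearForm]

/-- A relation `u a + v b = 0` with `u ∉ (a, b)` between generators of a prime ideal `(a, b)`
which accounts for the whole colon ideal `((a) : b) = (a, v)`. -/
structure IsPrimeSyzygy (a b u v : D) : Prop where
  ne_zero : a ≠ 0
  add_eq_zero : u * a + v * b = 0
  isPrime : (Ideal.span {a, b}).IsPrime
  notMem : u ∉ Ideal.span {a, b}
  mem_of_dvd_mul : ∀ {d}, a ∣ b * d → d ∈ Ideal.span {a, v}

namespace IsPrimeSyzygy

variable {y : τ → D} {i j : τ} {u v : D}

theorem minor_notMem (h : IsPrimeSyzygy (y i) (y j) u v) (hij : i ≠ j) :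
    (C u * X j - C v * X i : MvPolynomial τ D) ∉ Ideal.span {C (y i), C (y j)} := by
  classical
  intro hmem
  refine h.notMem ?_
  simpa [coeff_C_mul, coeff_X, Finsupp.single_left_inj, hij] using
    mem_span_C_pair_iff.1 hmem (Finsupp.single j 1)

theorem C_add_eq_zero (h : IsPrimeSyzygy (y i) (y j) u v) :
    (C u * C (y i) + C v * C (y j) : MvPolynomial τ D) = 0 := by
  rw [← C_mul, ← C_mul, ← C_add, h.add_eq_zero, C_0]

variable [Fintype τ]

variable (h : IsPrimeSyzygy (y i) (y j) u v) (hij : i ≠ j)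
  (hy : ∀ k, k ≠ i → k ≠ j → y k = 0)

include h hij hy

theorem linearForm_dvd_C_mul {p : MvPolynomial τ D}
    (hp : p ∈ Ideal.span {linearForm y, C u * X j - C v * X i}) :
    linearForm y ∣ C (y i) * p := by
  obtain ⟨s, t, rfl⟩ := Ideal.mem_span_pair.1 hp
  refine ⟨C (y i) * s - C v * t, ?_⟩
  linear_combination X j * t * h.C_add_eq_zero (τ := τ) + C v * t * linearForm_eq_add hij hy

theorem span_minors_inf_span_C_pair :
    Ideal.span {linearForm y, C u * X j - C v * X i} ⊓ Ideal.span {C (y i), C (y j)} =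
      Ideal.span {linearForm y} := by
  have hmem : linearForm y ∈ Ideal.span {C (y i), C (y j)} :=
    Ideal.mem_span_pair.2 ⟨X i, X j, by rw [linearForm_eq_add hij hy]; ring⟩
  apply le_antisymm
  · rintro p ⟨hp, hpC⟩
    obtain ⟨s, t, rfl⟩ := Ideal.mem_span_pair.1 hp
    rw [Ideal.mem_span_singleton]
    refine (dvd_mul_left _ _).add ?_
    have ht : t ∈ Ideal.span {C (y i), C (y j)} :=
      ((isPrime_span_C_pair h.isPrime).mem_or_mem
        ((Ideal.add_mem_iff_right _ (Ideal.mul_mem_left _ s hmem)).1 hpC)).resolve_right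
          (h.minor_notMem hij)
    rw [linearForm_eq_add hij hy, mul_comm t]
    exact dvd_minor_mul_of_mem_span_pair h.C_add_eq_zero ht
  · rw [Ideal.span_singleton_le_iff_mem]
    exact ⟨Ideal.subset_span (Set.mem_insert _ _), hmem⟩

variable [IsDomain D]

theorem C_mul_mem_span_minors_iff {p : MvPolynomial τ D} :
    C (y i) * p ∈ Ideal.span {linearForm y, C u * X j - C v * X i} ↔
      p ∈ Ideal.span {linearForm y, C u * X j - C v * X i} := by
  rw [linearForm_eq_add hij hy]
  refine mul_mem_span_minors_iff (mt C_eq_zero.1 h.ne_zero) h.C_add_eq_zero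
    (isPrime_span_C_pair h.isPrime) (h.minor_notMem hij) fun t ht =>
      mem_span_C_pair_iff.2 fun m => h.mem_of_dvd_mul ?_
  have hdvd := (C_dvd_iff_dvd_coeff _ _).1 ht (Finsupp.single j 1 + m)
  rwa [mul_assoc, coeff_C_mul, coeff_X_mul] at hdvd

theorem mem_span_minors_of_linearForm_dvd {p : MvPolynomial τ D} {N : ℕ}
    (hp : linearForm y ∣ C (y i) ^ N * p) :
    p ∈ Ideal.span {linearForm y, C u * X j - C v * X i} := by
  have hmem : C (y i) ^ N * p ∈ Ideal.span {linearForm y, C u * X j - C v * X i} :=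
    Ideal.mem_of_dvd _ hp (Ideal.mem_span_pair.2 ⟨1, 0, by ring⟩)
  clear hp
  induction N with
  | zero => simpa using hmem
  | succ N ih =>
    rw [pow_succ', mul_assoc, h.C_mul_mem_span_minors_iff hij hy] at hmem
    exact ih hmem

theorem isPrime_span_minors :
    (Ideal.span {linearForm y, C u * X j - C v * X i}).IsPrime := by
  refine ⟨fun htop => ?_, fun {p q} hpq => ?_⟩
  · simpa using constantCoeff_eq_zero_of_mem_span_minors ((Ideal.eq_top_iff_one _).1 htop)
  · have hdvd := h.linearForm_dvd_C_mul hij hy hpq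
    rw [← mul_assoc] at hdvd
    obtain ⟨N, hN | hN⟩ := linearForm_dvd_pow_mul_or h.ne_zero hdvd
    · rw [← mul_assoc, ← pow_succ] at hN
      exact .inl (h.mem_span_minors_of_linearForm_dvd hij hy hN)
    · exact .inr (h.mem_span_minors_of_linearForm_dvd hij hy hN)

theorem exists_isPrimeDecomposition_linearForm :
    ∃ Q : Option PUnit → PrimeSpectrum (MvPolynomial τ D),
      IsPrimeDecomposition (linearForm y) Q := by
  refine exists_isPrimeDecomposition_option (h.isPrime_span_minors hij hy)
    (isPrime_span_C_pair h.isPrime) (h.span_minors_inf_span_C_pair hij hy) ?_ ?_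
  · exact fun hle => h.minor_notMem hij (hle (Ideal.subset_span (by simp)))
  · intro hle
    have hC := constantCoeff_eq_zero_of_mem_span_minors
      (hle (Ideal.subset_span (Set.mem_insert _ _)))
    exact h.ne_zero (by simpa using hC)

end IsPrimeSyzygy

end TwoTermLinearForm

section KillCompl

variable {σ τ S : Type*} [CommRing S]

theorem ker_killCompl {f : σ → τ} (hf : Function.Injective f) :
    RingHom.ker (killCompl hf : MvPolynomial τ S →ₐ[S] MvPolynomial σ S) =
      Ideal.span (X '' (Set.range f)ᶜ) := by
  apply le_antisymm
  · set I : Ideal (MvPolynomial τ S) := Ideal.span (X '' (Set.range f)ᶜ)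
    have hmk : (Ideal.Quotient.mkₐ S I).comp ((rename f).comp (killCompl hf)) =
        Ideal.Quotient.mkₐ S I := by
      refine MvPolynomial.algHom_ext fun j => ?_
      by_cases hj : j ∈ Set.range f
      · obtain ⟨k, rfl⟩ := hj
        have hX : killCompl hf (X (f k) : MvPolynomial τ S) = X k := by
          rw [← rename_X f k, killCompl_rename_app]
        simp [hX]
      · have hX : X j ∈ I := Ideal.subset_span ⟨j, hj, rfl⟩
        simp [killCompl, hj, Ideal.Quotient.eq_zero_iff_mem.2 hX]
    intro p hp
    rw [← Ideal.Quotient.eq_zero_iff_mem]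
    have := congr($hmk p)
    simpa [RingHom.mem_ker.1 hp] using this.symm
  · rw [Ideal.span_le]
    rintro _ ⟨j, hj, rfl⟩
    have hj' : ¬ ∃ k, f k = j := hj
    simp [killCompl, hj']

theorem ker_killCompl_ne (i : τ) :
    RingHom.ker (killCompl Subtype.val_injective :
      MvPolynomial τ S →ₐ[S] MvPolynomial {j // j ≠ i} S) = Ideal.span {X i} := by
  rw [ker_killCompl]
  congr
  ext j
  simp

end KillCompl

/-- A family of pairwise non-associated prime elements. -/
structure IsPrimeFamily {τ B : Type*} [CommRing B] (y : τ → B) : Prop where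
  prime : ∀ i, Prime (y i)
  not_dvd : ∀ {i j}, i ≠ j → ¬ y i ∣ y j

/-- The homomorphism `π` presents `B` as the quotient of a polynomial ring by the linear form with
coefficients `x`. -/
structure IsLinearQuotient {τ S B : Type*} [Fintype τ] [CommRing S] [CommRing B]
    (π : MvPolynomial τ S →+* B) (x : τ → S) : Prop where
  surjective : Function.Surjective π
  ker_eq : RingHom.ker π = Ideal.span {linearForm x}

namespace IsLinearQuotient

variable {τ S B : Type*} [Fintype τ] [CommRing S] [CommRing B] {π : MvPolynomial τ S →+* B}
  {x : τ → S} (h : IsLinearQuotient π x)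

include h

theorem map_eq_zero_iff {p : MvPolynomial τ S} : π p = 0 ↔ linearForm x ∣ p := by
  rw [← RingHom.mem_ker, h.ker_eq, Ideal.mem_span_singleton]

theorem constantCoeff_eq_zero {p : MvPolynomial τ S} (hp : π p = 0) : constantCoeff p = 0 := by
  obtain ⟨q, rfl⟩ := h.map_eq_zero_iff.1 hp
  rw [map_mul, constantCoeff_linearForm, zero_mul]

theorem map_C_ne_zero {s : S} (hs : s ≠ 0) : π (C s) ≠ 0 := fun h0 =>
  hs (by simpa using h.constantCoeff_eq_zero h0)

theorem map_X_ne_zero {i : τ} (hi : ¬ IsUnit (x i)) : π (X i) ≠ 0 := by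
  intro h0
  obtain ⟨q, hq⟩ := h.map_eq_zero_iff.1 h0
  have hcoeff := congr(coeff (Finsupp.single i 1) $hq)
  rw [coeff_single_linearForm_mul, coeff_X_same] at hcoeff
  exact hi (IsUnit.of_mul_eq_one _ hcoeff.symm)

theorem not_map_X_dvd_map_X {i j : τ} (hij : i ≠ j) (hj : ¬ IsUnit (x j)) :
    ¬ π (X i) ∣ π (X j) := by
  classical
  rw [map_dvd_map_iff_mem_span_pair h.surjective h.ker_eq, Ideal.mem_span_pair]
  rintro ⟨p, q, hpq⟩
  have hcoeff := congr(coeff (Finsupp.single j 1) $hpq)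
  rw [coeff_add, mul_comm, coeff_single_linearForm_mul, coeff_X_same, coeff_mul_X'] at hcoeff
  exact hj (IsUnit.of_mul_eq_one _ (by simpa [hij] using hcoeff))

theorem isNoetherianRing [IsNoetherianRing S] : IsNoetherianRing B :=
  isNoetherianRing_of_surjective _ _ π h.surjective

variable [IsDomain S]

theorem isDomain (hx : IsPrimeFamily x) [Nontrivial τ] : IsDomain B := by
  obtain ⟨i, j, hij⟩ := exists_pair_ne τ
  have hl := prime_linearForm (hx.prime i) (hx.not_dvd hij)
  have : (RingHom.ker π).IsPrime := h.ker_eq ▸ (Ideal.span_singleton_prime hl.ne_zero).2 hl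
  exact (RingHom.quotientKerEquivOfSurjective h.surjective).symm.toMulEquiv.isDomain _

theorem prime_map_X (hx : IsPrimeFamily x) (i : τ) [Nontrivial {j // j ≠ i}] :
    Prime (π (X i)) := by
  classical
  obtain ⟨k, l, hkl⟩ := exists_pair_ne {j // j ≠ i}
  let φ : MvPolynomial τ S →ₐ[S] MvPolynomial {j // j ≠ i} S :=
    killCompl Subtype.val_injective
  refine prime_map_swap (φ := φ.toRingHom) h.surjective
    (fun p => ⟨_, killCompl_rename_app Subtype.val_injective p⟩) h.ker_eq (ker_killCompl_ne i)
    (h.map_X_ne_zero (hx.prime i).not_isUnit) ?_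
  change Prime (killCompl _ _)
  rw [killCompl_linearForm]
  exact prime_linearForm (hx.prime k) (hx.not_dvd (Subtype.coe_injective.ne hkl))

theorem isPrimeFamily (hx : IsPrimeFamily x) [∀ i, Nontrivial {j : τ // j ≠ i}] :
    IsPrimeFamily fun i => π (X i) where
  prime i := h.prime_map_X hx i
  not_dvd hij := h.not_map_X_dvd_map_X hij (hx.prime _).not_isUnit

theorem injective_comp_rename {i : τ} (hi : x i ≠ 0) :
    Function.Injective
      (π.comp (rename Subtype.val : MvPolynomial {j // j ≠ i} S →ₐ[S] _).toRingHom) :=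
  (injective_iff_map_eq_zero _).2 fun _ hr =>
    eq_zero_of_linearForm_dvd_rename hi (h.map_eq_zero_iff.1 hr)

omit [IsDomain S] in
theorem exists_pow_mul_eq_map_rename (i : τ) (e : B) :
    ∃ (N : ℕ) (r : MvPolynomial {j // j ≠ i} S),
      π (C (x i)) ^ N * e = π (rename Subtype.val r) := by
  obtain ⟨p, rfl⟩ := h.surjective e
  obtain ⟨N, r, hr⟩ := exists_linearForm_dvd_sub_rename x i p
  refine ⟨N, r, ?_⟩
  rw [← map_pow, ← map_mul, ← sub_eq_zero, ← map_sub]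
  exact h.map_eq_zero_iff.2 hr

end IsLinearQuotient

theorem HasFreeDivisorClassGroup.linearQuotient.{u} {τ S B : Type u} [Fintype τ] [CommRing S]
    [IsDomain S] [CommRing B] [IsDomain B] [IsNoetherianRing B] {π : MvPolynomial τ S →+* B}
    {x : τ → S} (hπ : IsLinearQuotient π x) {i : τ} (hi : Prime (x i)) {ι : Type*} [Fintype ι]
    {J : Type u} [Fintype J] {Q : Option J → PrimeSpectrum B}
    (hQ : IsPrimeDecomposition (π (C (x i))) Q)
    (h : HasFreeDivisorClassGroup (MvPolynomial {j // j ≠ i} S) ι) :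
    HasFreeDivisorClassGroup B (ι ⊕ J) := by
  refine .nagata (hπ.injective_comp_rename hi.ne_zero) ((prime_C_iff _).2 hi) (fun e => ?_)
    (Q := Q) ?_ h
  · obtain ⟨N, r, hr⟩ := hπ.exists_pow_mul_eq_map_rename i e
    exact ⟨N, r, by simpa using hr.symm⟩
  · simpa using hQ

section FirstEdge

namespace IsLinearQuotient

variable {τ S B : Type*} [Fintype τ] [CommRing S] [CommRing B] {π : MvPolynomial τ S →+* B}
  {x : τ → S} (h : IsLinearQuotient π x)

include h

theorem exists_isPrimeDecomposition_map_C {T : Type*} [CommRing T] {δ : S →+* T}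
    (hδ : Function.Surjective δ) {i : τ} (hker : RingHom.ker δ = Ideal.span {x i}) {κ : Type*}
    {Q : κ → PrimeSpectrum (MvPolynomial τ T)}
    (hQ : IsPrimeDecomposition (linearForm (δ ∘ x)) Q) :
    ∃ Q' : κ → PrimeSpectrum B, IsPrimeDecomposition (π (C (x i))) Q' := by
  rw [← map_linearForm] at hQ
  refine hQ.swap h.surjective (map_surjective δ hδ) h.ker_eq ?_
  rw [ker_map, hker, Ideal.map_span, Set.image_singleton]

theorem prime_map_C_of_mvPolynomial {R : Type*} [CommRing R] [IsDomain R]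
    {e : MvPolynomial τ R ≃+* S} (hx : ∀ j, e (X j) = x j) (i : τ) [Nontrivial {j // j ≠ i}] :
    Prime (π (C (x i))) := by
  obtain ⟨k, l, hkl⟩ := exists_pair_ne {j // j ≠ i}
  let δ : S →+* MvPolynomial {j // j ≠ i} R :=
    (killCompl Subtype.val_injective).toRingHom.comp e.symm.toRingHom
  have hδX (j : {j // j ≠ i}) : δ (x j) = X j := by
    change killCompl _ (e.symm (x j)) = X j
    rw [← hx, e.symm_apply_apply, ← rename_X Subtype.val, killCompl_rename_app]
  have hδ : Function.Surjective δ := fun p =>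
    ⟨e (rename Subtype.val p), by
      simp [δ, killCompl_rename_app]⟩
  have hker : RingHom.ker δ = Ideal.span {x i} := by
    ext s
    change killCompl _ (e.symm s) = 0 ↔ _
    rw [← RingHom.mem_ker, ker_killCompl_ne, Ideal.mem_span_singleton,
      Ideal.mem_span_singleton, ← hx, ← map_dvd_iff e, e.apply_symm_apply]
  have hl : Prime (linearForm (δ ∘ x)) := by
    refine prime_linearForm (i := k) (j := l) ?_ ?_
    · simpa only [Function.comp_apply, hδX] using X_prime
    · simpa only [Function.comp_apply, hδX, X_dvd_X] using hkl
  obtain ⟨Q, hQ⟩ := exists_isPrimeDecomposition_of_prime Unit hl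
  obtain ⟨Q', hQ'⟩ := h.exists_isPrimeDecomposition_map_C hδ hker hQ
  exact hQ'.prime (h.map_C_ne_zero (hx i ▸ (MulEquiv.prime_iff e).2 X_prime).ne_zero)

end IsLinearQuotient

end FirstEdge

section NextEdge

variable {R T : Type*} [CommRing R] [CommRing T]

theorem ker_constantCoeff {τ : Type*} :
    RingHom.ker (constantCoeff : MvPolynomial τ R →+* R) = Ideal.span (Set.range X) := by
  ext p
  rw [RingHom.mem_ker, ← Set.image_univ, mem_ideal_span_X_image, constantCoeff_eq,
    ← notMem_support_iff]
  refine ⟨fun h m hm => ?_, fun h h0 => ?_⟩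
  · simpa [Finsupp.ext_iff] using ne_of_mem_of_not_mem hm h
  · simpa using h 0 h0

variable {σ : MvPolynomial (Fin 3) R →+* T} {x : Fin 3 → R}
  (hker : RingHom.ker σ = Ideal.span {linearForm x, X 0})

include hker

theorem ker_le_ker_constantCoeff :
    RingHom.ker σ ≤ RingHom.ker (constantCoeff (R := R) (σ := Fin 3)) := by
  rw [hker, Ideal.span_le]
  rintro _ (rfl | rfl)
  exacts [constantCoeff_linearForm x, constantCoeff_X ..]

theorem span_pair_eq_map_ker_constantCoeff :
    Ideal.span {σ (X 1), σ (X 2)} =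
      (RingHom.ker (constantCoeff (R := R) (σ := Fin 3))).map σ := by
  have h0 : σ (X 0) = 0 := RingHom.mem_ker.1 (hker ▸ Ideal.subset_span (by simp))
  rw [ker_constantCoeff, Ideal.map_span, ← Set.range_comp]
  apply le_antisymm <;> rw [Ideal.span_le]
  · rintro _ (rfl | rfl)
    exacts [Ideal.subset_span ⟨1, rfl⟩, Ideal.subset_span ⟨2, rfl⟩]
  · rintro _ ⟨i, rfl⟩
    fin_cases i
    exacts [by simp [h0], Ideal.subset_span (by simp), Ideal.subset_span (by simp)]

variable (hσ : Function.Surjective σ)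

include hσ

theorem mem_span_pair_iff_constantCoeff {p : MvPolynomial (Fin 3) R} :
    σ p ∈ Ideal.span {σ (X 1), σ (X 2)} ↔ constantCoeff p = 0 := by
  rw [span_pair_eq_map_ker_constantCoeff hker, ← Ideal.mem_comap,
    Ideal.comap_map_of_surjective' _ hσ, sup_eq_left.2 (ker_le_ker_constantCoeff hker),
    RingHom.mem_ker]

variable [IsDomain R]

theorem isPrime_span_pair_of_ker_eq : (Ideal.span {σ (X 1), σ (X 2)}).IsPrime := by
  have := RingHom.ker_isPrime (constantCoeff (R := R) (σ := Fin 3))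
  rw [span_pair_eq_map_ker_constantCoeff hker]
  exact Ideal.map_isPrime_of_surjective hσ (ker_le_ker_constantCoeff hker)

theorem mem_span_pair_of_dvd_mul {d : T} (hd : σ (X 1) ∣ σ (X 2) * d) :
    d ∈ Ideal.span {σ (X 1), σ (C (x 2))} := by
  obtain ⟨t, ht⟩ := hd
  obtain ⟨p, rfl⟩ := hσ d
  obtain ⟨q, rfl⟩ := hσ t
  rw [← map_mul, ← map_mul, ← sub_eq_zero, ← map_sub, ← RingHom.mem_ker, hker,
    Ideal.mem_span_pair] at ht
  obtain ⟨r, s, hrs⟩ := ht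
  let κ : MvPolynomial (Fin 3) R →ₐ[R] MvPolynomial {i : Fin 3 // i = 2} R :=
    killCompl Subtype.val_injective
  have hκ0 : κ (X 0) = 0 := by simp [κ, killCompl]
  have hκ1 : κ (X 1) = 0 := by simp [κ, killCompl]
  have hκ2 : κ (X 2) ≠ 0 := by simp [κ, killCompl]
  have hκ : p - r * C (x 2) ∈ RingHom.ker κ := by
    refine (mul_eq_zero.1 ?_).resolve_left hκ2
    rw [← map_mul]
    have := congr(κ $hrs)
    simp only [linearForm, Fin.sum_univ_three, map_add, map_sub, map_mul, hκ0, hκ1] at this ⊢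
    linear_combination -this
  have hle : RingHom.ker κ ≤ (Ideal.span {σ (X 1), σ (C (x 2))}).comap σ := by
    rw [ker_killCompl, Ideal.span_le]
    rintro _ ⟨i, hi, rfl⟩
    have h0 : σ (X 0) = 0 := RingHom.mem_ker.1 (hker ▸ Ideal.subset_span (by simp))
    fin_cases i
    exacts [by simp [h0], Ideal.subset_span (by simp), by simp at hi]
  rw [← sub_add_cancel p (r * C (x 2)), map_add, map_mul]
  exact add_mem (hle hκ) (Ideal.mul_mem_left _ _ (Ideal.subset_span (by simp)))

theorem isPrimeSyzygy_of_ker_eq (h1 : σ (X 1) ≠ 0) (hx : x 1 ≠ 0) :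
    IsPrimeSyzygy (σ (X 1)) (σ (X 2)) (σ (C (x 1))) (σ (C (x 2))) where
  ne_zero := h1
  add_eq_zero := by
    rw [← map_mul, ← map_mul, ← map_add, ← RingHom.mem_ker, hker, Ideal.mem_span_pair]
    exact ⟨1, -C (x 0), by rw [linearForm, Fin.sum_univ_three]; ring⟩
  isPrime := isPrime_span_pair_of_ker_eq hker hσ
  notMem hmem :=
    hx (by simpa using (mem_span_pair_iff_constantCoeff hker hσ).1 hmem)
  mem_of_dvd_mul := mem_span_pair_of_dvd_mul hker hσ

end NextEdge

/-- The two primes over `y₀` are cut out, modulo `y₀`, by `(y₁, y₂)` and by the `2 × 2` minor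
`x₁ X₂ - x₂ X₁`. -/
theorem IsLinearQuotient.exists_isPrimeDecomposition_option {R D B : Type*} [CommRing R]
    [CommRing D] [CommRing B] [IsDomain R] {ρ : MvPolynomial (Fin 3) R →+* D} {x : Fin 3 → R}
    {π : MvPolynomial (Fin 3) D →+* B} {y : Fin 3 → D} (hρ : IsLinearQuotient ρ x)
    (hρX : ∀ i, ρ (X i) = y i) (hπ : IsLinearQuotient π y) (hx : x 1 ≠ 0)
    (hy : IsPrimeFamily y) :
    ∃ Q : Option PUnit → PrimeSpectrum B, IsPrimeDecomposition (π (C (y 0))) Q := by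
  let δ := Ideal.Quotient.mk (Ideal.span {y 0})
  have hδ (d : D) : δ d = 0 ↔ y 0 ∣ d := by
    rw [Ideal.Quotient.eq_zero_iff_mem, Ideal.mem_span_singleton]
  have hker : RingHom.ker (δ.comp ρ) = Ideal.span {linearForm x, X 0} := by
    ext p
    rw [RingHom.mem_ker, RingHom.comp_apply, hδ, ← hρX,
      map_dvd_map_iff_mem_span_pair hρ.surjective hρ.ker_eq]
  have hsurj : Function.Surjective (δ.comp ρ) :=
    Ideal.Quotient.mk_surjective.comp hρ.surjective
  have hδy (i : Fin 3) : (δ.comp ρ) (X i) = (δ ∘ y) i := congr(δ $(hρX i))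
  have : (Ideal.span {y 0}).IsPrime :=
    (Ideal.span_singleton_prime (hy.prime 0).ne_zero).2 (hy.prime 0)
  have hsyz := isPrimeSyzygy_of_ker_eq hker hsurj
    (by rw [hδy]; exact mt (hδ _).1 (hy.not_dvd (by decide))) hx
  rw [hδy, hδy] at hsyz
  obtain ⟨Q, hQ⟩ := hsyz.exists_isPrimeDecomposition_linearForm (by decide) fun k h1 h2 => by
    obtain rfl : k = 0 := by omega
    exact (hδ _).2 dvd_rfl
  exact hπ.exists_isPrimeDecomposition_map_C Ideal.Quotient.mk_surjective Ideal.mk_ker hQ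

/-- The pair `(B, y)` of a ring and a vector in `B ^ 3` arises from a Noetherian unique
factorization domain by `n` times adjoining a vector orthogonal to the previous one, where the
first vector is free: with the convention that `y = 0` for `n = 0`, its orthogonality relation is
vacuous. -/
def IsPathRing : ℕ → ∀ (B : Type) [CommRing B], (Fin 3 → B) → Prop
  | 0, B, _, y => IsNoetherianRing B ∧ (∃ _ : IsDomain B, UniqueFactorizationMonoid B) ∧ y = 0
  | n + 1, B, _, y => ∃ (S : Type) (_ : CommRing S) (x : Fin 3 → S), IsPathRing n S x ∧
      ∃ π : MvPolynomial (Fin 3) S →+* B, IsLinearQuotient π x ∧ ∀ i, π (X i) = y i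

instance nontrivial_fin_three_ne (i : Fin 3) : Nontrivial {j // j ≠ i} := by
  rw [← Fintype.one_lt_card_iff_nontrivial]
  fin_cases i <;> decide

section PolynomialExtension

theorem IsLinearQuotient.bijective {τ S B : Type*} [Fintype τ] [CommRing S] [CommRing B]
    {π : MvPolynomial τ S →+* B} (h : IsLinearQuotient π 0) : Function.Bijective π := by
  refine ⟨(RingHom.injective_iff_ker_eq_bot π).2 ?_, h.surjective⟩
  simp [h.ker_eq, linearForm]

theorem IsLinearQuotient.mvPolynomial {τ S B : Type*} [Fintype τ] [CommRing S] [CommRing B]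
    {π : MvPolynomial τ S →+* B} {x : τ → S} (h : IsLinearQuotient π x) (σ : Type*) :
    IsLinearQuotient ((map π).comp (commAlgEquiv S τ σ).toRingEquiv.toRingHom)
      fun j => (C (x j) : MvPolynomial σ S) where
  surjective := (map_surjective π h.surjective).comp (commAlgEquiv S τ σ).surjective
  ker_eq := by
    have he : commAlgEquiv S τ σ (linearForm fun j => C (x j)) = C (linearForm x) := by
      simp [linearForm]
    ext p
    change map π (commAlgEquiv S τ σ p) = 0 ↔ _
    rw [← RingHom.mem_ker, ker_map, h.ker_eq, Ideal.map_span, Set.image_singleton,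
      Ideal.mem_span_singleton, Ideal.mem_span_singleton, ← he]
    exact map_dvd_iff (commAlgEquiv S τ σ)

end PolynomialExtension

namespace IsPathRing

variable {B : Type} [CommRing B] {y : Fin 3 → B} {n : ℕ}

theorem isNoetherianRing (h : IsPathRing n B y) : IsNoetherianRing B := by
  induction n generalizing B with
  | zero => exact h.1
  | succ n ih =>
    obtain ⟨S, _, x, hS, π, hπ, -⟩ := h
    have := ih hS
    exact hπ.isNoetherianRing

theorem mvPolynomial (h : IsPathRing n B y) (σ : Type) [Finite σ] :
    IsPathRing n (MvPolynomial σ B) fun i => C (y i) := by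
  induction n generalizing B with
  | zero =>
    obtain ⟨_, ⟨_, _⟩, rfl⟩ := h
    exact ⟨inferInstance, ⟨inferInstance, inferInstance⟩, by ext; simp⟩
  | succ n ih =>
    obtain ⟨S, _, x, hS, π, hπ, hy⟩ := h
    exact ⟨_, _, _, ih hS, _, hπ.mvPolynomial σ, fun i => by simp [hy]⟩

theorem exists_mvPolynomial_ringEquiv (h : IsPathRing 1 B y) :
    ∃ (R : Type) (_ : CommRing R) (_ : IsDomain R) (_ : UniqueFactorizationMonoid R)
      (e : MvPolynomial (Fin 3) R ≃+* B), ∀ i, e (X i) = y i := by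
  obtain ⟨R, _, _, ⟨-, ⟨_, _⟩, rfl⟩, π, hπ, hy⟩ := h
  exact ⟨R, _, inferInstance, inferInstance, .ofBijective π hπ.bijective, hy⟩

theorem uniqueFactorizationMonoid (h : IsPathRing 1 B y) :
    ∃ _ : IsDomain B, UniqueFactorizationMonoid B := by
  obtain ⟨R, _, _, _, e, -⟩ := h.exists_mvPolynomial_ringEquiv
  exact ⟨e.symm.toMulEquiv.isDomain _, e.toMulEquiv.uniqueFactorizationMonoid inferInstance⟩

theorem isDomain_and_isPrimeFamily (h : IsPathRing (n + 1) B y) :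
    IsDomain B ∧ IsPrimeFamily y := by
  induction n generalizing B with
  | zero =>
    obtain ⟨R, _, _, _, e, he⟩ := h.exists_mvPolynomial_ringEquiv
    obtain ⟨_, _⟩ := h.uniqueFactorizationMonoid
    obtain rfl : y = fun i => e (X i) := funext fun i => (he i).symm
    exact ⟨inferInstance, ⟨fun i => (MulEquiv.prime_iff e).2 X_prime, fun hij => by
      rwa [map_dvd_iff e, X_dvd_X]⟩⟩
  | succ n ih =>
    obtain ⟨S, _, x, hS, π, hπ, hy⟩ := h
    obtain ⟨_, hx⟩ := ih hS
    obtain rfl : y = fun i => π (X i) := funext fun i => (hy i).symm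
    exact ⟨hπ.isDomain hx, hπ.isPrimeFamily hx⟩

theorem hasFreeDivisorClassGroup (h : IsPathRing (n + 2) B y) :
    HasFreeDivisorClassGroup B (Fin n) := by
  induction n generalizing B with
  | zero =>
    have := h.isNoetherianRing
    obtain ⟨_, -⟩ := h.isDomain_and_isPrimeFamily
    obtain ⟨D, _, x, hD, π, hπ, -⟩ := h
    obtain ⟨_, hx⟩ := hD.isDomain_and_isPrimeFamily
    have := hD.isNoetherianRing
    obtain ⟨_, _⟩ := hD.uniqueFactorizationMonoid
    obtain ⟨R, _, _, _, e, he⟩ := hD.exists_mvPolynomial_ringEquiv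
    obtain ⟨Q, hQ⟩ := exists_isPrimeDecomposition_of_prime (Option PEmpty)
      (hπ.prime_map_C_of_mvPolynomial he 0)
    exact (HasFreeDivisorClassGroup.linearQuotient hπ (hx.prime 0) hQ
      (.of_uniqueFactorization (Fin 0))).reindex (Equiv.sumEmpty _ _)
  | succ n ih =>
    have := h.isNoetherianRing
    obtain ⟨_, -⟩ := h.isDomain_and_isPrimeFamily
    obtain ⟨D, _, x, hD, π, hπ, -⟩ := h
    obtain ⟨_, hx⟩ := hD.isDomain_and_isPrimeFamily
    have hfree := ih (hD.mvPolynomial {j : Fin 3 // j ≠ 0})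
    obtain ⟨S, _, z, hS, ρ, hρ, hρx⟩ := hD
    obtain ⟨_, hz⟩ := hS.isDomain_and_isPrimeFamily
    obtain ⟨Q, hQ⟩ := hρ.exists_isPrimeDecomposition_option hρx hπ (hz.prime 1).ne_zero hx
    exact (HasFreeDivisorClassGroup.linearQuotient hπ (hx.prime 0) hQ hfree).reindex
      ((Equiv.sumCongr (Equiv.refl _) finOneEquiv.symm).trans finSumFinEquiv)

end IsPathRing

theorem exists_isLinearQuotient_quotient {τ R B : Type*} [Fintype τ] [CommRing R] [CommRing B]
    {I : Ideal R} {x : τ → R} {f : MvPolynomial τ R →+* B} (hf : Function.Surjective f)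
    (hker : RingHom.ker f = I.map C ⊔ Ideal.span {linearForm x}) :
    ∃ π : MvPolynomial τ (R ⧸ I) →+* B, π.comp (map (Ideal.Quotient.mk I)) = f ∧
      IsLinearQuotient π (Ideal.Quotient.mk I ∘ x) := by
  let q : MvPolynomial τ R →+* MvPolynomial τ (R ⧸ I) := map (Ideal.Quotient.mk I)
  have hq : Function.Surjective q := map_surjective _ Ideal.Quotient.mk_surjective
  have hkerq : RingHom.ker q = I.map C := by rw [ker_map, Ideal.mk_ker]
  let π := q.liftOfSurjective hq ⟨f, by rw [hkerq, hker]; exact le_sup_left⟩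
  have hπ : π.comp q = f := q.liftOfRightInverse_comp ..
  refine ⟨π, hπ, .of_comp (g := q) (by rwa [← RingHom.coe_comp, hπ]), ?_⟩
  rw [← Ideal.map_comap_of_surjective q hq (RingHom.ker π), RingHom.comap_ker, hπ, hker,
    Ideal.map_sup, ← hkerq, Ideal.map_span, Set.image_singleton, map_linearForm,
    (Ideal.map_eq_bot_iff_le_ker q).2 le_rfl, bot_sup_eq]

section Path

variable (K : Type) [Field K] (n : ℕ)

/-- The polynomial ring in the coordinates of `n + 1` vertices, as a polynomial ring in the
coordinates of the last vertex. -/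
noncomputable def lastVertexEquiv :
    MvPolynomial (Fin 3) (MvPolynomial (Fin n × Fin 3) K) ≃+*
      MvPolynomial (Fin (n + 1) × Fin 3) K :=
  (sumRingEquiv K (Fin 3) (Fin n × Fin 3)).symm.trans (renameEquiv K
    (optionProdEquiv.symm.trans (finSuccEquivLast.symm.prodCongr (.refl _)))).toRingEquiv

variable {n}

theorem lastVertexEquiv_C_X (i : Fin n) (c : Fin 3) :
    lastVertexEquiv K n (C (X (i, c))) = X (i.castSucc, c) := by
  simp [lastVertexEquiv, sumRingEquiv_symm_C_X]

theorem lastVertexEquiv_X (c : Fin 3) :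
    lastVertexEquiv K n (X c) = yvar K (n + 1) (n + 1) (c + 1) := by
  rw [yvar, dif_pos (by omega)]
  simp [lastVertexEquiv, sumRingEquiv_symm_X, Fin.last]

theorem lastVertexEquiv_C_yvar {i : ℕ} (hi : i ≤ n) (c : ℕ) :
    lastVertexEquiv K n (C (yvar K n i c)) = yvar K (n + 1) i c := by
  by_cases h : 1 ≤ i ∧ i ≤ n ∧ 1 ≤ c ∧ c ≤ 3
  · rw [yvar, yvar, dif_pos h, dif_pos (by omega), lastVertexEquiv_C_X]
    rfl
  · rw [yvar, yvar, dif_neg h, dif_neg (by omega), C_0, map_zero]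

theorem lastVertexEquiv_C_pathGen {a : ℕ} (ha : a + 1 ≤ n) :
    lastVertexEquiv K n (C (pathGen K n a)) = pathGen K (n + 1) a := by
  simp only [pathGen, map_sum, map_mul]
  refine Finset.sum_congr rfl fun k _ => ?_
  rw [lastVertexEquiv_C_yvar K (by omega), lastVertexEquiv_C_yvar K ha]

theorem lastVertexEquiv_linearForm :
    lastVertexEquiv K n (linearForm fun c => yvar K n n (c + 1)) = pathGen K (n + 1) n := by
  simp only [linearForm, pathGen, map_sum, map_mul, lastVertexEquiv_C_yvar K le_rfl,
    lastVertexEquiv_X]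

theorem map_lastVertexEquiv_pathLSS :
    ((pathLSS K n).map C ⊔ Ideal.span {linearForm fun c : Fin 3 => yvar K n n (c + 1)}).map
      (lastVertexEquiv K n).toRingHom = pathLSS K (n + 1) := by
  have hmem {a : ℕ} (h1 : 1 ≤ a) (ha : a ≤ n) : pathGen K (n + 1) a ∈ pathLSS K (n + 1) :=
    Ideal.subset_span ⟨a, h1, by omega, rfl⟩
  rw [Ideal.map_sup, Ideal.map_map, Ideal.map_span, Set.image_singleton]
  apply le_antisymm
  · rw [sup_le_iff, Ideal.span_singleton_le_iff_mem, pathLSS, Ideal.map_span, Ideal.span_le]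
    refine ⟨?_, ?_⟩
    · rintro _ ⟨_, ⟨a, h1, ha, rfl⟩, rfl⟩
      exact (lastVertexEquiv_C_pathGen K ha).symm ▸ hmem h1 (by omega)
    · change lastVertexEquiv K n (linearForm _) ∈ _
      rw [lastVertexEquiv_linearForm]
      obtain rfl | hn := n.eq_zero_or_pos
      · simp [pathGen, yvar]
      · exact hmem hn le_rfl
  · rw [pathLSS, Ideal.span_le]
    rintro _ ⟨a, h1, ha, rfl⟩
    obtain han | rfl := (Nat.le_of_succ_le_succ ha).lt_or_eq
    · rw [← lastVertexEquiv_C_pathGen K han]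
      exact Ideal.mem_sup_left (Ideal.mem_map_of_mem
        ((lastVertexEquiv K n).toRingHom.comp C) (Ideal.subset_span ⟨a, h1, han, rfl⟩))
    · rw [← lastVertexEquiv_linearForm]
      exact Ideal.mem_sup_right (Ideal.mem_span_singleton_self _)

variable (n)

theorem isPathRing_pathLSS :
    IsPathRing n (MvPolynomial (Fin n × Fin 3) K ⧸ pathLSS K n)
      fun c => Ideal.Quotient.mk _ (yvar K n n (c + 1)) := by
  induction n with
  | zero =>
    have hbot : pathLSS K 0 = ⊥ := Ideal.span_eq_bot.2 fun _ ⟨_, _, ha, _⟩ => by omega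
    let e : (MvPolynomial (Fin 0 × Fin 3) K ⧸ pathLSS K 0) ≃+* MvPolynomial (Fin 0 × Fin 3) K :=
      (Ideal.quotEquivOfEq hbot).trans (RingEquiv.quotientBot _)
    refine ⟨inferInstance, ⟨e.toMulEquiv.isDomain _,
      e.symm.toMulEquiv.uniqueFactorizationMonoid inferInstance⟩, ?_⟩
    ext c
    simp [yvar]
  | succ n ih =>
    let f := (Ideal.Quotient.mk (pathLSS K (n + 1))).comp (lastVertexEquiv K n).toRingHom
    have hf : Function.Surjective f :=
      Ideal.Quotient.mk_surjective.comp (lastVertexEquiv K n).surjective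
    have hker : RingHom.ker f = (pathLSS K n).map C ⊔
        Ideal.span {linearForm fun c : Fin 3 => yvar K n n (c + 1)} := by
      rw [← RingHom.comap_ker, Ideal.mk_ker, ← map_lastVertexEquiv_pathLSS]
      exact Ideal.comap_map_of_bijective _ (lastVertexEquiv K n).bijective
    obtain ⟨π, hπf, hπ⟩ := exists_isLinearQuotient_quotient hf hker
    refine ⟨_, _, _, ih, π, hπ, fun c => ?_⟩
    change _ = Ideal.Quotient.mk _ (yvar K (n + 1) (n + 1) (c + 1))
    rw [← lastVertexEquiv_X, ← map_X (Ideal.Quotient.mk (pathLSS K n))]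
    exact congr($hπf (X c))

end Path

/-- For the `n`-path graph `G` with `n ≥ 3` and `d = 3`, the LSS ring `R_G(3)` is a
normal Noetherian domain whose divisor class group is isomorphic to `ℤ^{n-2}`. -/
theorem lss_path_classGroup (K : Type) [Field K] (n : ℕ) (hn : 3 ≤ n) :
    ∃ _ : IsDomain (MvPolynomial (Fin n × Fin 3) K ⧸ pathLSS K n),
      IsIntegrallyClosed (MvPolynomial (Fin n × Fin 3) K ⧸ pathLSS K n) ∧
      IsNoetherianRing (MvPolynomial (Fin n × Fin 3) K ⧸ pathLSS K n) ∧
      DivisorClassGroupIsFreeOfRank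
        (MvPolynomial (Fin n × Fin 3) K ⧸ pathLSS K n)
        (FractionRing (MvPolynomial (Fin n × Fin 3) K ⧸ pathLSS K n)) (n - 2) := by
  obtain ⟨m, rfl⟩ : ∃ m, n = m + 2 := ⟨n - 2, by lia⟩
  have hpath := isPathRing_pathLSS K (m + 2)
  obtain ⟨hdomain, -⟩ := hpath.isDomain_and_isPrimeFamily
  have hfree := hpath.hasFreeDivisorClassGroup
  exact ⟨hdomain, hfree.isIntegrallyClosed, inferInstance, hfree.divisorClassGroupIsFreeOfRank _⟩
end

section
/- Let G = ([n], E) be a simple graph whose vertex n has degree t with neighbors 1, …, t, let G' = G ∖ {n}, and let D = det(A) where A is the t×t matrix (y_{ij}) with 1 ≤ i ≤ t and d−t+1 ≤ j ≤ d. Assume that L_G(d) is a complete intersection (for instance d ≥ pmd(G)). Then, writing x_j = y_{nj}, the images of x_1, …, x_{d−t} in R_G(d) are algebraically independent over R_{G'}(d), and the localizations satisfy R_G(d)_D ≅ R_{G'}(d)[x_1, …, x_{d−t}]_D. -/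
open MvPolynomial

/-- The Lovász–Saks–Schrijver ideal `L_G(d)` of a simple graph `G`. -/
noncomputable def lssIdeal (K : Type) [Field K] {V : Type} (G : SimpleGraph V) (d : ℕ) :
    Ideal (MvPolynomial (V × Fin d) K) :=
  Ideal.span {f | ∃ i j : V, G.Adj i j ∧
    f = ∑ k : Fin d, MvPolynomial.X (i, k) * MvPolynomial.X (j, k)}

/-- The height of an ideal: the infimum of the heights of the primes containing it. -/
noncomputable def idealHeight {R : Type*} [CommRing R] (I : Ideal R) : ℕ∞ :=
  ⨅ p : {p : PrimeSpectrum R // I ≤ p.asIdeal}, Order.height p.1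

/-- An ideal is a complete intersection if it is generated by a regular sequence of
length equal to its height. -/
def Ideal.IsCompleteIntersection {R : Type*} [CommRing R] (I : Ideal R) : Prop :=
  ∃ rs : List R, RingTheory.Sequence.IsRegular R rs ∧ Ideal.ofList rs = I ∧
    (rs.length : ℕ∞) = idealHeight I

/-- The inclusion `S' = K[y_{ij} : i ∈ [n], j ∈ [d]] ⊆ S = K[y_{ij} : i ∈ [n+1], j ∈ [d]]`. -/
noncomputable def polyIncl (K : Type) [Field K] (n d : ℕ) :
    MvPolynomial (Fin n × Fin d) K →+* MvPolynomial (Fin (n + 1) × Fin d) K :=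
  (MvPolynomial.rename (Prod.map Fin.castSucc id)).toRingHom

/-- The determinant `D` of the `t × t` matrix of variables `(y_{ij})`, `1 ≤ i ≤ t`,
`d - t + 1 ≤ j ≤ d`, as an element of `S = K[y_{ij} : i ∈ [n+1], j ∈ [d]]`. -/
noncomputable def detD (K : Type) [Field K] (n d t : ℕ) (htn : t ≤ n) (htd : t ≤ d) :
    MvPolynomial (Fin (n + 1) × Fin d) K :=
  Matrix.det (Matrix.of fun i j : Fin t =>
    MvPolynomial.X (⟨i.1, by omega⟩, ⟨d - t + j.1, by omega⟩))

/-- The determinant `D` viewed in `S' = K[y_{ij} : i ∈ [n], j ∈ [d]]` (it only involves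
variables of `S'`). -/
noncomputable def detD' (K : Type) [Field K] (n d t : ℕ) (htn : t ≤ n) (htd : t ≤ d) :
    MvPolynomial (Fin n × Fin d) K :=
  Matrix.det (Matrix.of fun i j : Fin t =>
    MvPolynomial.X (⟨i.1, by omega⟩, ⟨d - t + j.1, by omega⟩))

/-!
In `R_G(d)` the vector `x = y_n` is orthogonal to `y_1, …, y_t`. When the minor `D` of these `t`
vectors is invertible, this linear system determines the last `t` coordinates of `x` from the first
`d - t`, which are arbitrary. Hence `R_G(d)_D` and `R_{G'}(d)[x_1, …, x_{d-t}]_D` have the same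
universal property, and the algebraic independence amounts to `D` being a nonzerodivisor in
`R_{G'}(d)`.

Since `L_G(d)` is a complete intersection, its generators `f_e` form a basis of `L / L ^ 2` over
`R_G(d)`, and this makes `y_1, …, y_t` linearly independent over `R_{G'}(d)`. By McCoy's theorem no
associated prime of `R_{G'}(d)` contains all their maximal minors. Rotations of two coordinates act
on `R_{G'}(d)`, and a one-parameter family of them has to preserve each associated prime, so that
with one maximal minor such a prime would contain all of them. Therefore `D` lies in no associated
prime.
-/

open scoped Matrix Polynomial nonZeroDivisors

/-- Lech's notion of independence of a family `f`: every relation `∑ a i * f i = 0` has its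
coefficients in the ideal `I` generated by `f`, i.e. `I / I ^ 2` is free over the quotient by `I`
on the classes of the `f i`. Unlike regularity it does not depend on an ordering of `f`. -/
def LechIndependent {ι S : Type*} [Fintype ι] [CommRing S] (f : ι → S) : Prop :=
  ∀ a : ι → S, a ⬝ᵥ f = 0 → ∀ i, a i ∈ Ideal.span (Set.range f)

lemma exists_mulVec_eq_of_span_range_le {ι κ S : Type*} [Fintype κ] [CommRing S]
    {f : ι → S} {g : κ → S} (h : Ideal.span (Set.range f) ≤ Ideal.span (Set.range g)) :
    ∃ P : Matrix ι κ S, P *ᵥ g = f := by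
  have hf i : f i ∈ Ideal.span (Set.range g) := h (Ideal.subset_span ⟨i, rfl⟩)
  choose P hP using fun i => Ideal.mem_span_range_iff_exists_fun.1 (hf i)
  exact ⟨P, funext hP⟩

lemma vecMul_injective_of_mul_eq_one_of_card_le {ι κ A : Type*} [Fintype ι] [Fintype κ]
    [DecidableEq κ] [CommRing A] {P : Matrix ι κ A} {Q : Matrix κ ι A} (hQP : Q * P = 1)
    (hcard : Fintype.card ι ≤ Fintype.card κ) : Function.Injective (· ᵥ* P) := by
  obtain ⟨e⟩ := Function.Embedding.nonempty_of_card_le hcard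
  refine OrzechProperty.injective_of_surjective_of_injective
    (Function.ExtendByZero.linearMap A e) P.vecMulLinear
    (Function.extend_injective e.injective _) fun v => ⟨v ᵥ* Q, ?_⟩
  rw [Matrix.vecMulLinear_apply, Matrix.vecMul_vecMul, hQP, Matrix.vecMul_one]

namespace LechIndependent

variable {ι κ S : Type*} [Fintype ι] [Fintype κ] [CommRing S]

lemma snoc {n : ℕ} {f : Fin n → S} {r : S} (hf : LechIndependent f)
    (hr : ∀ x, r * x ∈ Ideal.span (Set.range f) → x ∈ Ideal.span (Set.range f)) :
    LechIndependent (Fin.snoc f r : Fin (n + 1) → S) := by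
  intro a ha
  have hle : Ideal.span (Set.range f) ≤
      Ideal.span (Set.range (Fin.snoc f r : Fin (n + 1) → S)) := by
    refine Ideal.span_mono ?_
    rintro _ ⟨i, rfl⟩
    exact ⟨i.castSucc, Fin.snoc_castSucc ..⟩
  simp only [dotProduct, Fin.sum_univ_castSucc, Fin.snoc_castSucc, Fin.snoc_last] at ha
  have hlast : a (Fin.last n) ∈ Ideal.span (Set.range f) := by
    refine hr _ ?_
    rw [mul_comm, ← neg_eq_of_add_eq_zero_right ha]
    exact neg_mem (sum_mem fun i _ => Ideal.mul_mem_left _ _ (Ideal.subset_span ⟨i, rfl⟩))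
  obtain ⟨c, hc⟩ := Ideal.mem_span_range_iff_exists_fun.1 hlast
  have hinit : ∑ i, (a i.castSucc + c i * r) * f i = 0 := by
    rw [← hc, Finset.sum_mul] at ha
    simpa only [add_mul, Finset.sum_add_distrib, mul_right_comm] using ha
  have hr_mem : r ∈ Ideal.span (Set.range (Fin.snoc f r : Fin (n + 1) → S)) :=
    Ideal.subset_span ⟨Fin.last n, Fin.snoc_last ..⟩
  intro i
  induction i using Fin.lastCases with
  | last => exact hle hlast
  | cast i => simpa using sub_mem (hle (hf _ hinit i)) (Ideal.mul_mem_left _ (c i) hr_mem)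

/-- Rewriting each family in terms of the other gives matrices `P`, `Q` with `Q * P = 1` modulo
the ideal, and then `P` is injective by the Orzech property. -/
lemma of_span_eq {f : ι → S} {g : κ → S} (hg : LechIndependent g)
    (hspan : Ideal.span (Set.range f) = Ideal.span (Set.range g))
    (hcard : Fintype.card ι ≤ Fintype.card κ) : LechIndependent f := by
  classical
  obtain ⟨P, rfl⟩ := exists_mulVec_eq_of_span_range_le hspan.le
  obtain ⟨Q, hQ⟩ := exists_mulVec_eq_of_span_range_le hspan.ge
  let π := Ideal.Quotient.mk (Ideal.span (Set.range g))
  have map_eq_zero {c : κ → S} (hc : c ⬝ᵥ g = 0) (k : κ) : π (c k) = 0 :=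
    Ideal.Quotient.eq_zero_iff_mem.2 (hg c hc k)
  have hQP : Q.map π * P.map π = 1 := by
    have hrel : (Q * P - 1) *ᵥ g = 0 := by
      rw [Matrix.sub_mulVec, ← Matrix.mulVec_mulVec, hQ, Matrix.one_mulVec, sub_self]
    rw [← Matrix.map_mul, ← Matrix.map_one π π.map_zero π.map_one]
    ext j k
    exact sub_eq_zero.1 ((map_sub π _ _).symm.trans (map_eq_zero (congrFun hrel j) k))
  intro a ha i
  have hPa : (π ∘ a) ᵥ* P.map π = 0 ᵥ* P.map π := by
    ext k
    rw [← RingHom.map_vecMul, Matrix.zero_vecMul]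
    exact map_eq_zero (by rw [← Matrix.dotProduct_mulVec, ha]) k
  rw [hspan, ← Ideal.Quotient.eq_zero_iff_mem]
  exact congrFun (vecMul_injective_of_mul_eq_one_of_card_le hQP hcard hPa) i

lemma mem_of_sum_mem_span_image_compl {f : κ → S} (hf : LechIndependent f) {e : ι → κ}
    (he : e.Injective) {a : ι → S}
    (ha : a ⬝ᵥ (f ∘ e) ∈ Ideal.span (f '' (Set.range e)ᶜ)) (i : ι) :
    a i ∈ Ideal.span (Set.range f) := by
  obtain ⟨c, hc, hca⟩ := (Finsupp.mem_span_image_iff_linearCombination S).1 ha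
  have hsum : Function.extend e a 0 ⬝ᵥ f = a ⬝ᵥ (f ∘ e) := by
    refine (Fintype.sum_of_injective e he _ _ (fun j hj => ?_) fun i => ?_).symm
    · rw [Function.extend_apply' _ _ _ hj, Pi.zero_apply, zero_mul]
    · rw [he.extend_apply, Function.comp_apply]
  have hrel : (Function.extend e a 0 - ⇑c) ⬝ᵥ f = 0 := by
    rw [sub_dotProduct, hsum, ← hca, sub_eq_zero]
    exact Finsupp.sum_fintype _ _ fun j => zero_mul _
  have hce : c (e i) = 0 := Finsupp.notMem_support_iff.1 fun h => hc h ⟨i, rfl⟩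
  simpa [he.extend_apply, hce] using hf _ hrel (e i)

end LechIndependent

lemma span_range_eq_ofList_ofFn {S : Type*} [CommRing S] {n : ℕ} (f : Fin n → S) :
    Ideal.span (Set.range f) = Ideal.ofList (List.ofFn f) := by
  simp [Ideal.ofList, List.mem_ofFn', Set.range]

lemma lechIndependent_of_isWeaklyRegular {S : Type*} [CommRing S] {n : ℕ} {f : Fin n → S}
    (hf : RingTheory.Sequence.IsWeaklyRegular S (List.ofFn f)) : LechIndependent f := by
  induction n with
  | zero => exact fun _ _ i => i.elim0
  | succ n ih =>
    rw [List.ofFn_succ', List.concat_eq_append,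
      RingTheory.Sequence.isWeaklyRegular_append_iff,
      RingTheory.Sequence.isWeaklyRegular_singleton_iff, ← span_range_eq_ofList_ofFn,
      smul_eq_mul, Ideal.mul_top] at hf
    rw [← Fin.snoc_init_self f]
    exact (ih hf.1).snoc fun x hx =>
      (isSMulRegular_quotient_iff_mem_of_smul_mem _ _).1 hf.2 x hx

section HomogeneousGenerators

variable {σ R : Type*} [CommRing R]

lemma homogeneousComponent_mul_of_isHomogeneous {n : ℕ} {f : MvPolynomial σ R}
    (hf : f.IsHomogeneous n) (p : MvPolynomial σ R) :
    homogeneousComponent n (p * f) = constantCoeff p • f := by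
  have hterm (i : ℕ) : homogeneousComponent n (homogeneousComponent i p * f) =
      if i = 0 then constantCoeff p • f else 0 := by
    rw [homogeneousComponent_of_mem ((homogeneousComponent_isHomogeneous i p).mul hf)]
    rcases eq_or_ne i 0 with rfl | hi
    · simp [homogeneousComponent_zero, smul_eq_C_mul, constantCoeff_eq]
    · simp [hi]
  conv_lhs => rw [← sum_homogeneousComponent p, Finset.sum_mul, map_sum]
  simp [hterm]

lemma homogeneousComponent_mul_of_mem_span {ι : Type*} {n : ℕ} {f : ι → MvPolynomial σ R}
    (hf : ∀ i, (f i).IsHomogeneous n) {q : MvPolynomial σ R}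
    (hq : q ∈ Ideal.span (Set.range f)) (p : MvPolynomial σ R) :
    homogeneousComponent n (p * q) = constantCoeff p • homogeneousComponent n q := by
  induction hq using Submodule.span_induction generalizing p with
  | mem _ h =>
    obtain ⟨i, rfl⟩ := h
    rw [homogeneousComponent_mul_of_isHomogeneous (hf i), homogeneousComponent_eq_self (hf i)]
  | zero => simp
  | add _ _ _ _ ih₁ ih₂ => rw [mul_add, map_add, map_add, smul_add, ih₁, ih₂]
  | smul c _ _ ih => rw [smul_eq_mul, ← mul_assoc, ih, ih, smul_smul, map_mul]

lemma card_le_card_of_isHomogeneous_of_span_eq [Nontrivial R] {ι κ : Type*} [Fintype ι]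
    [Fintype κ] {n : ℕ} {f : ι → MvPolynomial σ R} {g : κ → MvPolynomial σ R}
    (hf : ∀ i, (f i).IsHomogeneous n) (hli : LinearIndependent R f)
    (hspan : Ideal.span (Set.range f) = Ideal.span (Set.range g)) :
    Fintype.card ι ≤ Fintype.card κ := by
  classical
  have hmem : Set.range f ⊆ Submodule.span R (Set.range (homogeneousComponent n ∘ g)) := by
    rintro _ ⟨i, rfl⟩
    have hfi : f i ∈ Ideal.span (Set.range g) := hspan ▸ Ideal.subset_span ⟨i, rfl⟩
    obtain ⟨p, hp⟩ := Ideal.mem_span_range_iff_exists_fun.1 hfi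
    have hg k : g k ∈ Ideal.span (Set.range f) := hspan ▸ Ideal.subset_span ⟨k, rfl⟩
    rw [← homogeneousComponent_eq_self (hf i), ← hp, map_sum]
    refine sum_mem fun k _ => ?_
    rw [homogeneousComponent_mul_of_mem_span hf (hg k)]
    exact Submodule.smul_mem _ _ (Submodule.subset_span ⟨k, rfl⟩)
  exact (linearIndependent_le_span_aux' f hli _ hmem).trans (Fintype.card_range_le _)

end HomogeneousGenerators

/-- The product `∑ₖ y i k * y j k` of the generic vectors at the ends of `e = s(i, j)`. -/
noncomputable def edgePoly (R : Type*) [CommRing R] {V : Type*} (d : ℕ) (e : Sym2 V) :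
    MvPolynomial (V × Fin d) R :=
  Sym2.lift ⟨fun i j => ∑ k, X (i, k) * X (j, k), fun _ _ => by simp only [mul_comm]⟩ e

lemma edgePoly_mk (R : Type*) [CommRing R] {V : Type*} (d : ℕ) (i j : V) :
    edgePoly R d s(i, j) = ∑ k, X (i, k) * X (j, k) :=
  rfl

lemma isHomogeneous_edgePoly (R : Type*) [CommRing R] {V : Type*} (d : ℕ) (e : Sym2 V) :
    (edgePoly R d e).IsHomogeneous 2 := by
  induction e with
  | h i j =>
    rw [edgePoly_mk]
    exact IsHomogeneous.sum _ _ 2 fun k _ => (isHomogeneous_X R _).mul (isHomogeneous_X R _)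

/-- Keeping only one coordinate of each generic vector turns `edgePoly R d s(i, j)` into the
monomial `X i * X j`, and distinct monomials are linearly independent. -/
lemma linearIndependent_edgePoly (R : Type*) [CommRing R] {V : Type*} {d : ℕ} (hd : 0 < d) :
    LinearIndependent R (edgePoly R d : Sym2 V → MvPolynomial (V × Fin d) R) := by
  let keep : MvPolynomial (V × Fin d) R →ₐ[R] MvPolynomial V R :=
    aeval fun ik => if ik.2 = ⟨0, hd⟩ then X ik.1 else 0
  let exponent : Sym2 V → V →₀ ℕ :=
    Sym2.lift ⟨fun i j => .single i 1 + .single j 1, fun _ _ => add_comm _ _⟩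
  have exponent_injective : Function.Injective exponent := by
    rintro ⟨i, j⟩ ⟨k, l⟩ h
    simpa using (Finsupp.single_add_single_eq_single_add_single one_ne_zero one_ne_zero).1 h
  have keep_edgePoly : keep ∘ edgePoly R d = fun e => monomial (exponent e) 1 := by
    ext1 e
    induction e with
    | h i j =>
      have : X (R := R) i * X j = monomial (exponent s(i, j)) 1 := by
        simp [exponent, X, monomial_mul]
      simp [keep, edgePoly_mk, this]
  refine .of_comp keep.toLinearMap ?_
  have := (basisMonomials V R).linearIndependent.comp exponent exponent_injective
  rw [coe_basisMonomials] at this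
  exact keep_edgePoly ▸ this

lemma lssIdeal_eq_span_edgePoly (K : Type) [Field K] {V : Type} (G : SimpleGraph V) (d : ℕ) :
    lssIdeal K G d = Ideal.span (Set.range fun e : G.edgeSet => edgePoly K d (e : Sym2 V)) := by
  refine congrArg Ideal.span (Set.ext fun f => ⟨?_, ?_⟩)
  · rintro ⟨i, j, hij, rfl⟩
    exact ⟨⟨s(i, j), hij⟩, rfl⟩
  · rintro ⟨⟨⟨i, j⟩, hij⟩, rfl⟩
    exact ⟨i, j, hij, rfl⟩

lemma lechIndependent_edgePoly_of_isCompleteIntersection {K : Type} [Field K] {V : Type}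
    {G : SimpleGraph V} [Fintype G.edgeSet] {d : ℕ} (hd : 0 < d)
    (hCI : (lssIdeal K G d).IsCompleteIntersection) :
    LechIndependent fun e : G.edgeSet => edgePoly K d (e : Sym2 V) := by
  obtain ⟨rs, hrs, hspan, -⟩ := hCI
  rw [← rs.ofFn_get] at hrs hspan
  rw [← span_range_eq_ofList_ofFn, lssIdeal_eq_span_edgePoly] at hspan
  refine (lechIndependent_of_isWeaklyRegular hrs.toIsWeaklyRegular).of_span_eq hspan.symm
    (card_le_card_of_isHomogeneous_of_span_eq (fun e => isHomogeneous_edgePoly K d _)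
      ((linearIndependent_edgePoly K hd).comp _ Subtype.val_injective) hspan.symm)

lemma extend_apply_of_range_eq_compl_singleton {V W α : Type*} {f : V → W} {w : W}
    (hrange : Set.range f = {w}ᶜ) (y : V → α) (u : α) :
    Function.extend f y (fun _ => u) w = u :=
  Function.extend_apply' _ _ _ fun h => by simpa using hrange.subset h

/-- `y` assigns a vector to each vertex of `G` such that adjacent vertices receive orthogonal
vectors. The LSS ring represents the functor of such assignments. -/
def IsOrthogonalRepresentation {V κ S : Type*} [Fintype κ] [CommRing S] (G : SimpleGraph V)
    (y : V → κ → S) : Prop :=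
  ∀ ⦃i j⦄, G.Adj i j → y i ⬝ᵥ y j = 0

namespace IsOrthogonalRepresentation

variable {V W κ S : Type*} [Fintype κ] [CommRing S]

lemma map {T : Type*} [CommRing T] {G : SimpleGraph V} {y : V → κ → S}
    (hy : IsOrthogonalRepresentation G y) (φ : S →+* T) :
    IsOrthogonalRepresentation G fun v => φ ∘ y v :=
  fun i j h => by rw [← RingHom.map_dotProduct, hy h, map_zero]

lemma extend {G : SimpleGraph W} {f : V → W} (hf : f.Injective) {w : W}
    (hrange : Set.range f = {w}ᶜ) {y : V → κ → S}
    (hy : IsOrthogonalRepresentation (G.comap f) y) {u : κ → S}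
    (hu : ∀ v, G.Adj w (f v) → y v ⬝ᵥ u = 0) :
    IsOrthogonalRepresentation G (Function.extend f y fun _ => u) := by
  have hw := extend_apply_of_range_eq_compl_singleton hrange y u
  have eq_or_mem (i : W) : i = w ∨ i ∈ Set.range f := by
    rw [hrange]
    exact em _
  intro i j hij
  rcases eq_or_mem i with rfl | ⟨v, rfl⟩ <;> rcases eq_or_mem j with rfl | ⟨v', rfl⟩
  · exact absurd hij (G.irrefl)
  · rw [hw, hf.extend_apply, dotProduct_comm, hu v' hij]
  · rw [hw, hf.extend_apply, hu v hij.symm]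
  · rw [hf.extend_apply, hf.extend_apply, hy hij]

end IsOrthogonalRepresentation

lemma lssIdeal_comap_le {K : Type} [Field K] {V W : Type} {d : ℕ} (G : SimpleGraph W)
    (f : V → W) :
    lssIdeal K (G.comap f) d ≤
      (lssIdeal K G d).comap (rename (R := K) (Prod.map f (id : Fin d → Fin d))) := by
  refine Ideal.span_le.2 ?_
  rintro _ ⟨i, j, hij, rfl⟩
  exact Ideal.subset_span ⟨f i, f j, hij, by simp⟩

/-- The LSS ring `R_G(d)`. -/
abbrev LSSRing (K : Type) [Field K] {V : Type} (G : SimpleGraph V) (d : ℕ) : Type :=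
  MvPolynomial (V × Fin d) K ⧸ lssIdeal K G d

namespace LSSRing

variable {K : Type} [Field K] {V W : Type} {S : Type*} [CommRing S] [Algebra K S]

section UniversalProperty

variable {G : SimpleGraph V} {d : ℕ}

variable (K G d) in
/-- The class of the variable `y_{vk}` in the LSS ring. -/
noncomputable def coord (v : V) (k : Fin d) : LSSRing K G d :=
  Ideal.Quotient.mk _ (X (v, k))

lemma isOrthogonalRepresentation_coord : IsOrthogonalRepresentation G (coord K G d) := by
  intro i j hij
  simp only [coord, dotProduct, ← map_mul, ← map_sum]
  exact Ideal.Quotient.eq_zero_iff_mem.2 (Ideal.subset_span ⟨i, j, hij, rfl⟩)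

/-- The homomorphism from the LSS ring determined by an orthogonal representation. -/
noncomputable def lift (y : V → Fin d → S) (hy : IsOrthogonalRepresentation G y) :
    LSSRing K G d →ₐ[K] S :=
  Ideal.Quotient.liftₐ (lssIdeal K G d) (aeval fun p => y p.1 p.2) fun q hq => by
    refine (Ideal.span_le (I := RingHom.ker (aeval fun p : V × Fin d => y p.1 p.2))).2 ?_ hq
    rintro _ ⟨i, j, hij, rfl⟩
    simpa [dotProduct] using hy hij

@[simp]
lemma lift_coord (y : V → Fin d → S) (hy : IsOrthogonalRepresentation G y) (v : V) (k : Fin d) :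
    lift (K := K) y hy (coord K G d v k) = y v k :=
  aeval_X _ _

@[ext]
lemma algHom_ext {φ ψ : LSSRing K G d →ₐ[K] S}
    (h : ∀ v k, φ (coord K G d v k) = ψ (coord K G d v k)) : φ = ψ :=
  Ideal.Quotient.algHom_ext _ (MvPolynomial.algHom_ext fun p => h p.1 p.2)

end UniversalProperty

section Comap

variable {G : SimpleGraph W} {d : ℕ} {f : V → W}

variable (K G d f) in
/-- The homomorphism of LSS rings sending `y_{vk}` to `y_{f(v)k}`. -/
noncomputable def ofComap : LSSRing K (G.comap f) d →ₐ[K] LSSRing K G d :=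
  Ideal.quotientMapₐ _ (rename (Prod.map f id)) (lssIdeal_comap_le G f)

@[simp]
lemma ofComap_coord (v : V) (k : Fin d) :
    ofComap K G d f (coord K _ d v k) = coord K G d (f v) k := by
  simp [ofComap, coord]

lemma ofComap_injective (hf : f.Injective) {w : W} (hrange : Set.range f = {w}ᶜ) :
    Function.Injective (ofComap K G d f) := by
  let r : LSSRing K G d →ₐ[K] LSSRing K (G.comap f) d := lift _
    (isOrthogonalRepresentation_coord.extend hf hrange (u := 0) fun _ _ => dotProduct_zero _)
  have hr : r.comp (ofComap K G d f) = AlgHom.id K _ := by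
    ext v k
    simp [r, hf.extend_apply]
  exact Function.LeftInverse.injective (DFunLike.congr_fun hr)

end Comap

end LSSRing

section VertexDeletion

variable {K : Type} [Field K] {V W : Type} {G : SimpleGraph W} {d : ℕ} {f : V → W} {w : W}

lemma lssIdeal_comap_le_comap_span_edgePoly {s : Set G.edgeSet}
    (hs : ∀ e ∉ s, w ∈ (e : Sym2 W)) (hw : w ∉ Set.range f) :
    lssIdeal K (G.comap f) d ≤
      (Ideal.span ((fun e : G.edgeSet => edgePoly K d (e : Sym2 W)) '' s)).comap
        (rename (Prod.map f id)) := by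
  refine Ideal.span_le.2 ?_
  rintro _ ⟨i, j, hij, rfl⟩
  have hmem : (⟨s(f i, f j), hij⟩ : G.edgeSet) ∈ s := by
    by_contra hnot
    rcases Sym2.mem_iff.1 (hs _ hnot) with h | h
    exacts [hw ⟨i, h.symm⟩, hw ⟨j, h.symm⟩]
  exact Ideal.subset_span ⟨_, hmem, by simp [edgePoly_mk]⟩

/-- A relation `∑ i, c i * y_{ρ(i)k} = 0` for all `k`, paired with the generic vector at `w`,
becomes a relation with coefficients `c` between the polynomials of the edges at `w`, modulo those
of the other edges. -/
lemma linearIndependent_coord_of_lechIndependent [Fintype G.edgeSet]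
    (hG : LechIndependent fun e : G.edgeSet => edgePoly K d (e : Sym2 W)) (hf : f.Injective)
    (hrange : Set.range f = {w}ᶜ) {ι : Type*} {ρ : ι → V} (hρ : ρ.Injective)
    (hadj : ∀ i, G.Adj w (f (ρ i))) :
    LinearIndependent (LSSRing K (G.comap f) d) fun i => LSSRing.coord K (G.comap f) d (ρ i) := by
  let e (i : ι) : G.edgeSet := ⟨s(w, f (ρ i)), hadj i⟩
  have he : e.Injective := fun i j hij =>
    hρ (hf (Sym2.congr_right.1 (congrArg Subtype.val hij)))
  have := Finite.of_injective e he
  have := Fintype.ofFinite ι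
  rw [Fintype.linearIndependent_iff]
  intro c hc i
  choose p hp using fun i => Ideal.Quotient.mk_surjective (c i)
  have hcol (k : Fin d) : ∑ i, p i * X (ρ i, k) ∈ lssIdeal K (G.comap f) d := by
    rw [← Ideal.Quotient.eq_zero_iff_mem, map_sum]
    simpa [← hp, LSSRing.coord] using congrFun hc k
  have hrel : (fun i => rename (Prod.map f id) (p i)) ⬝ᵥ
      ((fun e : G.edgeSet => edgePoly K d (e : Sym2 W)) ∘ e) =
      ∑ k, X (w, k) * rename (Prod.map f id) (∑ i, p i * X (ρ i, k)) := by
    simp only [dotProduct, Function.comp_apply, e, edgePoly_mk, map_sum, map_mul, rename_X,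
      Prod.map_apply, id_eq, Finset.mul_sum]
    rw [Finset.sum_comm]
    simp only [mul_left_comm]
  have hle := lssIdeal_comap_le_comap_span_edgePoly (K := K) (d := d) (f := f) (w := w)
    (s := (Set.range e)ᶜ) (by simp [e]) (by simp [hrange])
  have hmem := hG.mem_of_sum_mem_span_image_compl he
    (hrel ▸ sum_mem fun k _ => Ideal.mul_mem_left _ _ (Ideal.mem_comap.1 (hle (hcol k)))) i
  rw [← lssIdeal_eq_span_edgePoly, ← Ideal.Quotient.eq_zero_iff_mem] at hmem
  refine LSSRing.ofComap_injective hf hrange ?_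
  rw [map_zero, ← hp i]
  exact hmem

end VertexDeletion

section AssociatedPrimes

variable {R : Type*} [CommRing R]

/-- If all maximal minors kill `z`, then expanding along the first column the minors whose columns
are `k, τ 0, τ 1, …` for varying `k` produces a linear relation between the rows of `Y`, with first
coefficient the minor `τ` of the remaining rows times `z`. -/
lemma eq_zero_of_forall_maximal_minor_mul_eq_zero {κ : Type*} {t : ℕ} {Y : Matrix (Fin t) κ R}
    (hY : LinearIndependent R Y) {z : R}
    (hz : ∀ τ : Fin t → κ, (Y.submatrix id τ).det * z = 0) : z = 0 := by
  induction t with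
  | zero => simpa using hz Fin.elim0
  | succ t ih =>
    refine ih (Y := Y ∘ Fin.succ) (hY.comp _ (Fin.succ_injective t)) fun τ => ?_
    let c (i : Fin (t + 1)) : R := (-1) ^ (i : ℕ) * (Y.submatrix i.succAbove τ).det * z
    have hrel : ∑ i, c i • Y i = 0 := by
      ext k
      have hk := hz (Fin.cons k τ)
      rw [Matrix.det_succ_column_zero, Finset.sum_mul] at hk
      rw [Finset.sum_apply, Pi.zero_apply, ← hk]
      refine Finset.sum_congr rfl fun i _ => ?_
      simp only [c, Pi.smul_apply, smul_eq_mul, Matrix.submatrix_apply, Nat.succ_eq_add_one, id_eq,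
        Fin.cons_zero, Matrix.submatrix_submatrix, CompTriple.comp_eq, Function.comp_def,
        Fin.cons_succ]
      ring
    simpa [c, Fin.succAbove_zero] using! Fintype.linearIndependent_iff.1 hY c hrel 0

lemma exists_maximal_minor_notMem_of_isAssociatedPrime [IsNoetherianRing R] {κ : Type*} {t : ℕ}
    {Y : Matrix (Fin t) κ R} (hY : LinearIndependent R Y) {p : Ideal R}
    (hp : IsAssociatedPrime p R) : ∃ τ : Fin t → κ, (Y.submatrix id τ).det ∉ p := by
  obtain ⟨hprime, z, rfl⟩ := isAssociatedPrime_iff.1 hp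
  by_contra! h
  have hz : z = 0 := eq_zero_of_forall_maximal_minor_mul_eq_zero hY fun τ => by
    simpa [Submodule.mem_colon_singleton] using h τ
  exact hprime.ne_top ((Ideal.eq_top_iff_one _).2 (by simp [hz, Submodule.mem_colon_singleton]))

lemma mem_radical_colon_bot_singleton {x z : R} :
    x ∈ (Submodule.colon (⊥ : Submodule R R) {z}).radical ↔ ∃ n : ℕ, x ^ n * z = 0 := by
  simp [Ideal.mem_radical_iff, Submodule.mem_colon_singleton]

lemma mem_radical_colon_of_mul_mem {s x z : R} (hs : s ∈ R⁰)
    (h : s * x ∈ (Submodule.colon (⊥ : Submodule R R) {z}).radical) :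
    x ∈ (Submodule.colon (⊥ : Submodule R R) {z}).radical := by
  rw [mem_radical_colon_bot_singleton] at h ⊢
  obtain ⟨n, hn⟩ := h
  refine ⟨n, (mul_left_mem_nonZeroDivisors_eq_zero_iff (pow_mem hs n)).1 ?_⟩
  rw [← mul_assoc, ← mul_pow, hn]

/-- Multiplying `h` by the constant coefficient of `g` makes it divisible by `X`, and `g` still
kills the quotient, which has smaller degree. -/
lemma exists_C_coeff_zero_pow_mul_eq_zero {g h : R[X]} (hgh : g * h = 0) :
    ∃ n : ℕ, Polynomial.C (g.coeff 0) ^ n * h = 0 := by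
  rcases eq_or_ne h 0 with rfl | hh
  · exact ⟨0, mul_zero _⟩
  let q : R[X] := Polynomial.C (g.coeff 0) * h.divX
  have hq : Polynomial.C (g.coeff 0) * h = q * Polynomial.X := by
    have h₀ : g.coeff 0 * h.coeff 0 = 0 := by
      rw [← Polynomial.mul_coeff_zero, hgh, Polynomial.coeff_zero]
    conv_lhs => rw [← Polynomial.divX_mul_X_add h, mul_add, ← Polynomial.C_mul, h₀, map_zero,
      add_zero, ← mul_assoc]
  have hgq : g * q = 0 := by
    refine Polynomial.isRegular_X.right.mul_right_eq_zero_iff.1 ?_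
    rw [mul_assoc, ← hq, mul_left_comm, hgh, mul_zero]
  have hdeg : q.degree < h.degree := calc
    q.degree ≤ 0 + h.divX.degree := Polynomial.degree_mul_le_of_le Polynomial.degree_C_le le_rfl
    _ < h.degree := (zero_add _).trans_lt (Polynomial.degree_divX_lt hh)
  obtain ⟨n, hn⟩ := exists_C_coeff_zero_pow_mul_eq_zero hgq
  exact ⟨n + 1, by rw [pow_succ, mul_assoc, hq, ← mul_assoc, hn, zero_mul]⟩
termination_by h.degree
decreasing_by exact hdeg

lemma C_coeff_zero_mem_radical_colon {g h : R[X]}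
    (hg : g ∈ (Submodule.colon (⊥ : Submodule R[X] R[X]) {h}).radical) :
    Polynomial.C (g.coeff 0) ∈ (Submodule.colon (⊥ : Submodule R[X] R[X]) {h}).radical := by
  rw [mem_radical_colon_bot_singleton] at hg ⊢
  obtain ⟨n, hn⟩ := hg
  obtain ⟨m, hm⟩ := exists_C_coeff_zero_pow_mul_eq_zero hn
  refine ⟨n * m, ?_⟩
  have hcoeff : (g ^ n).coeff 0 = g.coeff 0 ^ n := map_pow Polynomial.constantCoeff g n
  rwa [hcoeff, map_pow, ← pow_mul] at hm

/-- Write `p` as the radical of the annihilator of `z`. Since `x ∈ p`, the polynomial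
`a * x + b * y` lies in the radical of the annihilator of `φ z`; by McCoy's argument so does its
constant coefficient `x`, hence so do `b * y` and `y`. -/
lemma mem_of_isAssociatedPrime_of_deformation {p : Ideal R} (hp : IsAssociatedPrime p R)
    {φ : R →+* R[X]} (hφ : ∀ z, (φ z).coeff 0 = z) {a b c : R[X]} (ha : a.coeff 0 = 1)
    (hb₀ : b.coeff 0 = 0) (hb : b ∈ R[X]⁰) (hc : c ∈ R[X]⁰) {x y : R}
    (hxy : φ x = c * (a * Polynomial.C x + b * Polynomial.C y)) (hx : x ∈ p) : y ∈ p := by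
  obtain ⟨-, z, rfl⟩ := hp
  have hφx : φ x ∈ (Submodule.colon (⊥ : Submodule R[X] R[X]) {φ z}).radical := by
    rw [mem_radical_colon_bot_singleton] at hx ⊢
    obtain ⟨n, hn⟩ := hx
    exact ⟨n, by rw [← map_pow, ← map_mul, hn, map_zero]⟩
  have hsum := mem_radical_colon_of_mul_mem hc (hxy ▸ hφx)
  have hCx : Polynomial.C x ∈ (Submodule.colon (⊥ : Submodule R[X] R[X]) {φ z}).radical := by
    simpa [ha, hb₀] using C_coeff_zero_mem_radical_colon hsum
  have hCy := mem_radical_colon_of_mul_mem hb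
    ((Ideal.add_mem_iff_right _ (Ideal.mul_mem_left _ a hCx)).1 hsum)
  rw [mem_radical_colon_bot_singleton] at hCy ⊢
  obtain ⟨n, hn⟩ := hCy
  refine ⟨n, ?_⟩
  rw [← map_pow] at hn
  simpa [hφ, Polynomial.mul_coeff_zero, -map_pow] using congrArg (Polynomial.coeff · 0) hn

lemma map_mem_nonZeroDivisors_of_ne_zero {K : Type*} [Field K] [Algebra K R] {q : K[X]}
    (hq : q ≠ 0) : q.map (algebraMap K R) ∈ R[X]⁰ := by
  have hmonic := (Polynomial.monic_mul_leadingCoeff_inv hq).map (algebraMap K R)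
  rw [Polynomial.map_mul] at hmonic
  exact (mul_mem_nonZeroDivisors.1 hmonic.mem_nonZeroDivisors).1

lemma exists_polynomial_sq_add_sq_eq_sq (K : Type*) [Field K] :
    ∃ a b c : K[X], a ^ 2 + b ^ 2 = c ^ 2 ∧ b ≠ 0 ∧
      a.coeff 0 = 1 ∧ b.coeff 0 = 0 ∧ c.coeff 0 = 1 := by
  -- The rational parametrisation of the circle degenerates in characteristic 2.
  by_cases h2 : (2 : K) = 0
  · refine ⟨1 + Polynomial.X, Polynomial.X, 1, ?_, Polynomial.X_ne_zero, by simp, by simp, by simp⟩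
    have : (2 : K[X]) = 0 := by
      rw [← map_ofNat (Polynomial.C : K →+* K[X]), h2, map_zero]
    linear_combination (Polynomial.X + Polynomial.X ^ 2) * this
  · refine ⟨1 - Polynomial.X ^ 2, Polynomial.C 2 * Polynomial.X, 1 + Polynomial.X ^ 2, ?_,
      mul_ne_zero (by simpa using h2) Polynomial.X_ne_zero, by simp, by simp, by simp⟩
    rw [map_ofNat]
    ring

end AssociatedPrimes

section PlaneRotation

variable {κ S : Type*} [DecidableEq κ] [CommRing S]

/-- The matrix `[[a, b], [-b, a]]` acting on the coordinates `k` and `l`, and multiplication by `c`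
on all others. It preserves orthogonality when `a ^ 2 + b ^ 2 = c ^ 2`; the scalar `c` makes up for
the missing square roots. -/
def planeRotation (a b c : S) (k l : κ) (u : κ → S) : κ → S :=
  Function.update (Function.update (c • u) k (a * u k + b * u l)) l (-b * u k + a * u l)

lemma comp_planeRotation {T : Type*} [CommRing T] (φ : S →+* T) (a b c : S) (k l : κ)
    (u : κ → S) :
    φ ∘ planeRotation a b c k l u = planeRotation (φ a) (φ b) (φ c) k l (φ ∘ u) := by
  have hsmul : φ ∘ (c • u) = φ c • φ ∘ u := funext fun i => map_mul φ _ _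
  simp [planeRotation, Function.comp_update, hsmul]

lemma planeRotation_one_zero_one (k l : κ) (u : κ → S) : planeRotation 1 0 1 k l u = u := by
  simp [planeRotation]

lemma planeRotation_dotProduct_planeRotation [Fintype κ] {a b c : S} (h : a ^ 2 + b ^ 2 = c ^ 2)
    {k l : κ} (hkl : k ≠ l) (u v : κ → S) :
    planeRotation a b c k l u ⬝ᵥ planeRotation a b c k l v = c ^ 2 * (u ⬝ᵥ v) := by
  have eq_add_single (u : κ → S) : planeRotation a b c k l u =
      c • u + Pi.single k ((a - c) * u k + b * u l) + Pi.single l (-b * u k + (a - c) * u l) := by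
    ext i
    rcases eq_or_ne i l with rfl | hil
    · simp only [planeRotation, Function.update_self, Pi.add_apply, Pi.smul_apply, smul_eq_mul,
        Pi.single_eq_same, Pi.single_eq_of_ne hkl.symm, add_zero]
      ring
    rcases eq_or_ne i k with rfl | hik
    · simp only [planeRotation, Function.update_of_ne hil, Function.update_self, Pi.add_apply,
        Pi.smul_apply, smul_eq_mul, Pi.single_eq_same, Pi.single_eq_of_ne hil, add_zero]
      ring
    · simp [planeRotation, hil, hik]
  simp only [eq_add_single, add_dotProduct, dotProduct_add, smul_dotProduct, dotProduct_smul,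
    single_dotProduct, dotProduct_single, Pi.add_apply, Pi.single_eq_same,
    Pi.single_eq_of_ne hkl, Pi.single_eq_of_ne hkl.symm, Pi.smul_apply, smul_eq_mul]
  linear_combination (u k * v k + u l * v l) * h

lemma det_submatrix_planeRotation {m : Type*} [Fintype m] [DecidableEq m] (a b c : S)
    (Y : Matrix m κ S) {σ : m → κ} (hσ : σ.Injective) (j : m) {l : κ} (hl : l ∉ Set.range σ) :
    ((Matrix.of fun i => planeRotation a b c (σ j) l (Y i)).submatrix id σ).det =
      c ^ (Fintype.card m - 1) * (a * (Y.submatrix id σ).det +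
        b * (Y.submatrix id (Function.update σ j l)).det) := by
  have hrot : (Matrix.of fun i => planeRotation a b c (σ j) l (Y i)).submatrix id σ =
      (c • Y.submatrix id σ).updateCol j (a • Y.col (σ j) + b • Y.col l) := by
    ext i j'
    have hj' : σ j' ≠ l := fun h => hl ⟨j', h⟩
    rcases eq_or_ne j' j with rfl | hj
    · simp [planeRotation, hj']
    · simp [planeRotation, hj', hj, hσ.ne hj]
  have hupdate : Y.submatrix id (Function.update σ j l) =
      (Y.submatrix id σ).updateCol j (Y.col l) := by
    ext i j'
    rcases eq_or_ne j' j with rfl | hj <;> simp [*]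
  have hself : (Y.submatrix id σ).updateCol j (Y.col (σ j)) = Y.submatrix id σ :=
    (Y.submatrix id σ).updateCol_eq_self j
  rw [hrot, Matrix.det_updateCol_smul_left, Matrix.det_updateCol_add, Matrix.det_updateCol_smul,
    Matrix.det_updateCol_smul, hself, hupdate]

end PlaneRotation

section MinorExchange

variable {κ m R : Type*} [Fintype m] [DecidableEq m] [CommRing R] {p : Ideal R}
  {Y : Matrix m κ R}

lemma det_submatrix_swap_comp_mem_of_exchange [DecidableEq κ]
    (hexchange : ∀ σ : m → κ, σ.Injective → (Y.submatrix id σ).det ∈ p →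
      ∀ j, ∀ l ∉ Set.range σ, (Y.submatrix id (Function.update σ j l)).det ∈ p)
    {σ : m → κ} (hσ : σ.Injective) (hmem : (Y.submatrix id σ).det ∈ p) (k l : κ) :
    (Y.submatrix id (Equiv.swap k l ∘ σ)).det ∈ p := by
  have swap_comp_eq_update {j : m} {l : κ} (hl : l ∉ Set.range σ) :
      Equiv.swap (σ j) l ∘ σ = Function.update σ j l := by
    ext1 j'
    rcases eq_or_ne j' j with rfl | hj
    · simp
    · simp [hj, Equiv.swap_apply_of_ne_of_ne (hσ.ne hj) fun h => hl ⟨j', h⟩]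
  by_cases hk : k ∈ Set.range σ <;> by_cases hl : l ∈ Set.range σ
  · obtain ⟨i, rfl⟩ := hk
    obtain ⟨j, rfl⟩ := hl
    rw [hσ.swap_comp]
    have := Matrix.det_permute' (Equiv.swap i j) (Y.submatrix id σ)
    rw [Matrix.submatrix_submatrix] at this
    exact this ▸ p.mul_mem_left _ hmem
  · obtain ⟨j, rfl⟩ := hk
    exact swap_comp_eq_update hl ▸ hexchange σ hσ hmem j l hl
  · obtain ⟨j, rfl⟩ := hl
    rw [Equiv.swap_comm]
    exact swap_comp_eq_update hk ▸ hexchange σ hσ hmem j k hk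
  · have hfix : Equiv.swap k l ∘ σ = σ := funext fun j =>
      Equiv.swap_apply_of_ne_of_ne (fun h => hk ⟨j, h⟩) fun h => hl ⟨j, h⟩
    rwa [hfix]

lemma det_submatrix_mem_of_exchange [Finite κ]
    (hexchange : ∀ σ : m → κ, σ.Injective → (Y.submatrix id σ).det ∈ p →
      ∀ j, ∀ l ∉ Set.range σ, (Y.submatrix id (Function.update σ j l)).det ∈ p)
    {σ : m → κ} (hσ : σ.Injective) (hmem : (Y.submatrix id σ).det ∈ p) (τ : m → κ) :
    (Y.submatrix id τ).det ∈ p := by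
  classical
  by_cases hτ : τ.Injective
  · obtain ⟨π, hπ⟩ : ∃ π : Equiv.Perm κ, π ∘ σ = τ := by
      obtain ⟨π, hπ⟩ := Equiv.Perm.exists_extending_pair σ τ hσ hτ
      exact ⟨π, funext hπ⟩
    subst hπ
    clear hτ
    induction π using Equiv.Perm.swap_induction_on with
    | one => exact hmem
    | swap_mul π k l _ ih =>
      exact det_submatrix_swap_comp_mem_of_exchange hexchange (π.injective.comp hσ) ih k l
  · obtain ⟨i, j, hij, hne⟩ := Function.not_injective_iff.1 hτ
    rw [Matrix.det_zero_of_column_eq hne fun r => congrArg (Y r) hij]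
    exact p.zero_mem

end MinorExchange

lemma det_submatrix_update_mem_of_deformation {R : Type*} [CommRing R] {p : Ideal R}
    (hp : IsAssociatedPrime p R) {φ : R →+* R[X]} (hφ : ∀ z, (φ z).coeff 0 = z) {a b c : R[X]}
    (ha : a.coeff 0 = 1) (hb₀ : b.coeff 0 = 0) (hb : b ∈ R[X]⁰) (hc : c ∈ R[X]⁰)
    {κ m : Type*} [DecidableEq κ] [Fintype m] [DecidableEq m] {Y : Matrix m κ R} {σ : m → κ}
    (hσ : σ.Injective) {j : m} {l : κ} (hl : l ∉ Set.range σ)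
    (hY : ∀ i, φ ∘ Y i = planeRotation a b c (σ j) l (Polynomial.C ∘ Y i))
    (hmem : (Y.submatrix id σ).det ∈ p) :
    (Y.submatrix id (Function.update σ j l)).det ∈ p := by
  refine mem_of_isAssociatedPrime_of_deformation hp hφ ha hb₀ hb
    (pow_mem hc (Fintype.card m - 1)) ?_ hmem
  have map_C_det (τ : m → κ) :
      Polynomial.C (Y.submatrix id τ).det = ((Y.map Polynomial.C).submatrix id τ).det :=
    Polynomial.C.map_det _
  rw [map_C_det, map_C_det, ← det_submatrix_planeRotation a b c _ hσ j hl, φ.map_det]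
  congr 1
  ext1 i j'
  exact congrFun (hY i) (σ j')

lemma det_submatrix_mem_nonZeroDivisors_of_exchange {R : Type*} [CommRing R] [IsNoetherianRing R]
    {κ : Type*} [Finite κ] {t : ℕ} {Y : Matrix (Fin t) κ R}
    (hY : LinearIndependent R Y)
    (hexchange : ∀ p : Ideal R, IsAssociatedPrime p R → ∀ σ : Fin t → κ, σ.Injective →
      (Y.submatrix id σ).det ∈ p → ∀ j, ∀ l ∉ Set.range σ,
        (Y.submatrix id (Function.update σ j l)).det ∈ p)
    {σ : Fin t → κ} (hσ : σ.Injective) : (Y.submatrix id σ).det ∈ R⁰ := by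
  by_contra hdet
  rw [← SetLike.mem_coe, ← Set.mem_compl_iff, ← biUnion_associatedPrimes_eq_compl_nonZeroDivisors]
    at hdet
  obtain ⟨p, hp, hmem⟩ := Set.mem_iUnion₂.1 hdet
  obtain ⟨τ, hτ⟩ := exists_maximal_minor_notMem_of_isAssociatedPrime hY hp
  exact hτ (det_submatrix_mem_of_exchange (hexchange p hp) hσ hmem τ)

namespace LSSRing

variable {K : Type} [Field K] {V : Type} {G : SimpleGraph V} {d : ℕ}

lemma exists_ringHom_planeRotation {k l : Fin d} (hkl : k ≠ l) :
    ∃ (φ : LSSRing K G d →+* (LSSRing K G d)[X]) (a b c : (LSSRing K G d)[X]),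
      (∀ z, (φ z).coeff 0 = z) ∧ a.coeff 0 = 1 ∧ b.coeff 0 = 0 ∧
      b ∈ (LSSRing K G d)[X]⁰ ∧ c ∈ (LSSRing K G d)[X]⁰ ∧
      ∀ v, φ ∘ coord K G d v = planeRotation a b c k l (Polynomial.C ∘ coord K G d v) := by
  obtain ⟨a, b, c, habc, hb, ha₀, hb₀, hc₀⟩ := exists_polynomial_sq_add_sq_eq_sq K
  let toR : K[X] →+* (LSSRing K G d)[X] := Polynomial.mapRingHom (algebraMap K _)
  have toR_coeff_zero (q : K[X]) : (toR q).coeff 0 = algebraMap K _ (q.coeff 0) :=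
    Polynomial.coeff_map _ 0
  have hc : c ≠ 0 := by
    rintro rfl
    simp at hc₀
  have hsq : toR a ^ 2 + toR b ^ 2 = toR c ^ 2 := by simp only [← map_pow, ← map_add, habc]
  have hy : IsOrthogonalRepresentation G fun v =>
      planeRotation (toR a) (toR b) (toR c) k l (Polynomial.C ∘ coord K G d v) := fun i j hij => by
    rw [planeRotation_dotProduct_planeRotation hsq hkl, ← RingHom.map_dotProduct,
      isOrthogonalRepresentation_coord hij, map_zero, mul_zero]
  obtain ⟨φ, hφ⟩ : ∃ φ : LSSRing K G d →ₐ[K] (LSSRing K G d)[X], ∀ v i, φ (coord K G d v i) =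
      planeRotation (toR a) (toR b) (toR c) k l (Polynomial.C ∘ coord K G d v) i :=
    ⟨lift _ hy, lift_coord _ hy⟩
  refine ⟨φ.toRingHom, toR a, toR b, toR c, fun z => ?_, by rw [toR_coeff_zero, ha₀, map_one],
    by rw [toR_coeff_zero, hb₀, map_zero], map_mem_nonZeroDivisors_of_ne_zero hb,
    map_mem_nonZeroDivisors_of_ne_zero hc, fun v => funext (hφ v)⟩
  let ev : (LSSRing K G d)[X] →ₐ[K] LSSRing K G d :=
    (Polynomial.aeval (0 : LSSRing K G d)).restrictScalars K
  have hev (q : (LSSRing K G d)[X]) : ev q = q.coeff 0 :=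
    (Polynomial.coeff_zero_eq_aeval_zero q).symm
  have hφ₀ : ev.comp φ = AlgHom.id K _ := by
    ext v i
    have hrot := congrFun (comp_planeRotation (ev : _ →+* LSSRing K G d) (toR a) (toR b) (toR c)
      k l (Polynomial.C ∘ coord K G d v)) i
    simp only [Function.comp_def, RingHom.coe_coe, hev, toR_coeff_zero, ha₀, hb₀, hc₀, map_one,
      map_zero, Polynomial.coeff_C_zero, planeRotation_one_zero_one] at hrot
    rw [AlgHom.comp_apply, hφ, hev]
    exact hrot
  rw [← hev]
  exact DFunLike.congr_fun hφ₀ z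

lemma det_submatrix_coord_update_mem {p : Ideal (LSSRing K G d)}
    (hp : IsAssociatedPrime p (LSSRing K G d)) {m : Type*} [Fintype m] [DecidableEq m]
    (ρ : m → V) {σ : m → Fin d} (hσ : σ.Injective)
    (hmem : (((Matrix.of (coord K G d)).submatrix ρ id).submatrix id σ).det ∈ p) (j : m)
    {l : Fin d} (hl : l ∉ Set.range σ) :
    (((Matrix.of (coord K G d)).submatrix ρ id).submatrix id (Function.update σ j l)).det ∈ p := by
  obtain ⟨φ, a, b, c, hφ, ha₀, hb₀, hb, hc, hφcoord⟩ :=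
    exists_ringHom_planeRotation (K := K) (G := G) fun h : σ j = l => hl ⟨j, h⟩
  exact det_submatrix_update_mem_of_deformation hp hφ ha₀ hb₀ hb hc hσ hl
    (fun i => hφcoord (ρ i)) hmem

lemma det_submatrix_coord_mem_nonZeroDivisors [Finite V] {t : ℕ} {ρ : Fin t → V}
    (hρ : LinearIndependent (LSSRing K G d) fun i => coord K G d (ρ i)) {σ : Fin t → Fin d}
    (hσ : σ.Injective) : ((Matrix.of (coord K G d)).submatrix ρ σ).det ∈ (LSSRing K G d)⁰ :=
  det_submatrix_mem_nonZeroDivisors_of_exchange (Y := (Matrix.of (coord K G d)).submatrix ρ id) hρ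
    (fun _ hp _ hσ' hmem j _ hl => det_submatrix_coord_update_mem hp ρ hσ' hmem j hl) hσ

end LSSRing

/-- The minor of the generic matrix `(y_{vk})` with rows `ρ` and columns `σ`. -/
noncomputable def genericMinor (R : Type*) [CommRing R] {V κ m : Type*} [Fintype m] [DecidableEq m]
    (ρ : m → V) (σ : m → κ) : MvPolynomial (V × κ) R :=
  Matrix.det (Matrix.of fun i j => X (ρ i, σ j))

lemma mk_genericMinor {K : Type} [Field K] {V : Type} {G : SimpleGraph V} {d : ℕ} {m : Type*}
    [Fintype m] [DecidableEq m] (ρ : m → V) (σ : m → Fin d) :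
    Ideal.Quotient.mk (lssIdeal K G d) (genericMinor K ρ σ) =
      ((Matrix.of (LSSRing.coord K G d)).submatrix ρ σ).det :=
  RingHom.map_det _ _

lemma mk_genericMinor_mem_nonZeroDivisors {K : Type} [Field K] {V W : Type} [Finite W]
    {G : SimpleGraph W} {d : ℕ} (hCI : (lssIdeal K G d).IsCompleteIntersection) {f : V → W}
    {w : W} (hf : f.Injective) (hrange : Set.range f = {w}ᶜ) {t : ℕ} {ρ : Fin t → V}
    (hρ : ρ.Injective) (hadj : ∀ i, G.Adj w (f (ρ i))) {σ : Fin t → Fin d} (hσ : σ.Injective) :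
    Ideal.Quotient.mk (lssIdeal K (G.comap f) d) (genericMinor K ρ σ) ∈
      (LSSRing K (G.comap f) d)⁰ := by
  rw [mk_genericMinor]
  obtain rfl | ht := t.eq_zero_or_pos
  · rw [Matrix.det_isEmpty]
    exact one_mem _
  · have := Finite.of_injective f hf
    have := Fintype.ofFinite G.edgeSet
    have hd : 0 < d := (σ ⟨0, ht⟩).pos
    exact LSSRing.det_submatrix_coord_mem_nonZeroDivisors
      (linearIndependent_coord_of_lechIndependent
        (lechIndependent_edgePoly_of_isCompleteIntersection hd hCI) hf hrange hρ hadj) hσ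

section UniversalProperty

universe u

variable {A R m : Type u} [CommRing A] [CommRing R] [Algebra A R]

/-- After inverting `D`, the `A`-algebra `R` becomes the polynomial algebra on the family `y`. This
is expressed through the universal property of `A[y]`, required for all algebras over `A` in which
`D` is invertible. -/
def IsMvPolynomialAway (D : A) (y : m → R) : Prop :=
  ∀ (S : Type u) [CommRing S] [Algebra A S], IsUnit (algebraMap A S D) →
    ∀ x : m → S, ∃! χ : R →ₐ[A] S, ∀ j, χ (y j) = x j

namespace IsMvPolynomialAway

variable {D : A} {y : m → R}

lemma exists_comp_aeval_eq (h : IsMvPolynomialAway D y) :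
    ∃ g : R →ₐ[A] Localization.Away (C D : MvPolynomial m A),
      g.comp (aeval y) = IsScalarTower.toAlgHom A (MvPolynomial m A) _ := by
  have hD : IsUnit (algebraMap A (Localization.Away (C D : MvPolynomial m A)) D) := by
    rw [IsScalarTower.algebraMap_apply A (MvPolynomial m A), algebraMap_eq]
    exact IsLocalization.Away.algebraMap_isUnit _
  obtain ⟨g, hg, -⟩ := h _ hD fun j => algebraMap (MvPolynomial m A) _ (X j)
  exact ⟨g, by ext j; simpa using hg j⟩

lemma algebraicIndependent (h : IsMvPolynomialAway D y) (hD : D ∈ A⁰) :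
    AlgebraicIndependent A y := by
  obtain ⟨g, hg⟩ := h.exists_comp_aeval_eq
  have hC : Submonoid.powers (C D : MvPolynomial m A) ≤ (MvPolynomial m A)⁰ := by
    rw [Submonoid.powers_le, mem_nonZeroDivisors_iff_left]
    intro q hq
    ext s
    refine (mem_nonZeroDivisors_iff_left.1 hD) _ ?_
    rw [← coeff_C_mul, hq, coeff_zero]
  refine Function.Injective.of_comp (f := g) ?_
  rw [← AlgHom.coe_comp, hg]
  exact IsLocalization.injective _ hC

lemma nonempty_algEquiv (h : IsMvPolynomialAway D y) :
    Nonempty (Localization.Away (algebraMap A R D) ≃ₐ[A]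
      Localization.Away (C D : MvPolynomial m A)) := by
  let B := Localization.Away (algebraMap A R D)
  obtain ⟨g, hg⟩ := h.exists_comp_aeval_eq
  have hgy (q : MvPolynomial m A) : g (aeval y q) = algebraMap _ _ q := DFunLike.congr_fun hg q
  have hgD : IsUnit (g (algebraMap A R D)) := by
    rw [← aeval_C y, hgy]
    exact IsLocalization.Away.algebraMap_isUnit _
  have : IsLocalization.Away (aeval y (C D : MvPolynomial m A)) B := by
    rw [aeval_C]
    infer_instance
  let φ : Localization.Away (C D : MvPolynomial m A) →ₐ[A] B :=
    IsLocalization.Away.mapₐ _ _ (aeval y) (C D)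
  have hφ (q : MvPolynomial m A) : φ (algebraMap _ _ q) = algebraMap R B (aeval y q) :=
    by simp [φ, IsLocalization.Away.map]
  have hφg : φ.comp g = IsScalarTower.toAlgHom A R B := by
    have hD : IsUnit (algebraMap A B D) := by
      rw [IsScalarTower.algebraMap_apply A R B]
      exact IsLocalization.Away.algebraMap_isUnit _
    refine (h B hD fun j => algebraMap R B (y j)).unique (fun j => ?_) fun j => rfl
    rw [AlgHom.comp_apply, ← aeval_X (R := A) y j, hgy, hφ]
  let ψ : B →ₐ[A] Localization.Away (C D : MvPolynomial m A) :=
    IsLocalization.Away.liftAlgHom (algebraMap A R D) hgD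
  have hψ (r : R) : ψ (algebraMap R B r) = g r := IsLocalization.Away.lift_eq _ hgD r
  refine ⟨AlgEquiv.ofAlgHom ψ φ ?_ ?_⟩
  · refine IsLocalization.algHom_ext (Submonoid.powers (C D : MvPolynomial m A)) ?_
    refine AlgHom.ext fun q => ?_
    change ψ (φ (algebraMap _ _ q)) = algebraMap _ _ q
    rw [hφ, hψ, hgy]
  · refine IsLocalization.algHom_ext (Submonoid.powers (algebraMap A R D)) ?_
    refine AlgHom.ext fun r => ?_
    change φ (ψ (algebraMap _ _ r)) = algebraMap _ _ r
    rw [hψ]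
    exact DFunLike.congr_fun hφg r

end IsMvPolynomialAway

end UniversalProperty

lemma existsUnique_mulVec_eq_zero_of_isUnit_det {S κ m n : Type*} [CommRing S] [Fintype κ]
    [Fintype n] [DecidableEq n] (e : m ⊕ n ≃ κ) {Y : Matrix n κ S}
    (hY : IsUnit (Y.submatrix id (e ∘ Sum.inr)).det) (x : m → S) :
    ∃! u : κ → S, Y *ᵥ u = 0 ∧ ∀ j, u (e (.inl j)) = x j := by
  have := Fintype.ofInjective _ (e.injective.comp Sum.inl_injective)
  set L := Y.submatrix id (e ∘ Sum.inl)
  set M := Y.submatrix id (e ∘ Sum.inr)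
  have mulVec_eq (u : κ → S) :
      Y *ᵥ u = L *ᵥ (fun j => u (e (.inl j))) + M *ᵥ fun i => u (e (.inr i)) := by
    ext i
    simp [Matrix.mulVec, dotProduct, L, M, ← e.sum_comp]
  refine ⟨Sum.elim x (-(M⁻¹ *ᵥ (L *ᵥ x))) ∘ e.symm, ⟨?_, fun j => by simp⟩, fun u ⟨hu, hux⟩ => ?_⟩
  · simp only [mulVec_eq, Function.comp_apply, Equiv.symm_apply_apply, Sum.elim_inl, Sum.elim_inr]
    rw [Matrix.mulVec_neg, Matrix.mulVec_mulVec, Matrix.mul_nonsing_inv _ hY, Matrix.one_mulVec,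
      add_neg_cancel]
  · rw [mulVec_eq, funext hux, add_comm, ← eq_neg_iff_add_eq_zero] at hu
    have hur : (fun i => u (e (.inr i))) = -(M⁻¹ *ᵥ (L *ᵥ x)) := by
      rw [← Matrix.mulVec_neg, ← hu, Matrix.mulVec_mulVec, Matrix.nonsing_inv_mul _ hY,
        Matrix.one_mulVec]
    rw [← hur, ← funext hux]
    refine (Equiv.eq_comp_symm e _ _).2 (funext fun s => ?_)
    cases s <;> rfl

namespace LSSRing

section Extension

variable {K : Type} [Field K] {V W : Type} {G : SimpleGraph W} {d : ℕ} {f : V → W} {w : W}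
  {S : Type*} [CommRing S] [Algebra K S]

lemma algHom_ext_of_comp_ofComap_eq (hrange : Set.range f = {w}ᶜ) {χ χ' : LSSRing K G d →ₐ[K] S}
    (h : χ.comp (ofComap K G d f) = χ'.comp (ofComap K G d f))
    (hw : ∀ k, χ (coord K G d w k) = χ' (coord K G d w k)) : χ = χ' := by
  ext v k
  by_cases hv : v ∈ Set.range f
  · obtain ⟨v, rfl⟩ := hv
    simpa using DFunLike.congr_fun h (coord K _ d v k)
  · obtain rfl : v = w := by simpa [hrange] using hv
    exact hw k

lemma exists_algHom_comp_ofComap_eq (hf : f.Injective) (hrange : Set.range f = {w}ᶜ)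
    (ψ : LSSRing K (G.comap f) d →ₐ[K] S) {u : Fin d → S}
    (hu : ∀ v, G.Adj w (f v) → (ψ ∘ coord K _ d v) ⬝ᵥ u = 0) :
    ∃ χ : LSSRing K G d →ₐ[K] S, χ.comp (ofComap K G d f) = ψ ∧ χ ∘ coord K G d w = u := by
  have hy := (isOrthogonalRepresentation_coord.map ψ.toRingHom).extend hf hrange hu
  refine ⟨lift _ hy, ?_, funext fun k => ?_⟩
  · ext v k
    simp [hf.extend_apply]
  · rw [Function.comp_apply, lift_coord, extend_apply_of_range_eq_compl_singleton hrange]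

lemma existsUnique_algHom_comp_ofComap_eq (hf : f.Injective) (hrange : Set.range f = {w}ᶜ)
    {m n : Type*} [Fintype n] [DecidableEq n] {ρ : n → V}
    (hadj : ∀ v, G.Adj w (f v) ↔ v ∈ Set.range ρ) (e : m ⊕ n ≃ Fin d)
    (ψ : LSSRing K (G.comap f) d →ₐ[K] S)
    (hψ : IsUnit (ψ (Ideal.Quotient.mk _ (genericMinor K ρ (e ∘ Sum.inr))))) (x : m → S) :
    ∃! χ : LSSRing K G d →ₐ[K] S,
      χ.comp (ofComap K G d f) = ψ ∧ ∀ j, χ (coord K G d w (e (.inl j))) = x j := by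
  let Y : Matrix n (Fin d) S := .of fun i => ψ ∘ coord K _ d (ρ i)
  have hdet : IsUnit (Y.submatrix id (e ∘ Sum.inr)).det := by
    rw [mk_genericMinor] at hψ
    convert hψ
    exact (ψ.toRingHom.map_det _).symm
  obtain ⟨u, ⟨hu, hux⟩, huniq⟩ := existsUnique_mulVec_eq_zero_of_isUnit_det e hdet x
  obtain ⟨χ, hχψ, hχu⟩ := exists_algHom_comp_ofComap_eq (u := u) hf hrange ψ fun v hv => by
    obtain ⟨i, rfl⟩ := (hadj v).1 hv
    exact congrFun hu i
  refine ⟨χ, ⟨hχψ, fun j => ?_⟩, fun χ' ⟨hχψ', hχx'⟩ => ?_⟩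
  · rw [← hux, ← hχu, Function.comp_apply]
  · have hχu' : χ' ∘ coord K G d w = u := by
      refine huniq _ ⟨funext fun i => ?_, hχx'⟩
      have hρ : ψ ∘ coord K _ d (ρ i) = χ' ∘ coord K G d (f (ρ i)) := by
        ext k
        simp [← hχψ']
      change (ψ ∘ coord K _ d (ρ i)) ⬝ᵥ (χ' ∘ coord K G d w) = 0
      rw [hρ, dotProduct_comm]
      exact isOrthogonalRepresentation_coord.map χ'.toRingHom ((hadj _).2 ⟨i, rfl⟩)
    exact algHom_ext_of_comp_ofComap_eq hrange (hχψ'.trans hχψ.symm)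
      (congrFun (hχu'.trans hχu.symm))

end Extension

end LSSRing

lemma LSSRing.ofComap_mk_genericMinor {K : Type} [Field K] {V W : Type} (G : SimpleGraph W) {d : ℕ}
    (f : V → W) {m : Type*} [Fintype m] [DecidableEq m] (ρ : m → V) (σ : m → Fin d) :
    ofComap K G d f (Ideal.Quotient.mk _ (genericMinor K ρ σ)) =
      Ideal.Quotient.mk _ (genericMinor K (f ∘ ρ) σ) := by
  refine (Ideal.quotientMap_mk (H := lssIdeal_comap_le G f)).trans (congrArg _ ?_)
  refine (RingHom.map_det _ _).trans (congrArg Matrix.det ?_)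
  ext1 i j
  exact rename_X _ _

theorem LSSRing.isMvPolynomialAway {K : Type} [Field K] {V W : Type} {G : SimpleGraph W} {d : ℕ}
    {f : V → W} {w : W} (hf : f.Injective) (hrange : Set.range f = {w}ᶜ)
    {m : Type} {n : Type*} [Fintype n] [DecidableEq n] {ρ : n → V}
    (hadj : ∀ v, G.Adj w (f v) ↔ v ∈ Set.range ρ) (e : m ⊕ n ≃ Fin d) :
    letI := (ofComap K G d f).toRingHom.toAlgebra
    IsMvPolynomialAway
      (Ideal.Quotient.mk (lssIdeal K (G.comap f) d) (genericMinor K ρ (e ∘ Sum.inr)))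
      fun j => coord K G d w (e (.inl j)) := by
  let := (ofComap K G d f).toRingHom.toAlgebra
  intro S _ _ hunit x
  let : Algebra K S := Algebra.compHom S (algebraMap K (LSSRing K (G.comap f) d))
  have : IsScalarTower K (LSSRing K (G.comap f) d) S :=
    IsScalarTower.of_algebraMap_eq (R := K) (S := LSSRing K (G.comap f) d) (A := S) fun _ => rfl
  have : IsScalarTower K (LSSRing K (G.comap f) d) (LSSRing K G d) :=
    .of_algebraMap_eq fun r => ((ofComap K G d f).commutes r).symm
  obtain ⟨χ, ⟨hχ, hχx⟩, huniq⟩ := existsUnique_algHom_comp_ofComap_eq hf hrange hadj e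
    (IsScalarTower.toAlgHom K (LSSRing K (G.comap f) d) S) hunit x
  refine ⟨{ χ with commutes' := DFunLike.congr_fun hχ }, hχx, fun χ' hχ' => ?_⟩
  have h := huniq (χ'.restrictScalars K) ⟨AlgHom.ext χ'.commutes, hχ'⟩
  exact AlgHom.ext fun r => DFunLike.congr_fun h r

theorem lss_localization_at_det_general {K : Type} [Field K] {V W : Type} [Finite W]
    {G : SimpleGraph W} {d t : ℕ} (hCI : (lssIdeal K G d).IsCompleteIntersection) {f : V → W}
    (hf : f.Injective) {w : W} (hrange : Set.range f = {w}ᶜ) {ρ : Fin t → V} (hρ : ρ.Injective)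
    (hadj : ∀ v, G.Adj w (f v) ↔ v ∈ Set.range ρ) {m : Type} (e : m ⊕ Fin t ≃ Fin d) :
    (letI := (LSSRing.ofComap K G d f).toRingHom.toAlgebra
     AlgebraicIndependent (LSSRing K (G.comap f) d) fun j => LSSRing.coord K G d w (e (.inl j))) ∧
    Nonempty
      (Localization.Away
          (Ideal.Quotient.mk (lssIdeal K G d) (genericMinor K (f ∘ ρ) (e ∘ Sum.inr))) ≃+*
        Localization.Away (C (Ideal.Quotient.mk (lssIdeal K (G.comap f) d)
          (genericMinor K ρ (e ∘ Sum.inr))) : MvPolynomial m (LSSRing K (G.comap f) d))) := by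
  let := (LSSRing.ofComap K G d f).toRingHom.toAlgebra
  have h := LSSRing.isMvPolynomialAway (K := K) hf hrange hadj e
  refine ⟨h.algebraicIndependent (mk_genericMinor_mem_nonZeroDivisors hCI hf hrange hρ
    (fun i => (hadj _).2 ⟨i, rfl⟩) (e.injective.comp Sum.inr_injective)), ?_⟩
  rw [← LSSRing.ofComap_mk_genericMinor]
  exact h.nonempty_algEquiv.map fun E => E.toRingEquiv

set_option synthInstance.maxHeartbeats 1000000 in
set_option maxHeartbeats 2000000 in
/-- Let `G` be a graph on `n+1` vertices whose last vertex has degree `t` with neighbors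
the first `t` vertices, let `G'` be obtained by deleting the last vertex and suppose
`L_G(d)` is a complete intersection.  Writing `x_j = y_{(n+1)j}`, the images of
`x_1, …, x_{d-t}` in `R_G(d)` are algebraically independent over `R_{G'}(d)`, and
`R_G(d)_D ≅ R_{G'}(d)[x_1, …, x_{d-t}]_D`. -/
theorem lss_localization_at_det (K : Type) [Field K] (n d t : ℕ)
    (G : SimpleGraph (Fin (n + 1))) (htn : t ≤ n) (htd : t ≤ d)
    (hdeg : ∀ i : Fin (n + 1), G.Adj (Fin.last n) i ↔ (i : ℕ) < t)
    (hle : lssIdeal K (G.comap Fin.castSucc) d ≤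
      Ideal.comap (polyIncl K n d) (lssIdeal K G d))
    (hCI : (lssIdeal K G d).IsCompleteIntersection) :
    (letI : Algebra (MvPolynomial (Fin n × Fin d) K ⧸ lssIdeal K (G.comap Fin.castSucc) d)
        (MvPolynomial (Fin (n + 1) × Fin d) K ⧸ lssIdeal K G d) :=
      (Ideal.quotientMap (lssIdeal K G d) (polyIncl K n d) hle).toAlgebra
     AlgebraicIndependent
       (MvPolynomial (Fin n × Fin d) K ⧸ lssIdeal K (G.comap Fin.castSucc) d)
       (fun j : Fin (d - t) =>
         Ideal.Quotient.mk (lssIdeal K G d)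
           (MvPolynomial.X (Fin.last n, ⟨j.1, by omega⟩)))) ∧
    Nonempty
      (Localization.Away (Ideal.Quotient.mk (lssIdeal K G d) (detD K n d t htn htd)) ≃+*
        Localization.Away
          ((MvPolynomial.C
            (Ideal.Quotient.mk (lssIdeal K (G.comap Fin.castSucc) d)
              (detD' K n d t htn htd)) :
            MvPolynomial (Fin (d - t))
              (MvPolynomial (Fin n × Fin d) K ⧸ lssIdeal K (G.comap Fin.castSucc) d)))) := by
  have hrange : Set.range (Fin.castSucc : Fin n → Fin (n + 1)) = {Fin.last n}ᶜ := by
    simpa using Fin.range_succAbove (Fin.last n)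
  have hadj (i : Fin n) : G.Adj (Fin.last n) i.castSucc ↔ i ∈ Set.range (Fin.castLE htn) := by
    simp [hdeg, Fin.range_castLE]
  exact lss_localization_at_det_general hCI (Fin.castSucc_injective n) hrange
    (Fin.castLE_injective htn) hadj (finSumFinEquiv.trans (finCongr (Nat.sub_add_cancel htd)))
end
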